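/- Let d ≥ 3 and p, q, s, s̃ ∈ [1,∞) with p > 1, p' = p/(p−1), s' = s/(s−1), β = (p−1)(d−1)/(4p(p+1)), and assume 1/p + 1/q > 1 − (p−1)/(4(p+1)p) and s̃ ≤ s/(s/s' + (1+2β)/(1+4β)). Then there exist a constant M > 0 and an integer N ∈ ℕ such that the following holds. Suppose (ρ, u, R) is a smooth solution of the continuity-defect equation ∂_tρ + div(ρu) = div R, div u = 0, on [0,1]×𝕋^d, time-periodic with period 1 in t. Then for any δ, ν > 0 there exists another smooth time-periodic solution (ρ¹, u¹, R¹) of the continuity-defect equation on [0,1]×𝕋^d satisfying: ‖ρ¹ − ρ‖_{L^s_t L^p_x} ≤ ν M ‖R‖_{L^1_{t,x}}^{1/p}; ‖u¹ − u‖_{L^{s'}_t L^{p'}_x} ≤ ν^{−1} M ‖R‖_{L^1_{t,x}}^{1/p'}; ‖u¹ − u‖_{L^{s̃}_t W^{1,q}_x} ≤ δ; ‖R¹‖_{L^1_{t,x}} ≤ δ. Moreover, ρ¹ − ρ has zero spatial mean at each time, |∫_{𝕋^d} (ρ¹ − ρ)(t,x) φ(x) dx| ≤ δ ‖φ‖_{C^N}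 for all t ∈ [0,1] and all φ ∈ C^∞(𝕋^d), and there exists r > 0 such that (ρ¹ − ρ)(t,·) ≡ 0 for all t ∉ [r, 1−r]. -/

import Mathlib

open MeasureTheory ENNReal

noncomputable section

/-- Points of `ℝ^d` (representing the torus `𝕋^d = ℝ^d/ℤ^d` via periodic functions). -/
abbrev Vec (d : ℕ) := Fin d → ℝ

/-- One fundamental domain `[0,1]^d` of the torus. -/
def fundCube (d : ℕ) : Set (Vec d) := Set.Icc 0 1

/-- `ℤ^d`-periodicity of a function on `ℝ^d`. -/
def ZPer {d : ℕ} {α : Type*} (f : Vec d → α) : Prop :=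
  ∀ (x : Vec d) (k : Fin d → ℤ), f (x + fun i => (k i : ℝ)) = f x

/-- Generic `L^p` "norm" (`p ∈ [1,∞]` as `ℝ≥0∞`) of an `ℝ≥0∞`-valued function. -/
def eLpGen {α : Type*} [MeasurableSpace α] (μ : Measure α) (p : ℝ≥0∞)
    (g : α → ℝ≥0∞) : ℝ≥0∞ :=
  if p = ∞ then essSup g μ
  else (∫⁻ a, g a ^ p.toReal ∂μ) ^ (1 / p.toReal)

/-- Spatial `L^p` norm over one fundamental domain of the torus. -/
def spLp {d : ℕ} {E : Type*} [NormedAddCommGroup E] (p : ℝ≥0∞)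
    (f : Vec d → E) : ℝ≥0∞ :=
  eLpGen (volume.restrict (fundCube d)) p (fun x => (‖f x‖₊ : ℝ≥0∞))

/-- `W^{1,q}` norm of a vector field on the torus: `‖u‖_{L^q} + ‖∇u‖_{L^q}`. -/
def W1qNorm {d : ℕ} (q : ℝ≥0∞) (u : Vec d → Vec d) : ℝ≥0∞ :=
  spLp q u + spLp q (fderiv ℝ u)

/-- `L^s(0,T;L^p(𝕋^d))` norm. -/
def LsLpT {d : ℕ} {E : Type*} [NormedAddCommGroup E] (T : ℝ) (s p : ℝ≥0∞)
    (f : ℝ → Vec d → E) : ℝ≥0∞ :=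
  eLpGen (volume.restrict (Set.Ioo 0 T)) s (fun t => spLp p (f t))

/-- `L^s(0,T;W^{1,q}(𝕋^d))` norm. -/
def LsW1qT {d : ℕ} (T : ℝ) (s q : ℝ≥0∞) (u : ℝ → Vec d → Vec d) : ℝ≥0∞ :=
  eLpGen (volume.restrict (Set.Ioo 0 T)) s (fun t => W1qNorm q (u t))

/-- Gradient of a scalar function on `ℝ^d`. -/
def gradV {d : ℕ} (f : Vec d → ℝ) (x : Vec d) : Vec d :=
  fun i => fderiv ℝ f x (Pi.single i 1)

/-- Divergence of a vector field on `ℝ^d`. -/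
def divV {d : ℕ} (v : Vec d → Vec d) (x : Vec d) : ℝ :=
  ∑ i, fderiv ℝ (fun y => v y i) x (Pi.single i 1)

/-- Laplacian of a scalar function on `ℝ^d`. -/
def laplV {d : ℕ} (f : Vec d → ℝ) : Vec d → ℝ := divV (gradV f)

/-- Euclidean dot product on `ℝ^d`. -/
def dotV {d : ℕ} (a b : Vec d) : ℝ := ∑ i, a i * b i

/-- `C^N` norm over one fundamental domain. -/
def CkN {d : ℕ} (N : ℕ) (φ : Vec d → ℝ) : ℝ :=
  ∑ i ∈ Finset.range (N + 1), sSup ((fun x => ‖iteratedFDeriv ℝ i φ x‖) '' fundCube d)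

/-- `W^{m,r}` norm over one fundamental domain. -/
def SobN {d : ℕ} {E : Type*} [NormedAddCommGroup E] [NormedSpace ℝ E]
    (m : ℕ) (r : ℝ≥0∞) (f : Vec d → E) : ℝ≥0∞ :=
  ∑ i ∈ Finset.range (m + 1), spLp r (iteratedFDeriv ℝ i f)

/-- Test functions for the weak formulation on `[0,T) × 𝕋^d`:
smooth, `ℤ^d`-periodic in space, vanishing for `t` near `T` (compact support in `[0,T)`). -/
def IsTest (d : ℕ) (T : ℝ) (φ : ℝ → Vec d → ℝ) : Prop :=
  ContDiff ℝ (⊤ : ℕ∞) (Function.uncurry φ) ∧ (∀ t, ZPer (φ t)) ∧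
    ∃ T', T' < T ∧ ∀ t, T' ≤ t → ∀ x, φ t x = 0

/-- `ρ` is a weak solution on `(0,T) × 𝕋^d` of `∂_t ρ + u·∇ρ = 0` with initial data `ρ₀`. -/
def IsWeakSolution (d : ℕ) (T : ℝ) (u : ℝ → Vec d → Vec d)
    (ρ : ℝ → Vec d → ℝ) (ρ₀ : Vec d → ℝ) : Prop :=
  ∀ φ : ℝ → Vec d → ℝ, IsTest d T φ →
    ∫ x in fundCube d, ρ₀ x * φ 0 x =
      ∫ t in Set.Ioo 0 T, ∫ x in fundCube d,
        ρ t x * (deriv (fun τ => φ τ x) t + fderiv ℝ (φ t) x (u t x))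

/-- `u` is divergence free in the sense of distributions on `(0,T) × 𝕋^d`. -/
def WeaklyDivFree (d : ℕ) (T : ℝ) (u : ℝ → Vec d → Vec d) : Prop :=
  ∀ φ : ℝ → Vec d → ℝ, ContDiff ℝ (⊤ : ℕ∞) (Function.uncurry φ) →
    (∀ t, ZPer (φ t)) →
    ∫ t in Set.Ioo 0 T, ∫ x in fundCube d, fderiv ℝ (φ t) x (u t x) = 0

end
/-- One-dimensional profile. -/
structure Prof where
  χ : ℝ → ℝ
  smooth : ContDiff ℝ (⊤ : ℕ∞) χ
  supp : ∀ y, (y ≤ 1/4 ∨ 3/4 ≤ y) → χ y = 0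
  int : ∫ y in (0:ℝ)..1, (iteratedDeriv 1 χ y)^2 = 1
  Bd : ℝ
  one_le : 1 ≤ Bd
  bound : ∀ n ≤ 3, ∀ y, |iteratedDeriv n χ y| ≤ Bd

theorem supp_iter {χ : ℝ → ℝ} (h : ∀ y, (y ≤ 1/4 ∨ 3/4 ≤ y) → χ y = 0) (n : ℕ) (y : ℝ)
    (hy : y < 1/4 ∨ 3/4 < y) : iteratedDeriv n χ y = 0 := by
  have : χ =ᶠ[nhds y] fun _ => 0 := by
    rcases hy with hy | hy
    · filter_upwards [Iio_mem_nhds hy] with z hz using h z (Or.inl (le_of_lt hz))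
    · filter_upwards [Ioi_mem_nhds hy] with z hz using h z (Or.inr (le_of_lt hz))
  rw [this.iteratedDeriv_eq n]
  simp

theorem prof_nonempty : Nonempty Prof := by
  let b : ContDiffBump (1/2 : ℝ) := ⟨1/8, 1/4, by norm_num, by norm_num⟩
  have hbs : ∀ y : ℝ, (y ≤ 1/4 ∨ 3/4 ≤ y) → b y = 0 := by
    intro y hy
    apply b.zero_of_le_dist
    show (1/4 : ℝ) ≤ _
    rw [Real.dist_eq]
    rcases hy with hy | hy
    · rw [abs_of_nonpos (by linarith)]; linarith
    · rw [abs_of_nonneg (by linarith)]; linarith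
  have hsm : ContDiff ℝ (⊤ : ℕ∞) (b : ℝ → ℝ) := b.contDiff
  have hcd : Continuous (deriv b) := hsm.continuous_deriv (by simp)
  set I := ∫ y in (0:ℝ)..1, (deriv b y)^2 with hI
  have hIpos : 0 < I := by
    have hnn : 0 ≤ I := intervalIntegral.integral_nonneg (by norm_num) (fun _ _ => sq_nonneg _)
    rcases hnn.lt_or_eq with h | h
    · exact h
    exfalso
    have hz : ∀ y ∈ Set.Icc (0:ℝ) 1, deriv b y = 0 := by
      by_contra! hc
      obtain ⟨c, hc, hc0⟩ := hc
      have := intervalIntegral.integral_pos (a := (0:ℝ)) (b := 1) (f := fun y => (deriv b y)^2)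
        (by norm_num) (by fun_prop) (fun _ _ => sq_nonneg _) ⟨c, hc, by positivity⟩
      linarith
    have : ∫ y in (0:ℝ)..(1/2), deriv b y = b (1/2) - b 0 :=
      intervalIntegral.integral_deriv_eq_sub (fun y _ => (hsm.differentiable (by simp)) y)
        (hcd.intervalIntegrable _ _)
    have h2 : ∫ y in (0:ℝ)..(1/2), deriv b y = 0 := by
      rw [intervalIntegral.integral_congr (g := fun _ => 0)]
      · simp
      · intro y hy
        rw [Set.uIcc_of_le (by norm_num)] at hy
        exact hz y ⟨hy.1, by linarith [hy.2]⟩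
    rw [h2, hbs 0 (by norm_num), b.one_of_mem_closedBall (by simp [b.rIn_pos.le])] at this
    norm_num at this
  let χ : ℝ → ℝ := fun y => (Real.sqrt I)⁻¹ * b y
  have hχ : ContDiff ℝ (⊤ : ℕ∞) χ := contDiff_const.mul hsm
  have hχs : ∀ y, (y ≤ 1/4 ∨ 3/4 ≤ y) → χ y = 0 := fun y hy => by simp [χ, hbs y hy]
  have hbd : ∀ n, ∃ B, ∀ y, |iteratedDeriv n χ y| ≤ B := by
    intro n
    have hc : Continuous (iteratedDeriv n χ) := hχ.continuous_iteratedDeriv n (by exact_mod_cast le_top)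
    obtain ⟨B, hB⟩ := isCompact_Icc.exists_bound_of_continuousOn (s := Set.Icc (0:ℝ) 1) hc.continuousOn
    refine ⟨max B 0, fun y => ?_⟩
    by_cases hy : y ∈ Set.Icc (0:ℝ) 1
    · exact (hB y hy).trans (le_max_left _ _)
    · rw [supp_iter hχs n y]
      · simp
      · simp only [Set.mem_Icc, not_and_or, not_le] at hy
        rcases hy with hy | hy
        · left; linarith
        · right; linarith
  choose Bf hBf using hbd
  refine ⟨⟨χ, hχ, hχs, ?_, max 1 (max (max (Bf 0) (Bf 1)) (max (Bf 2) (Bf 3))), le_max_left _ _, ?_⟩⟩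
  · have : ∀ y, (iteratedDeriv 1 χ y)^2 = I⁻¹ * (deriv b y)^2 := by
      intro y
      rw [iteratedDeriv_one]
      have : deriv χ y = (Real.sqrt I)⁻¹ * deriv b y := by
        simp [χ]
      rw [this, mul_pow, inv_pow, Real.sq_sqrt hIpos.le]
    simp_rw [this]
    rw [intervalIntegral.integral_const_mul, ← hI, inv_mul_cancel₀ hIpos.ne']
  · intro n hn y
    refine (hBf n y).trans ?_
    interval_cases n <;> simp

noncomputable def prof : Prof := Classical.choice prof_nonempty

noncomputable def pr (n : ℕ) (m : ℝ) (y : ℝ) : ℝ := iteratedDeriv n prof.χ (m * Int.fract y)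

noncomputable def ind (m : ℝ) (y : ℝ) : ℝ := if Int.fract y < 1 / m then 1 else 0

theorem ind_nonneg (m y) : 0 ≤ ind m y := by unfold ind; split_ifs <;> norm_num
theorem ind_le_one (m y) : ind m y ≤ 1 := by unfold ind; split_ifs <;> norm_num

theorem ind_sq (m y) : ind m y * ind m y = ind m y := by unfold ind; split_ifs <;> norm_num

theorem pr_per (n m y) : pr n m (y + 1) = pr n m y := by simp [pr]
theorem ind_per (m y) : ind m (y + 1) = ind m y := by simp [ind]
theorem pr_perZ (n m y) (k : ℤ) : pr n m (y + k) = pr n m y := by simp [pr]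
theorem ind_perZ (m y) (k : ℤ) : ind m (y + k) = ind m y := by simp [ind]

theorem ind_meas (m : ℝ) : Measurable (ind m) := by
  unfold ind
  exact Measurable.ite (measurableSet_lt measurable_fract measurable_const) measurable_const measurable_const

theorem pr_bound {n : ℕ} (hn : n ≤ 3) {m : ℝ} (hm : 1 ≤ m) (y) : |pr n m y| ≤ prof.Bd * ind m y := by
  unfold ind pr
  split_ifs with h
  · simpa using prof.bound n hn _
  · rw [supp_iter prof.supp]
    · simp
    · right
      rw [not_lt, div_le_iff₀ (by linarith)] at h
      nlinarith

theorem pr_eventually (n : ℕ) {m : ℝ} (hm : 1 ≤ m) (y : ℝ) :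
    pr n m =ᶠ[nhds y] fun z => iteratedDeriv n prof.χ (m * (z - ⌊y⌋)) := by
  have h1 : (⌊y⌋ : ℝ) ≤ y := Int.floor_le y
  have h2 : y < ⌊y⌋ + 1 := Int.lt_floor_add_one y
  have h3 : (⌊y⌋ : ℝ) - 1/4 < y := by linarith
  filter_upwards [Ioo_mem_nhds h3 h2] with z hz
  unfold pr
  rcases le_or_gt (⌊y⌋ : ℝ) z with h | h
  · have : ⌊z⌋ = ⌊y⌋ := Int.floor_eq_iff.2 ⟨h, hz.2⟩
    rw [Int.fract, this]
  · have : ⌊z⌋ = ⌊y⌋ - 1 := Int.floor_eq_iff.2 ⟨by push_cast; linarith [hz.1], by push_cast; linarith⟩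
    rw [Int.fract, this, supp_iter prof.supp, supp_iter prof.supp]
    · left; nlinarith
    · right; push_cast; nlinarith [hz.1]

theorem iterχ_smooth (n : ℕ) : ContDiff ℝ (⊤ : ℕ∞) (iteratedDeriv n prof.χ) := by
  rw [iteratedDeriv_eq_iterate]
  exact ContDiff.iterate_deriv n prof.smooth

theorem pr_smooth (n : ℕ) {m : ℝ} (hm : 1 ≤ m) : ContDiff ℝ (⊤ : ℕ∞) (pr n m) := by
  rw [contDiff_iff_contDiffAt]
  intro y
  refine ContDiffAt.congr_of_eventuallyEq ?_ (pr_eventually n hm y)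
  have := iterχ_smooth n
  exact ContDiff.contDiffAt (by fun_prop)

theorem pr_deriv (n : ℕ) {m : ℝ} (hm : 1 ≤ m) (y : ℝ) :
    HasDerivAt (pr n m) (m * pr (n+1) m y) y := by
  refine HasDerivAt.congr_of_eventuallyEq ?_ (pr_eventually n hm y)
  have h := ((iterχ_smooth n).differentiable (by simp) (m * (y - ⌊y⌋))).hasDerivAt
  have h2 : HasDerivAt (fun z : ℝ => m * (z - ⌊y⌋)) m y := by
    simpa using ((hasDerivAt_id y).sub_const (⌊y⌋ : ℝ)).const_mul m
  have := h.comp y h2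
  rw [← iteratedDeriv_succ] at this
  rw [mul_comm]
  exact this

theorem pr_int {m : ℝ} (hm : 1 ≤ m) : ∫ y in (0:ℝ)..1, m * (pr 1 m y)^2 = 1 := by
  have h0 : ∫ y in (0:ℝ)..1, m * (pr 1 m y)^2 = ∫ y in (0:ℝ)..1, m * (iteratedDeriv 1 prof.χ (m * y))^2 := by
    apply intervalIntegral.integral_congr_ae
    have : ∀ᵐ y : ℝ, y ≠ 1 := by simp [ae_iff]
    filter_upwards [this] with y hy1 hy
    rw [Set.uIoc_of_le zero_le_one] at hy
    rw [pr, Int.fract_eq_self.2 ⟨hy.1.le, lt_of_le_of_ne hy.2 hy1⟩]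
  have hc := (iterχ_smooth 1).continuous
  rw [h0, intervalIntegral.integral_const_mul,
    intervalIntegral.mul_integral_comp_mul_left (f := fun y => (iteratedDeriv 1 prof.χ y)^2)]
  rw [mul_zero, mul_one, ← intervalIntegral.integral_add_adjacent_intervals (b := 1)
    (Continuous.intervalIntegrable (by fun_prop) _ _) (Continuous.intervalIntegrable (by fun_prop) _ _), prof.int]
  rw [intervalIntegral.integral_congr (g := fun _ => (0:ℝ))]
  · simp
  · intro y hy
    rw [Set.uIcc_of_le hm] at hy
    simp only
    rw [supp_iter prof.supp _ _ (Or.inr (by linarith [hy.1]))]; simp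

noncomputable def HH (m y : ℝ) : ℝ := ∫ z in (0:ℝ)..y, (m * (pr 1 m z)^2 - 1)

theorem HH_deriv {m : ℝ} (hm : 1 ≤ m) (y : ℝ) : HasDerivAt (HH m) (m * (pr 1 m y)^2 - 1) y := by
  have hc := (pr_smooth 1 hm).continuous
  have hc2 : Continuous (fun z => m * (pr 1 m z)^2 - 1) := by fun_prop
  exact intervalIntegral.integral_hasDerivAt_right (hc2.intervalIntegrable _ _)
    (hc2.stronglyMeasurableAtFilter _ _) hc2.continuousAt

theorem HH_smooth {m : ℝ} (hm : 1 ≤ m) : ContDiff ℝ (⊤ : ℕ∞) (HH m) := by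
  rw [contDiff_infty_iff_deriv]
  refine ⟨fun y => (HH_deriv hm y).differentiableAt, ?_⟩
  rw [show deriv (HH m) = fun y => m * (pr 1 m y)^2 - 1 from funext fun y => (HH_deriv hm y).deriv]
  have := pr_smooth 1 hm
  fun_prop

theorem HH_per {m : ℝ} (hm : 1 ≤ m) (y : ℝ) : HH m (y + 1) = HH m y := by
  have hc := (pr_smooth 1 hm).continuous
  have hc2 : Continuous (fun z => m * (pr 1 m z)^2 - 1) := by fun_prop
  have hp : Function.Periodic (fun z => m * (pr 1 m z)^2 - 1) 1 := fun z => by simp [pr_per]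
  unfold HH
  rw [← intervalIntegral.integral_add_adjacent_intervals (b := y) (hc2.intervalIntegrable _ _) (hc2.intervalIntegrable _ _),
    hp.intervalIntegral_add_eq y 0, zero_add]
  have : ∫ z in (0:ℝ)..1, (m * (pr 1 m z)^2 - 1) = 0 := by
    rw [intervalIntegral.integral_sub (Continuous.intervalIntegrable (by fun_prop) _ _) (by simp), pr_int hm]
    simp
  rw [this, add_zero]

theorem HH_perZ {m : ℝ} (hm : 1 ≤ m) (y : ℝ) (k : ℤ) : HH m (y + k) = HH m y := by
  have : Function.Periodic (HH m) 1 := HH_per hm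
  simpa using this.int_mul k y

theorem HH_bound {m : ℝ} (hm : 1 ≤ m) (y : ℝ) : |HH m y| ≤ 2 := by
  have hc := (pr_smooth 1 hm).continuous
  have h : HH m y = HH m (Int.fract y) := by
    conv_lhs => rw [← Int.fract_add_floor y]
    rw [HH_perZ hm]
  rw [h]
  have f0 := Int.fract_nonneg y
  have f1 := (Int.fract_lt_one y).le
  set z := Int.fract y
  unfold HH
  have hci : ∀ a b : ℝ, IntervalIntegrable (fun z => m * (pr 1 m z)^2) volume a b :=
    fun a b => Continuous.intervalIntegrable (by fun_prop) _ _
  rw [intervalIntegral.integral_sub (hci _ _) (by simp)]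
  have e : (∫ z in (0:ℝ)..z, m * (pr 1 m z)^2) ≤ 1 := by
    rw [← pr_int hm, ← intervalIntegral.integral_add_adjacent_intervals (hci 0 z) (hci z 1)]
    have : 0 ≤ ∫ z in z..1, m * (pr 1 m z)^2 := intervalIntegral.integral_nonneg f1 (fun _ _ => by positivity)
    linarith
  have e2 : 0 ≤ (∫ z in (0:ℝ)..z, m * (pr 1 m z)^2) := intervalIntegral.integral_nonneg f0 (fun _ _ => by positivity)
  simp only [intervalIntegral.integral_const, smul_eq_mul, mul_one, sub_zero]
  rw [abs_le]; constructor <;> linarith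

theorem eLpGen_eq {α : Type*} [MeasurableSpace α] (μ : Measure α) {p : ℝ≥0∞} (hp : p ≠ 0)
    (g : α → ℝ≥0∞) : eLpGen μ p g = eLpNorm g p μ := by
  unfold eLpGen eLpNorm
  rw [if_neg hp]
  split_ifs with h
  · rfl
  · rfl

theorem spLp_eq {d : ℕ} {E : Type*} [NormedAddCommGroup E] {p : ℝ≥0∞} (hp : p ≠ 0)
    (f : Vec d → E) : spLp p f = eLpNorm f p (volume.restrict (fundCube d)) := by
  unfold spLp
  rw [eLpGen_eq _ hp]; rfl

open scoped Pointwise in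
theorem fd_linv {V : Type*} [AddCommGroup V] [MeasurableSpace V] [MeasurableAdd V] (μ : Measure V)
    [μ.IsAddLeftInvariant] (G : AddSubgroup V) [Countable G] {D : Set V}
    (h : IsAddFundamentalDomain G D μ) (F : V → ℝ≥0∞)
    (hF : ∀ g ∈ G, ∀ x, F (g + x) = F x) (z : V) :
    ∫⁻ x in D, F (x + z) ∂μ = ∫⁻ x in D, F x ∂μ := by
  have h2 := h.vadd_of_comm z
  rw [h.setLIntegral_eq h2 F (fun g x => hF g g.2 x)]
  have h3 := (measurePreserving_vadd z μ).setLIntegral_comp_emb (measurableEmbedding_const_vadd z) F D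
  have h4 : z +ᵥ D = (fun x => z +ᵥ x) '' D := rfl
  rw [h4, ← h3]
  simp [add_comm]

open scoped Pointwise in
theorem fd_inv {V : Type*} [AddCommGroup V] [MeasurableSpace V] [MeasurableAdd V] (μ : Measure V)
    [μ.IsAddLeftInvariant] (G : AddSubgroup V) [Countable G] {D : Set V}
    (h : IsAddFundamentalDomain G D μ) (F : V → ℝ)
    (hF : ∀ g ∈ G, ∀ x, F (g + x) = F x) (z : V) :
    ∫ x in D, F (x + z) ∂μ = ∫ x in D, F x ∂μ := by
  have h2 := h.vadd_of_comm z
  rw [h.setIntegral_eq h2 (fun g x => hF g g.2 x)]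
  have h3 := (measurePreserving_vadd z μ).setIntegral_image_emb (measurableEmbedding_const_vadd z) F D
  have h4 : z +ᵥ D = (fun x => z +ᵥ x) '' D := rfl
  rw [h4, h3]
  simp [add_comm]

theorem cube_ae (d : ℕ) : (ZSpan.fundamentalDomain (Pi.basisFun ℝ (Fin d)) : Set (Vec d)) =ᵐ[volume] fundCube d := by
  rw [ZSpan.fundamentalDomain_pi_basisFun]
  exact Measure.univ_pi_Ico_ae_eq_Icc (f := fun _ : Fin d => (0:ℝ)) (g := fun _ => 1)

theorem mem_span_int {d : ℕ} {g : Vec d}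
    (hg : g ∈ (Submodule.span ℤ (Set.range (Pi.basisFun ℝ (Fin d)))).toAddSubgroup) :
    ∃ k : Fin d → ℤ, g = fun i => (k i : ℝ) := by
  have h : ∀ i, ∃ k : ℤ, (k : ℝ) = g i := by
    have := (Module.Basis.mem_span_iff_repr_mem ℤ (Pi.basisFun ℝ (Fin d)) g).1 hg
    intro i
    obtain ⟨k, hk⟩ := this i
    exact ⟨k, by simpa using hk⟩
  choose k hk using h
  exact ⟨k, funext fun i => (hk i).symm⟩

theorem cube_linv {d : ℕ} {F : Vec d → ℝ≥0∞} (hF : ZPer F) (z : Vec d) :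
    ∫⁻ x in fundCube d, F (x + z) = ∫⁻ x in fundCube d, F x := by
  rw [← setLIntegral_congr (cube_ae d), ← setLIntegral_congr (cube_ae d)]
  haveI : Countable (Submodule.span ℤ (Set.range (Pi.basisFun ℝ (Fin d)))).toAddSubgroup :=
    inferInstanceAs (Countable (Submodule.span ℤ (Set.range (Pi.basisFun ℝ (Fin d)))))
  refine fd_linv volume _ (ZSpan.isAddFundamentalDomain' _ _) F (fun g hg x => ?_) z
  obtain ⟨k, rfl⟩ := mem_span_int hg
  rw [add_comm, hF x k]

theorem cube_inv {d : ℕ} {F : Vec d → ℝ} (hF : ZPer F) (z : Vec d) :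
    ∫ x in fundCube d, F (x + z) = ∫ x in fundCube d, F x := by
  rw [← setIntegral_congr_set (cube_ae d), ← setIntegral_congr_set (cube_ae d)]
  haveI : Countable (Submodule.span ℤ (Set.range (Pi.basisFun ℝ (Fin d)))).toAddSubgroup :=
    inferInstanceAs (Countable (Submodule.span ℤ (Set.range (Pi.basisFun ℝ (Fin d)))))
  refine fd_inv volume _ (ZSpan.isAddFundamentalDomain' _ _) F (fun g hg x => ?_) z
  obtain ⟨k, rfl⟩ := mem_span_int hg
  rw [add_comm, hF x k]

theorem Ioo_linv {F : ℝ → ℝ≥0∞} (hF : ∀ x, F (x + 1) = F x) (z : ℝ) :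
    ∫⁻ x in Set.Ioo 0 1, F (x + z) = ∫⁻ x in Set.Ioo 0 1, F x := by
  rw [setLIntegral_congr (Ioo_ae_eq_Ioc (a := (0:ℝ)) (b := 1)), setLIntegral_congr (Ioo_ae_eq_Ioc (a := (0:ℝ)) (b := 1))]
  have h := isAddFundamentalDomain_Ioc (T := 1) one_pos 0
  rw [zero_add] at h
  refine fd_linv volume _ h F (fun g hg x => ?_) z
  obtain ⟨k, rfl⟩ := AddSubgroup.mem_zmultiples_iff.1 hg
  have : Function.Periodic F 1 := hF
  rw [add_comm]
  exact this.zsmul k x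

theorem avg_abs {V : Type*} [AddCommGroup V] [Module ℝ V] [MeasurableSpace V] [MeasurableAdd₂ V]
    [MeasurableConstSMul ℝ V] (μ : Measure V) [SFinite μ] {D : Set V}
    (hμ : μ D = 1) (hDm : MeasurableSet D) (c1 c2 G : V → ℝ≥0∞) (hc1 : Measurable c1)
    (hc2 : Measurable c2) (hG : Measurable G) (n : ℝ) (hn : n ≠ 0) (IG : ℝ≥0∞)
    (hinv : ∀ z, ∫⁻ x in D, c1 (x + n⁻¹ • z) * G (n • x + z) ∂μ = ∫⁻ x in D, c1 x * G (n • x) ∂μ)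
    (hIG : ∀ x, ∫⁻ z in D, G (n • x + z) ∂μ = IG)
    (hc : ∀ x, ∀ z ∈ D, c1 (x + n⁻¹ • z) ≤ c2 x) :
    ∫⁻ x in D, c1 x * G (n • x) ∂μ ≤ (∫⁻ x in D, c2 x ∂μ) * IG := by
  have e : ∫⁻ x in D, c1 x * G (n • x) ∂μ
      = ∫⁻ z in D, ∫⁻ x in D, c1 (x + n⁻¹ • z) * G (n • x + z) ∂μ ∂μ := by
    simp_rw [hinv]
    simp [hμ]
  rw [e]
  calc _ ≤ ∫⁻ z in D, ∫⁻ x in D, c2 x * G (n • x + z) ∂μ ∂μ := by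
        refine setLIntegral_mono' hDm fun z hz => lintegral_mono fun x => ?_
        gcongr
        exact hc x z hz
    _ = ∫⁻ x in D, ∫⁻ z in D, c2 x * G (n • x + z) ∂μ ∂μ := by
        rw [lintegral_lintegral_swap]
        apply Measurable.aemeasurable
        simp only [Function.uncurry_def]
        have : Measurable fun p : V × V => n • p.2 + p.1 := by fun_prop
        exact (hc2.comp measurable_snd).mul (hG.comp this)
    _ = ∫⁻ x in D, c2 x * IG ∂μ := by
        refine lintegral_congr fun x => ?_
        rw [lintegral_const_mul, hIG]
        exact hG.comp (by fun_prop)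
    _ = _ := by rw [lintegral_mul_const _ hc2]

theorem cube_meas (d : ℕ) : MeasurableSet (fundCube d) := measurableSet_Icc
theorem cube_vol (d : ℕ) : volume (fundCube d) = 1 := by
  unfold fundCube
  rw [Real.volume_Icc_pi]; simp

instance (d : ℕ) : IsProbabilityMeasure ((volume : Measure (Vec d)).restrict (fundCube d)) :=
  ⟨by simp [cube_vol]⟩
instance : IsProbabilityMeasure ((volume : Measure ℝ).restrict (Set.Ioo 0 1)) :=
  ⟨by simp⟩

/-- spatial indicator -/
noncomputable def SA {d : ℕ} (A : Finset (Fin d)) (m : ℝ) (x : Vec d) : ℝ := ∏ l ∈ A, ind m (x l)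

theorem SA_nonneg {d : ℕ} (A : Finset (Fin d)) (m : ℝ) (x : Vec d) : 0 ≤ SA A m x :=
  Finset.prod_nonneg fun _ _ => ind_nonneg _ _
theorem SA_le_one {d : ℕ} (A : Finset (Fin d)) (m : ℝ) (x : Vec d) : SA A m x ≤ 1 :=
  Finset.prod_le_one (fun _ _ => ind_nonneg _ _) (fun _ _ => ind_le_one _ _)
theorem SA_sq {d : ℕ} (A : Finset (Fin d)) (m : ℝ) (x : Vec d) : SA A m x * SA A m x = SA A m x := by
  unfold SA; rw [← Finset.prod_mul_distrib]; simp [ind_sq]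
theorem SA_meas {d : ℕ} (A : Finset (Fin d)) (m : ℝ) : Measurable (SA A m) := by
  unfold SA
  refine Finset.measurable_prod _ fun l _ => (ind_meas m).comp (measurable_pi_apply l)
theorem SA_per {d : ℕ} (A : Finset (Fin d)) (m : ℝ) : ZPer (SA A m) := by
  intro x k; simp [SA, ind_perZ]

theorem ind_vol {m : ℝ} (hm : 1 ≤ m) : volume {y : ℝ | y ∈ Set.Icc (0:ℝ) 1 ∧ Int.fract y < 1 / m} ≤ ENNReal.ofReal (m⁻¹) := by
  have : {y : ℝ | y ∈ Set.Icc (0:ℝ) 1 ∧ Int.fract y < 1 / m} ⊆ Set.Icc 0 m⁻¹ ∪ {1} := by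
    rintro y ⟨⟨h0, h1⟩, h2⟩
    rcases h1.lt_or_eq with h | h
    · left; rw [Int.fract_eq_self.2 ⟨h0, h⟩] at h2; exact ⟨h0, by simpa using h2.le⟩
    · right; simpa using h
  refine (measure_mono this).trans ((measure_union_le _ _).trans ?_)
  simp

theorem ind_lint {m : ℝ} (hm : 1 ≤ m) : ∫⁻ y in Set.Ioo (0:ℝ) 1, ENNReal.ofReal (ind m y) ≤ ENNReal.ofReal (m⁻¹) := by
  refine le_trans ?_ (ind_vol hm)
  rw [← lintegral_indicator measurableSet_Ioo]
  have hms : MeasurableSet {y : ℝ | y ∈ Set.Icc (0:ℝ) 1 ∧ Int.fract y < 1 / m} :=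
    measurableSet_Icc.inter (measurableSet_lt measurable_fract measurable_const)
  rw [← lintegral_indicator_one hms]
  refine lintegral_mono fun y => ?_
  by_cases hy : y ∈ Set.Ioo (0:ℝ) 1
  · rw [Set.indicator_of_mem hy]
    unfold ind
    split_ifs with h
    · rw [Set.indicator_of_mem]
      · simp
      · exact ⟨⟨hy.1.le, hy.2.le⟩, h⟩
    · simp
  · rw [Set.indicator_of_notMem hy]; simp

theorem SA_lint {d : ℕ} (A : Finset (Fin d)) {m : ℝ} (hm : 1 ≤ m) :
    ∫⁻ x in fundCube d, ENNReal.ofReal (SA A m x) ≤ ENNReal.ofReal ((m⁻¹)^A.card) := by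
  classical
  let t : Fin d → Set ℝ := fun l => if l ∈ A then {y : ℝ | y ∈ Set.Icc (0:ℝ) 1 ∧ Int.fract y < 1 / m} else Set.Icc 0 1
  have ht : ∀ l, MeasurableSet (t l) := by
    intro l
    by_cases h : l ∈ A
    · simp only [t, h, if_true]; exact measurableSet_Icc.inter (measurableSet_lt measurable_fract measurable_const)
    · simp only [t, h, if_false]; exact measurableSet_Icc
  have h1 : ∫⁻ x in fundCube d, ENNReal.ofReal (SA A m x) ≤ volume (Set.univ.pi t) := by
    rw [← lintegral_indicator_one (MeasurableSet.univ_pi ht), ← lintegral_indicator (cube_meas d)]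
    refine lintegral_mono fun x => ?_
    by_cases hx : x ∈ fundCube d
    · rw [Set.indicator_of_mem hx]
      by_cases hA : ∀ l ∈ A, Int.fract (x l) < 1 / m
      · rw [Set.indicator_of_mem]
        · simpa using SA_le_one A m x
        · intro l _
          by_cases h : l ∈ A
          · simp only [t, h, if_true]; exact ⟨⟨hx.1 l, hx.2 l⟩, hA l h⟩
          · simp only [t, h, if_false]; exact ⟨hx.1 l, hx.2 l⟩
      · push Not at hA
        obtain ⟨l, hl, h⟩ := hA
        have : SA A m x = 0 := Finset.prod_eq_zero hl (by rw [ind, if_neg (not_lt.2 h)])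
        simp [this]
    · rw [Set.indicator_of_notMem hx]; simp
  refine h1.trans ?_
  rw [volume_pi_pi]
  calc ∏ i, volume (t i) ≤ ∏ i, (if i ∈ A then ENNReal.ofReal m⁻¹ else 1) := by
        refine Finset.prod_le_prod' fun l _ => ?_
        by_cases h : l ∈ A
        · simp only [t, h, if_true]; exact ind_vol hm
        · simp [t, h]
    _ = _ := by
        rw [Finset.prod_ite_mem, Finset.univ_inter, Finset.prod_const, ENNReal.ofReal_pow (by positivity)]

theorem avg_space {d : ℕ} (A : Finset (Fin d)) {m : ℝ} (hm : 1 ≤ m) {n : ℕ} (hn : 1 ≤ n)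
    (c1 c2 : Vec d → ℝ≥0∞) (hc1 : Measurable c1) (hc2 : Measurable c2) (hp : ZPer c1)
    (hc : ∀ x z : Vec d, ‖z‖ ≤ 1 → c1 (x + (n:ℝ)⁻¹ • z) ≤ c2 x) :
    ∫⁻ x in fundCube d, c1 x * ENNReal.ofReal (SA A m ((n:ℝ) • x)) ≤
      (∫⁻ x in fundCube d, c2 x) * ENNReal.ofReal ((m⁻¹)^A.card) := by
  have hn0 : (n:ℝ) ≠ 0 := by positivity
  have hG : ZPer (fun x => ENNReal.ofReal (SA A m x)) := fun x k => by
    have := SA_per A m x k; simp only at this ⊢; rw [this]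
  refine (avg_abs (volume : Measure (Vec d)) (cube_vol d) (cube_meas d) c1 c2 (fun x => ENNReal.ofReal (SA A m x)) hc1 hc2
    (SA_meas A m).ennreal_ofReal (n:ℝ) hn0 _ ?_ (fun x => ?_) ?_).trans (mul_le_mul_right (SA_lint A hm) _)
  · intro z
    have hF : ZPer (fun x : Vec d => c1 x * ENNReal.ofReal (SA A m ((n:ℝ) • x))) := by
      intro x k
      have e : (n:ℝ) • (x + fun i => (k i : ℝ)) = (n:ℝ) • x + fun i => (((n : ℤ) * k i : ℤ) : ℝ) := by
        ext i; simp [mul_add]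
      simp only
      rw [hp x k, e]
      congr 1
      exact hG _ _
    have := cube_linv hF ((n:ℝ)⁻¹ • z)
    rw [← this]
    simp only [smul_add, smul_inv_smul₀ hn0]
  · have := cube_linv hG ((n:ℝ) • x)
    rw [← this]
    simp_rw [add_comm]
  · intro x z hz
    apply hc x z
    rw [pi_norm_le_iff_of_nonneg zero_le_one]
    intro i
    rw [Real.norm_eq_abs, abs_le]
    have h0 := hz.1 i
    have h1 := hz.2 i
    simp at h0 h1
    constructor <;> linarith

theorem avg_time {m : ℝ} (hm : 1 ≤ m) {n : ℕ} (hn : 1 ≤ n)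
    (c1 c2 : ℝ → ℝ≥0∞) (hc1 : Measurable c1) (hc2 : Measurable c2) (hp : ∀ t, c1 (t + 1) = c1 t)
    (hc : ∀ x z : ℝ, |z| ≤ 1 → c1 (x + (n:ℝ)⁻¹ * z) ≤ c2 x) :
    ∫⁻ x in Set.Ioo 0 1, c1 x * ENNReal.ofReal (ind m (n * x)) ≤
      (∫⁻ x in Set.Ioo 0 1, c2 x) * ENNReal.ofReal (m⁻¹) := by
  have hn0 : (n:ℝ) ≠ 0 := by positivity
  refine (avg_abs (volume : Measure ℝ) (D := Set.Ioo 0 1) (by simp) measurableSet_Ioo c1 c2 (fun x => ENNReal.ofReal (ind m x)) hc1 hc2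
    (ind_meas m).ennreal_ofReal (n:ℝ) hn0 _ ?_ (fun x => ?_) ?_).trans (mul_le_mul_right (ind_lint hm) _)
  · intro z
    have hF : ∀ x, (fun x : ℝ => c1 x * ENNReal.ofReal (ind m (n * x))) (x + 1) = (fun x : ℝ => c1 x * ENNReal.ofReal (ind m (n * x))) x := by
      intro x
      have e : (n:ℝ) * (x + 1) = n * x + ((n:ℤ):ℝ) := by push_cast; ring
      simp only [e, ind_perZ, hp]
    have := Ioo_linv (F := fun x : ℝ => c1 x * ENNReal.ofReal (ind m (n * x))) hF ((n:ℝ)⁻¹ * z)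
    simp only [smul_eq_mul]
    rw [← this]
    simp only [mul_add, mul_inv_cancel_left₀ hn0]
  · have := Ioo_linv (F := fun x => ENNReal.ofReal (ind m x)) (fun x => by simp [ind_per]) ((n:ℝ) • x)
    rw [← this]
    simp_rw [add_comm]
  · intro x z hz
    exact hc x z (by rw [abs_le]; constructor <;> linarith [hz.1, hz.2])

/-- space-time -/
abbrev W (d : ℕ) := ℝ × Vec d

/-- directional derivative -/
noncomputable def dd {d : ℕ} (v : W d) (F : W d → ℝ) : W d → ℝ := fun z => fderiv ℝ F z v

def eS {d : ℕ} (k : Fin d) : W d := (0, Pi.single k 1)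
def eT {d : ℕ} : W d := (1, 0)

structure SP {d : ℕ} (F : W d → ℝ) : Prop where
  sm : ContDiff ℝ (⊤ : ℕ∞) F
  pt : ∀ t x, F (t + 1, x) = F (t, x)
  px : ∀ t x (k : Fin d → ℤ), F (t, x + fun i => (k i : ℝ)) = F (t, x)

namespace SP
variable {d : ℕ} {F G : W d → ℝ}

theorem df (hF : SP F) : Differentiable ℝ F := hF.sm.differentiable (by simp)
theorem cont (hF : SP F) : Continuous F := hF.sm.continuous
theorem const (c : ℝ) : SP (fun _ : W d => c) := ⟨contDiff_const, fun _ _ => rfl, fun _ _ _ => rfl⟩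
theorem add (hF : SP F) (hG : SP G) : SP (fun z => F z + G z) :=
  ⟨hF.sm.add hG.sm, fun t x => by simp only [hF.pt, hG.pt], fun t x k => by simp only [hF.px, hG.px]⟩
theorem sub (hF : SP F) (hG : SP G) : SP (fun z => F z - G z) :=
  ⟨hF.sm.sub hG.sm, fun t x => by simp only [hF.pt, hG.pt], fun t x k => by simp only [hF.px, hG.px]⟩
theorem mul (hF : SP F) (hG : SP G) : SP (fun z => F z * G z) :=
  ⟨hF.sm.mul hG.sm, fun t x => by simp only [hF.pt, hG.pt], fun t x k => by simp only [hF.px, hG.px]⟩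
theorem neg (hF : SP F) : SP (fun z => - F z) :=
  ⟨hF.sm.neg, fun t x => by simp only [hF.pt], fun t x k => by simp only [hF.px]⟩
theorem cmul (c : ℝ) (hF : SP F) : SP (fun z => c * F z) := (SP.const c).mul hF
theorem sum {ι : Type*} {s : Finset ι} {F : ι → W d → ℝ} (h : ∀ i ∈ s, SP (F i)) : SP (fun z => ∑ i ∈ s, F i z) :=
  ⟨ContDiff.sum fun i hi => (h i hi).sm, fun t x => Finset.sum_congr rfl fun i hi => (h i hi).pt t x,
    fun t x k => Finset.sum_congr rfl fun i hi => (h i hi).px t x k⟩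
theorem prod {ι : Type*} {s : Finset ι} {F : ι → W d → ℝ} (h : ∀ i ∈ s, SP (F i)) : SP (fun z => ∏ i ∈ s, F i z) :=
  ⟨contDiff_prod fun i hi => (h i hi).sm, fun t x => Finset.prod_congr rfl fun i hi => (h i hi).pt t x,
    fun t x k => Finset.prod_congr rfl fun i hi => (h i hi).px t x k⟩

theorem shift_fderiv {F : W d → ℝ} {a : W d} (h : ∀ z, F (z + a) = F z) (z : W d) :
    fderiv ℝ F (z + a) = fderiv ℝ F z := by
  rw [← fderiv_comp_add_right]
  congr 1
  funext z; exact h z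

theorem fd_pt (hF : SP F) (t : ℝ) (x : Vec d) : fderiv ℝ F (t + 1, x) = fderiv ℝ F (t, x) := by
  have := shift_fderiv (F := F) (a := (1, 0)) (fun z => by
    obtain ⟨t, x⟩ := z; simpa using hF.pt t x) (t, x)
  simpa using this
theorem fd_px (hF : SP F) (t : ℝ) (x : Vec d) (k : Fin d → ℤ) :
    fderiv ℝ F (t, x + fun i => (k i : ℝ)) = fderiv ℝ F (t, x) := by
  have := shift_fderiv (F := F) (a := (0, fun i => (k i : ℝ))) (fun z => by
    obtain ⟨t, x⟩ := z; simpa using hF.px t x k) (t, x)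
  simpa using this

theorem dd (hF : SP F) (v : W d) : SP (dd v F) := by
  refine ⟨?_, fun t x => ?_, fun t x k => ?_⟩
  · have : ContDiff ℝ (⊤ : ℕ∞) (fderiv ℝ F) := hF.sm.fderiv_right (m := (⊤ : ℕ∞)) le_rfl
    exact this.clm_apply contDiff_const
  · unfold _root_.dd; rw [hF.fd_pt]
  · unfold _root_.dd; rw [hF.fd_px]

end SP

theorem per_bdd {d : ℕ} {E : Type*} [NormedAddCommGroup E] {F : W d → E} (hc : Continuous F)
    (pt : ∀ t x, F (t + 1, x) = F (t, x)) (px : ∀ t x (k : Fin d → ℤ), F (t, x + fun i => (k i : ℝ)) = F (t, x)) :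
    ∃ C : ℝ, 0 < C ∧ ∀ z, ‖F z‖ ≤ C := by
  have hK : IsCompact (Set.Icc (0:ℝ) 1 ×ˢ Set.Icc (0:Vec d) 1) := isCompact_Icc.prod isCompact_Icc
  obtain ⟨C, hC⟩ := hK.exists_bound_of_continuousOn hc.continuousOn
  refine ⟨max C 1, by positivity, fun ⟨t, x⟩ => ?_⟩
  have h1 : F (t, x) = F (Int.fract t, x) := by
    have : Function.Periodic (fun t => F (t, x)) 1 := fun t => pt t x
    have := this.sub_zsmul_eq (x := t) ⌊t⌋
    simp only [zsmul_eq_mul, mul_one] at this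
    rw [← this]; rfl
  have h2 : F (Int.fract t, x) = F (Int.fract t, fun i => Int.fract (x i)) := by
    rw [← px (Int.fract t) (fun i => Int.fract (x i)) (fun i => ⌊x i⌋)]
    congr 2; funext i; simp
  rw [h1, h2]
  refine (hC _ ⟨⟨Int.fract_nonneg _, (Int.fract_lt_one _).le⟩, fun i => Int.fract_nonneg _, fun i => (Int.fract_lt_one _).le⟩).trans (le_max_left _ _)

theorem SP.bdd {d : ℕ} {F : W d → ℝ} (hF : SP F) : ∃ C : ℝ, 0 < C ∧ ∀ z, |F z| ≤ C :=
  per_bdd hF.cont hF.pt hF.px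

theorem SP.lip {d : ℕ} {F : W d → ℝ} (hF : SP F) : ∃ C : ℝ, 0 < C ∧ ∀ z z', |F z' - F z| ≤ C * ‖z' - z‖ := by
  obtain ⟨C, h0, hC⟩ := per_bdd (hF.sm.continuous_fderiv (by simp)) hF.fd_pt hF.fd_px
  refine ⟨C, h0, fun z z' => ?_⟩
  exact convex_univ.norm_image_sub_le_of_norm_fderiv_le (fun x _ => hF.df x) (fun x _ => hC x) trivial trivial

section calc_rules
variable {d : ℕ} {F G : W d → ℝ} (v : W d)

theorem dd_add (hF : SP F) (hG : SP G) : dd v (fun z => F z + G z) = fun z => dd v F z + dd v G z := by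
  funext z; unfold dd
  rw [fderiv_fun_add (hF.df z) (hG.df z)]; rfl
theorem dd_sub (hF : SP F) (hG : SP G) : dd v (fun z => F z - G z) = fun z => dd v F z - dd v G z := by
  funext z; unfold dd
  rw [fderiv_fun_sub (hF.df z) (hG.df z)]; rfl
theorem dd_neg (F : W d → ℝ) : dd v (fun z => - F z) = fun z => - dd v F z := by
  funext z; unfold dd
  rw [fderiv_fun_neg]; rfl
theorem dd_mul (hF : SP F) (hG : SP G) : dd v (fun z => F z * G z) = fun z => dd v F z * G z + F z * dd v G z := by
  funext z; unfold dd
  rw [fderiv_fun_mul (hF.df z) (hG.df z)]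
  simp; ring
theorem dd_cmul (c : ℝ) (hF : SP F) : dd v (fun z => c * F z) = fun z => c * dd v F z := by
  funext z; unfold dd
  rw [fderiv_const_mul (hF.df z)]; rfl
theorem dd_const (c : ℝ) : dd v (fun _ => c) = fun _ => 0 := by
  funext z; unfold dd; simp
theorem dd_sum {ι : Type*} {s : Finset ι} {F : ι → W d → ℝ} (h : ∀ i ∈ s, SP (F i)) :
    dd v (fun z => ∑ i ∈ s, F i z) = fun z => ∑ i ∈ s, dd v (F i) z := by
  funext z; unfold dd
  rw [fderiv_fun_sum (fun i hi => (h i hi).df z)]; simp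
theorem dd_comm (hF : SP F) (v w : W d) : dd v (dd w F) = dd w (dd v F) := by
  funext z
  have h2 : ContDiff ℝ (⊤ : ℕ∞) (fderiv ℝ F) := hF.sm.fderiv_right (m := (⊤ : ℕ∞)) le_rfl
  have hd : DifferentiableAt ℝ (fderiv ℝ F) z := h2.differentiable (by simp) z
  have hs := (hF.sm.contDiffAt (x := z)).isSymmSndFDerivAt (by simp; exact WithTop.coe_le_coe.2 le_top)
  have e : ∀ a b : W d, dd a (dd b F) z = fderiv ℝ (fderiv ℝ F) z a b := by
    intro a b
    unfold dd
    rw [fderiv_clm_apply hd (differentiableAt_const b)]; simp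
  rw [e, e]; exact hs v w
theorem dd_prod {ι : Type*} [DecidableEq ι] {s : Finset ι} {F : ι → W d → ℝ} (h : ∀ i ∈ s, SP (F i)) :
    dd v (fun z => ∏ i ∈ s, F i z) = fun z => ∑ i ∈ s, (∏ j ∈ s.erase i, F j z) * dd v (F i) z := by
  funext z; unfold dd
  rw [(HasFDerivAt.finsetProd (u := s) (g := F) (x := z) fun i hi => ((h i hi).df z).hasFDerivAt).fderiv]
  simp
theorem dd_time {f f' : ℝ → ℝ} (hf : ∀ t, HasDerivAt f (f' t) t) :
    dd v (fun z : W d => f z.1) = fun z => v.1 * f' z.1 := by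
  funext z; unfold dd
  have := (hf z.1).comp_hasFDerivAt z (hasFDerivAt_fst (𝕜 := ℝ) (E := ℝ) (F := Vec d) (p := z))
  rw [show (fun z : W d => f z.1) = f ∘ Prod.fst from rfl, this.fderiv]
  simp [mul_comm]
theorem dd_space {f f' : ℝ → ℝ} (hf : ∀ t, HasDerivAt f (f' t) t) (l : Fin d) :
    dd v (fun z : W d => f (z.2 l)) = fun z => v.2 l * f' (z.2 l) := by
  funext z; unfold dd
  have h1 : HasFDerivAt (fun z : W d => z.2 l) ((ContinuousLinearMap.proj l).comp (ContinuousLinearMap.snd ℝ ℝ (Vec d))) z :=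
    ((ContinuousLinearMap.proj (R := ℝ) (φ := fun _ : Fin d => ℝ) l).comp (ContinuousLinearMap.snd ℝ ℝ (Vec d))).hasFDerivAt
  have := (hf (z.2 l)).comp_hasFDerivAt z h1
  rw [show (fun z : W d => f (z.2 l)) = f ∘ (fun z : W d => z.2 l) from rfl, this.fderiv]
  simp [mul_comm]
end calc_rules

theorem SP_time {d : ℕ} {f : ℝ → ℝ} (hf : ContDiff ℝ (⊤ : ℕ∞) f) (hp : ∀ t, f (t + 1) = f t) :
    SP (fun z : W d => f z.1) :=
  ⟨hf.comp contDiff_fst, fun t x => hp t, fun _ _ _ => rfl⟩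
theorem SP_space {d : ℕ} {f : ℝ → ℝ} (hf : ContDiff ℝ (⊤ : ℕ∞) f) (hp : ∀ t (k : ℤ), f (t + k) = f t) (l : Fin d) :
    SP (fun z : W d => f (z.2 l)) :=
  ⟨hf.comp ((contDiff_apply ℝ ℝ l).comp contDiff_snd), fun t x => rfl, fun t x k => hp _ _⟩

structure Par (d : ℕ) where
  i : Fin d
  j : Fin d
  hij : j ≠ i
  μ : ℝ
  hμ : 1 ≤ μ
  κ : ℝ
  hκ : 1 ≤ κ
  σ : ℕ
  hσ : 1 ≤ σ
  l : ℕ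
  hl : 1 ≤ l
  c1 : ℝ
  c2 : ℝ
  h1 : 0 < c1
  h2 : 0 < c2
  hc : c1 * c2 = κ * μ ^ (d - 1)

noncomputable section
namespace Par
variable {d : ℕ} (q : Par d)

def η : ℝ := (q.l * q.μ)⁻¹
def g : W d → ℝ := fun z => pr 1 q.κ (q.σ * z.1)
def g2 : W d → ℝ := fun z => pr 2 q.κ (q.σ * z.1)
def h : W d → ℝ := fun z => HH q.κ (q.σ * z.1)
def ps (a : ℕ) (l : Fin d) : W d → ℝ := fun z => pr a q.μ (q.l * z.2 l)
def hs (l : Fin d) : W d → ℝ := fun z => HH q.μ (q.l * z.2 l)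
def Zn (a : Fin d → ℕ) : W d → ℝ := fun z => ∏ l ∈ Finset.univ.erase q.i, q.ps (a l) l z
def a0 : Fin d → ℕ := fun l => if l = q.j then 0 else 1
def Z : W d → ℝ := q.Zn q.a0
def X : W d → ℝ := q.Zn (fun _ => 1)
def PP (l : Fin d) : W d → ℝ := fun z => q.μ * (q.ps 1 l z * q.ps 1 l z)
def Al (l : Fin d) : Finset (Fin d) := (Finset.univ.erase q.i).filter (· < l)
def Q (l : Fin d) : W d → ℝ := fun z => (∏ m ∈ q.Al l, q.PP m z) * q.hs l z

theorem lpos : (0:ℝ) < q.l := by have := q.hl; positivity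
theorem spos : (0:ℝ) < q.σ := by have := q.hσ; positivity
theorem mpos : (0:ℝ) < q.μ := lt_of_lt_of_le one_pos q.hμ
theorem kpos : (0:ℝ) < q.κ := lt_of_lt_of_le one_pos q.hκ
theorem ηpos : 0 < q.η := by have := q.lpos; have := q.mpos; unfold η; positivity
theorem η_mul : q.η * (q.l * q.μ) = 1 := by
  have := q.lpos; have := q.mpos; unfold η; field_simp

theorem comp_deriv {f : ℝ → ℝ} {f' : ℝ → ℝ} (hf : ∀ y, HasDerivAt f (f' y) y) (n : ℝ) (t : ℝ) :
    HasDerivAt (fun t => f (n * t)) (n * f' (n * t)) t := by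
  have := (hf (n * t)).comp t ((hasDerivAt_id t).const_mul n)
  simpa [mul_comm, Function.comp_def] using this

theorem nat_per {f : ℝ → ℝ} (hf : ∀ y (k : ℤ), f (y + k) = f y) (n : ℕ) (t : ℝ) (k : ℤ) :
    (fun t => f (n * t)) (t + k) = (fun t => f (n * t)) t := by
  have : (n:ℝ) * (t + k) = n * t + ((n * k : ℤ) : ℝ) := by push_cast; ring
  simp only [this, hf]

theorem g_sp : SP q.g := SP_time ((pr_smooth 1 q.hκ).comp (by fun_prop)) (fun t => by
  have := nat_per (pr_perZ 1 q.κ) q.σ t 1; simpa using this)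
theorem h_sp : SP q.h := SP_time ((HH_smooth q.hκ).comp (by fun_prop)) (fun t => by
  have := nat_per (HH_perZ q.hκ) q.σ t 1; simpa using this)
theorem ps_sp (a l) : SP (q.ps a l) :=
  SP_space (f := fun y => pr a q.μ (q.l * y)) ((pr_smooth a q.hμ).comp (by fun_prop)) (nat_per (pr_perZ a q.μ) q.l) l
theorem hs_sp (l) : SP (q.hs l) :=
  SP_space (f := fun y => HH q.μ (q.l * y)) ((HH_smooth q.hμ).comp (by fun_prop)) (nat_per (HH_perZ q.hμ) q.l) l
theorem Zn_sp (a) : SP (q.Zn a) := SP.prod fun l _ => q.ps_sp _ l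
theorem Z_sp : SP q.Z := q.Zn_sp _
theorem X_sp : SP q.X := q.Zn_sp _
theorem PP_sp (l) : SP (q.PP l) := SP.cmul _ ((q.ps_sp 1 l).mul (q.ps_sp 1 l))
theorem Q_sp (l) : SP (q.Q l) := (SP.prod fun m _ => q.PP_sp m).mul (q.hs_sp l)

theorem dd_g (v : W d) : dd v q.g = fun z => v.1 * (q.σ * (q.κ * q.g2 z)) :=
  dd_time v (comp_deriv (pr_deriv 1 q.hκ) q.σ)
theorem dd_h (v : W d) : dd v q.h = fun z => v.1 * (q.σ * (q.κ * q.g z ^ 2 - 1)) :=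
  dd_time v (comp_deriv (HH_deriv q.hκ) q.σ)
theorem dd_ps (v : W d) (a l) : dd v (q.ps a l) = fun z => v.2 l * (q.l * (q.μ * q.ps (a+1) l z)) :=
  dd_space (f := fun y => pr a q.μ (q.l * y)) v (comp_deriv (pr_deriv a q.hμ) q.l) l
theorem dd_hs (v : W d) (l) : dd v (q.hs l) = fun z => v.2 l * (q.l * (q.PP l z - 1)) := by
  have := dd_space (f := fun y => HH q.μ (q.l * y)) v (comp_deriv (HH_deriv q.hμ) q.l) l
  unfold hs PP ps
  rw [this]; funext z; ring

theorem eS_snd (k l : Fin d) : (eS k : W d).2 l = if l = k then 1 else 0 := by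
  simp [eS, Pi.single_apply]

theorem dd_Zn (k : Fin d) (a) : dd (eS k) (q.Zn a) = fun z => if k = q.i then 0 else
    (q.l * q.μ) * q.Zn (Function.update a k (a k + 1)) z := by
  unfold Zn
  rw [dd_prod _ (fun l _ => q.ps_sp _ l)]
  funext z
  simp only [dd_ps, eS_snd]
  split_ifs with hk
  · refine Finset.sum_eq_zero fun l hl => ?_
    rw [if_neg (by rw [hk]; exact (Finset.mem_erase.1 hl).1)]; ring
  · have hm : k ∈ Finset.univ.erase q.i := by simp [hk]
    rw [Finset.sum_eq_single_of_mem k hm]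
    · rw [if_pos rfl, ← Finset.mul_prod_erase _ _ hm, Function.update_self]
      have e : ∏ l ∈ (Finset.univ.erase q.i).erase k, q.ps (Function.update a k (a k + 1) l) l z
          = ∏ l ∈ (Finset.univ.erase q.i).erase k, q.ps (a l) l z :=
        Finset.prod_congr rfl (fun l hl => by
          rw [Function.update_of_ne (Finset.mem_erase.1 hl).1])
      rw [e]
      ring
    · intro l _ hl
      rw [if_neg hl]; ring

theorem ddT_Zn (a) : dd eT (q.Zn a) = fun z => 0 := by
  unfold Zn
  rw [dd_prod _ (fun l _ => q.ps_sp _ l)]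
  funext z
  simp [dd_ps, eT]

theorem dd_Z_j : dd (eS q.j) q.Z = fun z => (q.l * q.μ) * q.X z := by
  unfold Z X
  rw [dd_Zn]
  funext z
  rw [if_neg q.hij]
  congr 2
  funext l
  by_cases h : l = q.j
  · subst h; simp [a0]
  · simp [a0, h]
theorem dd_Z_i : dd (eS q.i) q.Z = fun z => 0 := by
  unfold Z; rw [dd_Zn]; simp

theorem dd_PP (v : W d) (l) : dd v (q.PP l) = fun z => v.2 l * (q.μ * (2 * (q.l * (q.μ * q.ps 2 l z)) * q.ps 1 l z)) := by
  unfold PP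
  rw [dd_cmul _ _ ((q.ps_sp 1 l).mul (q.ps_sp 1 l)), dd_mul _ (q.ps_sp 1 l) (q.ps_sp 1 l), dd_ps]
  funext z; ring

theorem dd_Q (v : W d) (l) (hv : ∀ m ∈ q.Al l, v.2 m = 0) : dd v (q.Q l) = fun z => v.2 l * ((∏ m ∈ q.Al l, q.PP m z) * (q.l * (q.PP l z - 1))) := by
  unfold Q
  rw [dd_mul _ (SP.prod fun m _ => q.PP_sp m) (q.hs_sp l), dd_hs, dd_prod _ (fun m _ => q.PP_sp m)]
  funext z
  have : ∑ i ∈ q.Al l, (∏ j ∈ (q.Al l).erase i, q.PP j z) * dd v (q.PP i) z = 0 := by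
    refine Finset.sum_eq_zero fun m hm => ?_
    rw [dd_PP, hv m hm]; ring
  simp only [this]; ring

theorem dd_Q_l (l) : dd (eS l) (q.Q l) = fun z => (∏ m ∈ q.Al l, q.PP m z) * (q.l * (q.PP l z - 1)) := by
  rw [dd_Q _ _ _ (fun m hm => by rw [eS_snd, if_neg]; exact (Finset.mem_filter.1 hm).2.ne)]
  simp [eS_snd]
theorem dd_Q_i (l) (hl : l ≠ q.i) : dd (eS q.i) (q.Q l) = fun z => 0 := by
  rw [dd_Q _ _ _ (fun m hm => by
    rw [eS_snd, if_neg]; exact (Finset.mem_erase.1 (Finset.mem_filter.1 hm).1).1)]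
  simp [eS_snd, hl]

theorem PP_prod (z : W d) : ∏ l ∈ Finset.univ.erase q.i, q.PP l z = q.μ ^ (d-1) * q.X z ^ 2 := by
  unfold PP X Zn
  rw [Finset.prod_mul_distrib, Finset.prod_const, Finset.prod_mul_distrib]
  rw [Finset.card_erase_of_mem (Finset.mem_univ _)]
  simp; left; ring

theorem tele (z : W d) : ∑ l ∈ Finset.univ.erase q.i, (∏ m ∈ q.Al l, q.PP m z) * (q.PP l z - 1)
    = q.μ ^ (d-1) * q.X z ^ 2 - 1 := by
  rw [← PP_prod]
  have := Finset.prod_sub_ordered (Finset.univ.erase q.i) (fun _ => (1:ℝ)) (fun l => 1 - q.PP l z)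
  simp only [_root_.sub_sub_cancel, Finset.prod_const_one, mul_one] at this
  rw [this]
  rw [sub_sub_cancel_left, ← Finset.sum_neg_distrib]
  refine Finset.sum_congr rfl fun l _ => ?_
  unfold Al; ring

end Par
end

noncomputable section
namespace Par
variable {d : ℕ} (q : Par d) (A B ρ : W d → ℝ) (u : Fin d → W d → ℝ)

def f : W d → ℝ := fun z => -(A z * B z)
def Pθ : W d → ℝ := fun z => (q.c1 * q.η) * (q.g z * (A z * q.Z z))
def Pw : W d → ℝ := fun z => (q.c2 * q.η) * (q.g z * (B z * q.Z z))
def Po : W d → ℝ := fun z => (q.σ : ℝ)⁻¹ * (q.h z * f A B z)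
def θ : W d → ℝ := fun z => dd (eS q.j) (q.Pθ A) z + dd (eS q.i) (q.Po A B) z
def w (k : Fin d) : W d → ℝ :=
  if k = q.i then dd (eS q.j) (q.Pw B) else if k = q.j then fun z => - dd (eS q.i) (q.Pw B) z else fun _ => 0
def T (k : Fin d) : W d → ℝ :=
  if k = q.i then dd eT (q.Po A B) else if k = q.j then dd eT (q.Pθ A) else fun _ => 0
def Y (l : Fin d) : W d → ℝ := fun z => ((q.l : ℝ)⁻¹ * q.κ) * ((q.g z * q.g z) * (f A B z * q.Q l z))
def V (k : Fin d) : W d → ℝ :=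
  if k = q.i then fun z => ∑ l ∈ Finset.univ.erase q.i, dd (eS l) (q.Y A B l) z
  else fun z => - dd (eS q.i) (q.Y A B k) z
def fi (k : Fin d) : W d → ℝ := if k = q.i then f A B else fun _ => 0
def F (k : Fin d) : W d → ℝ := fun z => q.θ A B z * u k z + ρ z * q.w B k z + q.θ A B z * q.w B k z
def E (k : Fin d) : W d → ℝ := fun z => q.F A B ρ u k z + (q.fi A B k z + (q.T A B k z + q.V A B k z))

variable {A B ρ u} (hA : SP A) (hB : SP B) (hρ : SP ρ) (hu : ∀ k, SP (u k))
include hA hB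

theorem f_sp : SP (f A B) := (hA.mul hB).neg
omit hB in
theorem Pθ_sp : SP (q.Pθ A) := SP.cmul _ (q.g_sp.mul (hA.mul q.Z_sp))
omit hA in
theorem Pw_sp : SP (q.Pw B) := SP.cmul _ (q.g_sp.mul (hB.mul q.Z_sp))
theorem Po_sp : SP (q.Po A B) := SP.cmul _ (q.h_sp.mul (f_sp hA hB))
theorem θ_sp : SP (q.θ A B) := ((q.Pθ_sp hA).dd _).add ((q.Po_sp hA hB).dd _)
omit hA in
theorem w_sp (k) : SP (q.w B k) := by
  unfold w; split_ifs
  · exact (q.Pw_sp hB).dd _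
  · exact ((q.Pw_sp hB).dd _).neg
  · exact SP.const 0
theorem T_sp (k) : SP (q.T A B k) := by
  unfold T; split_ifs
  · exact (q.Po_sp hA hB).dd _
  · exact ((q.Pθ_sp hA).dd _)
  · exact SP.const 0
theorem Y_sp (l) : SP (q.Y A B l) := SP.cmul _ ((q.g_sp.mul q.g_sp).mul ((f_sp hA hB).mul (q.Q_sp l)))
theorem V_sp (k) : SP (q.V A B k) := by
  unfold V; split_ifs
  · exact SP.sum fun l _ => (q.Y_sp hA hB l).dd _
  · exact ((q.Y_sp hA hB k).dd _).neg
theorem fi_sp (k) : SP (q.fi A B k) := by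
  unfold fi; split_ifs
  · exact f_sp hA hB
  · exact SP.const 0
include hρ hu
theorem F_sp (k) : SP (q.F A B ρ u k) :=
  (((q.θ_sp hA hB).mul (hu k)).add (hρ.mul (q.w_sp hB k))).add ((q.θ_sp hA hB).mul (q.w_sp hB k))
theorem E_sp (k) : SP (q.E A B ρ u k) :=
  (q.F_sp hA hB hρ hu k).add ((q.fi_sp hA hB k).add ((q.T_sp hA hB k).add (q.V_sp hA hB k)))
omit hρ hu

theorem split_i (G : Fin d → ℝ) : ∑ k, G k = G q.i + ∑ k ∈ Finset.univ.erase q.i, G k :=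
  (Finset.add_sum_erase _ _ (Finset.mem_univ _)).symm

omit hA hB in
theorem split_ij (G : Fin d → ℝ) (h : ∀ k, k ≠ q.i → k ≠ q.j → G k = 0) : ∑ k, G k = G q.i + G q.j := by
  rw [← Finset.add_sum_erase _ _ (Finset.mem_univ q.i)]
  congr 1
  refine Finset.sum_eq_single_of_mem _ (by simp [q.hij]) fun k hk hj => h k (Finset.mem_erase.1 hk).1 hj

omit hA in
theorem div_w (z : W d) : ∑ k, dd (eS k) (q.w B k) z = 0 := by
  rw [q.split_ij]
  · simp only [w, if_true, q.hij, if_false, dd_neg]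
    rw [dd_comm (q.Pw_sp hB) (eS q.i) (eS q.j)]; ring
  · intro k h1 h2
    simp [w, h1, h2, dd_const]
theorem div_T (z : W d) : ∑ k, dd (eS k) (q.T A B k) z = dd eT (q.θ A B) z := by
  rw [q.split_ij]
  · simp only [T, if_true, q.hij, if_false]
    unfold θ
    rw [dd_add _ ((q.Pθ_sp hA).dd _) ((q.Po_sp hA hB).dd _), dd_comm (q.Pθ_sp hA) eT, dd_comm (q.Po_sp hA hB) eT]
    ring
  · intro k h1 h2
    simp [T, h1, h2, dd_const]
omit hA hB in
theorem div_fi (z : W d) : ∑ k, dd (eS k) (q.fi A B k) z = dd (eS q.i) (f A B) z := by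
  rw [q.split_ij]
  · simp only [fi, if_true, q.hij, if_false, dd_const]; ring
  · intro k h1 h2
    simp [fi, h1, dd_const]
theorem div_V (z : W d) : ∑ k, dd (eS k) (q.V A B k) z = 0 := by
  rw [← Finset.add_sum_erase _ _ (Finset.mem_univ q.i)]
  simp only [V, if_true]
  rw [dd_sum _ (fun l _ => (q.Y_sp hA hB l).dd _)]
  simp only
  rw [← Finset.sum_add_distrib]
  refine Finset.sum_eq_zero fun k hk => ?_
  rw [if_neg (Finset.mem_erase.1 hk).1, dd_neg, dd_comm (q.Y_sp hA hB k)]; ring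
include hρ hu
theorem div_E (z : W d) : dd eT (q.θ A B) z + ∑ k, dd (eS k) (q.F A B ρ u k) z - dd (eS q.i) (fun z => A z * B z) z
    = ∑ k, dd (eS k) (q.E A B ρ u k) z := by
  have h : ∀ k, dd (eS k) (q.E A B ρ u k) z = dd (eS k) (q.F A B ρ u k) z + (dd (eS k) (q.fi A B k) z
      + (dd (eS k) (q.T A B k) z + dd (eS k) (q.V A B k) z)) := by
    intro k
    unfold E
    rw [dd_add _ (q.F_sp hA hB hρ hu k) ((q.fi_sp hA hB k).add ((q.T_sp hA hB k).add (q.V_sp hA hB k))),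
      dd_add _ (q.fi_sp hA hB k) ((q.T_sp hA hB k).add (q.V_sp hA hB k)), dd_add _ (q.T_sp hA hB k) (q.V_sp hA hB k)]
  simp only [h, Finset.sum_add_distrib]
  rw [q.div_V hA hB, q.div_T hA hB, q.div_fi]
  have : dd (eS q.i) (f A B) z = - dd (eS q.i) (fun z => A z * B z) z := by
    unfold f; rw [dd_neg]
  rw [this]; ring
omit hρ hu

-- expansions
omit hA hB in
theorem eS1 (k : Fin d) : (eS k : W d).1 = 0 := rfl

omit hB in
theorem θp_eq (k : Fin d) (z : W d) : dd (eS k) (q.Pθ A) z = (q.c1 * q.η) * (q.g z * (dd (eS k) A z * q.Z z + A z * dd (eS k) q.Z z)) := by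
  unfold Pθ
  rw [dd_cmul _ _ (q.g_sp.mul (hA.mul q.Z_sp)), dd_mul _ q.g_sp (hA.mul q.Z_sp), dd_mul _ hA q.Z_sp, dd_g, eS1]
  ring
omit hA in
theorem wp_eq (k : Fin d) (z : W d) : dd (eS k) (q.Pw B) z = (q.c2 * q.η) * (q.g z * (dd (eS k) B z * q.Z z + B z * dd (eS k) q.Z z)) := by
  unfold Pw
  rw [dd_cmul _ _ (q.g_sp.mul (hB.mul q.Z_sp)), dd_mul _ q.g_sp (hB.mul q.Z_sp), dd_mul _ hB q.Z_sp, dd_g, eS1]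
  ring
theorem θ_eq (z : W d) : q.θ A B z = q.c1 * (A z * (q.g z * q.X z) + q.η * (dd (eS q.j) A z * (q.g z * q.Z z)))
    + (q.σ : ℝ)⁻¹ * (q.h z * dd (eS q.i) (f A B) z) := by
  unfold θ
  rw [q.θp_eq hA, dd_Z_j]
  unfold Po
  rw [dd_cmul _ _ (q.h_sp.mul (f_sp hA hB)), dd_mul _ q.h_sp (f_sp hA hB), dd_h, eS1]
  linear_combination (q.c1 * q.g z * A z * q.X z) * q.η_mul
omit hA in
theorem w_i_eq (z : W d) : q.w B q.i z = q.c2 * (B z * (q.g z * q.X z) + q.η * (dd (eS q.j) B z * (q.g z * q.Z z))) := by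
  simp only [w, if_true]
  rw [q.wp_eq hB, dd_Z_j]
  linear_combination (q.c2 * q.g z * B z * q.X z) * q.η_mul
omit hA in
theorem w_j_eq (z : W d) : q.w B q.j z = - q.c2 * (q.η * (dd (eS q.i) B z * (q.g z * q.Z z))) := by
  simp only [w, if_true, q.hij, if_false]
  rw [q.wp_eq hB, dd_Z_i]
  ring
omit hA hB in
theorem w_k_eq (k) (h1 : k ≠ q.i) (h2 : k ≠ q.j) (z : W d) : q.w B k z = 0 := by
  simp [w, h1, h2]
theorem T_i_eq (z : W d) : q.T A B q.i z = q.κ * q.g z ^ 2 * f A B z - f A B z + (q.σ : ℝ)⁻¹ * (q.h z * dd eT (f A B) z) := by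
  simp only [T, if_true]
  unfold Po
  rw [dd_cmul _ _ (q.h_sp.mul (f_sp hA hB)), dd_mul _ q.h_sp (f_sp hA hB), dd_h]
  have := q.spos
  simp only [eT]; field_simp
omit hB in
theorem T_j_eq (z : W d) : q.T A B q.j z = (q.c1 * q.η) * (q.σ * q.κ * (A z * (q.g2 z * q.Z z)) + dd eT A z * (q.g z * q.Z z)) := by
  simp only [T, if_true, q.hij, if_false]
  unfold Pθ
  rw [dd_cmul _ _ (q.g_sp.mul (hA.mul q.Z_sp)), dd_mul _ q.g_sp (hA.mul q.Z_sp), dd_mul _ hA q.Z_sp, dd_g]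
  have : dd eT q.Z = fun _ => 0 := q.ddT_Zn _
  rw [this]
  simp only [eT]; ring
omit hA hB in
theorem T_k_eq (k) (h1 : k ≠ q.i) (h2 : k ≠ q.j) (z : W d) : q.T A B k z = 0 := by
  simp [T, h1, h2]
theorem Y_eq (k l : Fin d) (z : W d) : dd (eS k) (q.Y A B l) z = ((q.l : ℝ)⁻¹ * q.κ) * ((q.g z * q.g z) * (dd (eS k) (f A B) z * q.Q l z + f A B z * dd (eS k) (q.Q l) z)) := by
  unfold Y
  rw [dd_cmul _ _ ((q.g_sp.mul q.g_sp).mul ((f_sp hA hB).mul (q.Q_sp l))), dd_mul _ (q.g_sp.mul q.g_sp) ((f_sp hA hB).mul (q.Q_sp l)),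
    dd_mul _ (f_sp hA hB) (q.Q_sp l), dd_mul _ q.g_sp q.g_sp, dd_g, eS1]
  ring
theorem V_i_eq (z : W d) : q.V A B q.i z = ((q.l : ℝ)⁻¹ * q.κ) * ∑ l ∈ Finset.univ.erase q.i, dd (eS l) (f A B) z * (q.g z * q.g z * q.Q l z)
    + q.κ * q.g z ^ 2 * f A B z * (q.μ ^ (d-1) * q.X z ^ 2 - 1) := by
  simp only [V, if_true]
  simp only [q.Y_eq hA hB, dd_Q_l]
  rw [← tele, Finset.mul_sum, Finset.mul_sum, ← Finset.sum_add_distrib]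
  refine Finset.sum_congr rfl fun l _ => ?_
  have := q.lpos
  field_simp
theorem V_k_eq (k) (hk : k ≠ q.i) (z : W d) : q.V A B k z = - (((q.l : ℝ)⁻¹ * q.κ) * (dd (eS q.i) (f A B) z * (q.g z * q.g z * q.Q k z))) := by
  simp only [V, hk, if_false]
  rw [q.Y_eq hA hB, q.dd_Q_i k hk]; ring
end Par
end

noncomputable section
def Bb (d : ℕ) : ℝ := prof.Bd ^ (2 * d + 2)
theorem one_le_Bb (d : ℕ) : 1 ≤ Bb d := one_le_pow₀ prof.one_le

namespace Par
variable {d : ℕ} (q : Par d)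

def Tt (z : W d) : ℝ := ind q.κ (q.σ * z.1)
def Sx (A : Finset (Fin d)) (z : W d) : ℝ := SA A q.μ ((q.l : ℝ) • z.2)
def y (z : W d) : ℝ := q.Tt z * q.Sx (Finset.univ.erase q.i) z
def yl (l : Fin d) (z : W d) : ℝ := q.Tt z * (q.μ ^ (q.Al l).card * q.Sx (q.Al l) z)

theorem Tt0 (z : W d) : 0 ≤ q.Tt z := ind_nonneg _ _
theorem Tt1 (z : W d) : q.Tt z ≤ 1 := ind_le_one _ _
theorem Ttsq (z : W d) : q.Tt z * q.Tt z = q.Tt z := ind_sq _ _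
theorem Sx0 (A) (z : W d) : 0 ≤ q.Sx A z := SA_nonneg _ _ _
theorem Sx1 (A) (z : W d) : q.Sx A z ≤ 1 := SA_le_one _ _ _
theorem Sxsq (A) (z : W d) : q.Sx A z * q.Sx A z = q.Sx A z := SA_sq _ _ _
theorem y0 (z : W d) : 0 ≤ q.y z := mul_nonneg (q.Tt0 z) (q.Sx0 _ z)
theorem y1 (z : W d) : q.y z ≤ 1 := mul_le_one₀ (q.Tt1 z) (q.Sx0 _ z) (q.Sx1 _ z)
theorem ysq (z : W d) : q.y z * q.y z = q.y z := by
  unfold y; rw [mul_mul_mul_comm, q.Ttsq, q.Sxsq]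
theorem yl0 (l) (z : W d) : 0 ≤ q.yl l z := by
  have := q.mpos
  exact mul_nonneg (q.Tt0 z) (mul_nonneg (by positivity) (q.Sx0 _ z))

theorem Bd0 : 0 < prof.Bd := lt_of_lt_of_le one_pos prof.one_le

theorem g_bd (z : W d) : |q.g z| ≤ prof.Bd * q.Tt z := pr_bound (by norm_num) q.hκ _
theorem g2_bd (z : W d) : |q.g2 z| ≤ prof.Bd * q.Tt z := pr_bound (by norm_num) q.hκ _
theorem h_bd (z : W d) : |q.h z| ≤ 2 := HH_bound q.hκ _
theorem Zn_bd (a : Fin d → ℕ) (ha : ∀ l, a l ≤ 3) (z : W d) :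
    |q.Zn a z| ≤ prof.Bd ^ d * q.Sx (Finset.univ.erase q.i) z := by
  unfold Zn Sx SA
  rw [Finset.abs_prod]
  calc _ ≤ ∏ l ∈ Finset.univ.erase q.i, (prof.Bd * ind q.μ ((q.l:ℝ) * z.2 l)) :=
        Finset.prod_le_prod (fun _ _ => abs_nonneg _) (fun l _ => pr_bound (ha l) q.hμ _)
    _ = prof.Bd ^ (d-1) * ∏ l ∈ Finset.univ.erase q.i, (ind q.μ ((q.l:ℝ) * z.2 l)) := by
        rw [Finset.prod_mul_distrib, Finset.prod_const, Finset.card_erase_of_mem (Finset.mem_univ _)]; simp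
    _ ≤ _ := by
        have h0 : 0 ≤ ∏ l ∈ Finset.univ.erase q.i, (ind q.μ ((q.l:ℝ) * z.2 l)) := Finset.prod_nonneg fun _ _ => ind_nonneg _ _
        exact mul_le_mul_of_nonneg_right (pow_le_pow_right₀ prof.one_le (by omega)) h0
theorem Q_bd (l) (z : W d) : |q.Q l z| ≤ 2 * prof.Bd ^ (2 * d) * (q.μ ^ (q.Al l).card * q.Sx (q.Al l) z) := by
  unfold Q Sx SA
  rw [abs_mul, Finset.abs_prod]
  have hm := q.mpos
  have hB := Bd0
  have h1 : ∏ m ∈ q.Al l, |q.PP m z| ≤ prof.Bd ^ (2 * d) * (q.μ ^ (q.Al l).card * ∏ m ∈ q.Al l, ind q.μ ((q.l:ℝ) * z.2 m)) := by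
    calc _ ≤ ∏ m ∈ q.Al l, (prof.Bd ^ 2 * (q.μ * ind q.μ ((q.l:ℝ) * z.2 m))) := by
          refine Finset.prod_le_prod (fun _ _ => abs_nonneg _) (fun m _ => ?_)
          unfold PP
          have hb : |q.ps 1 m z| ≤ prof.Bd * ind q.μ ((q.l:ℝ) * z.2 m) := pr_bound (by norm_num) q.hμ _
          have h0 := ind_nonneg q.μ ((q.l:ℝ) * z.2 m)
          rw [abs_mul, abs_mul, abs_of_pos hm]
          calc _ ≤ q.μ * ((prof.Bd * ind q.μ ((q.l:ℝ) * z.2 m)) * (prof.Bd * ind q.μ ((q.l:ℝ) * z.2 m))) := by gcongr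
            _ = prof.Bd ^ 2 * (q.μ * (ind q.μ ((q.l:ℝ) * z.2 m) * ind q.μ ((q.l:ℝ) * z.2 m))) := by ring
            _ = _ := by rw [ind_sq]
      _ = prof.Bd ^ (2 * (q.Al l).card) * (q.μ ^ (q.Al l).card * ∏ m ∈ q.Al l, ind q.μ ((q.l:ℝ) * z.2 m)) := by
          rw [Finset.prod_mul_distrib, Finset.prod_mul_distrib, Finset.prod_const, Finset.prod_const, pow_mul]
      _ ≤ _ := by
          have : (q.Al l).card ≤ d := by simpa using Finset.card_le_univ (q.Al l)
          have h0 : 0 ≤ ∏ m ∈ q.Al l, ind q.μ ((q.l:ℝ) * z.2 m) := Finset.prod_nonneg fun _ _ => ind_nonneg _ _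
          gcongr
          exact prof.one_le
  have h2 : |q.hs l z| ≤ 2 := HH_bound q.hμ _
  have h0 : 0 ≤ ∏ m ∈ q.Al l, |q.PP m z| := Finset.prod_nonneg fun _ _ => abs_nonneg _
  calc _ ≤ (prof.Bd ^ (2 * d) * (q.μ ^ (q.Al l).card * ∏ m ∈ q.Al l, ind q.μ ((q.l:ℝ) * z.2 m))) * 2 :=
        mul_le_mul h1 h2 (abs_nonneg _) (h0.trans h1)
    _ = _ := by simp only [Pi.smul_apply, smul_eq_mul]; ring

theorem gZ_bd (a : Fin d → ℕ) (ha : ∀ l, a l ≤ 3) (z : W d) : |q.g z * q.Zn a z| ≤ Bb d * q.y z := by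
  rw [abs_mul]
  have hB := Bd0
  have := q.y0 z
  calc _ ≤ (prof.Bd * q.Tt z) * (prof.Bd ^ d * q.Sx (Finset.univ.erase q.i) z) :=
        mul_le_mul (q.g_bd z) (q.Zn_bd a ha z) (abs_nonneg _) (mul_nonneg hB.le (q.Tt0 z))
    _ = prof.Bd ^ (d+1) * q.y z := by unfold y; ring
    _ ≤ _ := by
      unfold Bb
      exact mul_le_mul_of_nonneg_right (pow_le_pow_right₀ prof.one_le (by omega)) this
theorem g2Z_bd (z : W d) : |q.g2 z * q.Z z| ≤ Bb d * q.y z := by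
  rw [abs_mul]
  have hB := Bd0
  have := q.y0 z
  calc _ ≤ (prof.Bd * q.Tt z) * (prof.Bd ^ d * q.Sx (Finset.univ.erase q.i) z) :=
        mul_le_mul (q.g2_bd z) (q.Zn_bd _ (fun l => by unfold a0; split_ifs <;> norm_num) z) (abs_nonneg _) (mul_nonneg hB.le (q.Tt0 z))
    _ = prof.Bd ^ (d+1) * q.y z := by unfold y; ring
    _ ≤ _ := by
      unfold Bb
      exact mul_le_mul_of_nonneg_right (pow_le_pow_right₀ prof.one_le (by omega)) this
theorem a0_le (l : Fin d) : q.a0 l ≤ 1 := by unfold a0; split_ifs <;> norm_num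
theorem gZ (z : W d) : |q.g z * q.Z z| ≤ Bb d * q.y z := q.gZ_bd _ (fun l => (q.a0_le l).trans (by norm_num)) z
theorem gX (z : W d) : |q.g z * q.X z| ≤ Bb d * q.y z := q.gZ_bd _ (fun l => by norm_num) z
theorem ggQ (l) (z : W d) : |q.g z * q.g z * q.Q l z| ≤ 2 * Bb d * q.yl l z := by
  rw [abs_mul, abs_mul]
  have hB := Bd0
  have h0 := q.Tt0 z
  have h1 := q.Sx0 (q.Al l) z
  have hm := q.mpos
  calc _ ≤ ((prof.Bd * q.Tt z) * (prof.Bd * q.Tt z)) * (2 * prof.Bd ^ (2 * d) * (q.μ ^ (q.Al l).card * q.Sx (q.Al l) z)) := by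
        gcongr
        · exact q.g_bd z
        · exact q.g_bd z
        · exact q.Q_bd l z
    _ = 2 * prof.Bd ^ (2*d+2) * ((q.Tt z * q.Tt z) * (q.μ ^ (q.Al l).card * q.Sx (q.Al l) z)) := by ring
    _ = _ := by rw [q.Ttsq]; rfl

theorem η_le : q.η ≤ 1 := by
  have := q.hl; have := q.hμ
  unfold η
  apply inv_le_one_of_one_le₀
  have : (1:ℝ) ≤ q.l := by exact_mod_cast q.hl
  nlinarith
theorem σi_le : (q.σ:ℝ)⁻¹ ≤ 1 := by
  apply inv_le_one_of_one_le₀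
  exact_mod_cast q.hσ

/-- common bound for all coefficients -/
structure Cb (A B ρ : W d → ℝ) (u : Fin d → W d → ℝ) (C : ℝ) : Prop where
  one : 1 ≤ C
  a : ∀ z, |A z| ≤ C
  b : ∀ z, |B z| ≤ C
  dA : ∀ k z, |dd (eS k) A z| ≤ C
  dB : ∀ k z, |dd (eS k) B z| ≤ C
  ddB : ∀ k l z, |dd (eS k) (dd (eS l) B) z| ≤ C
  tA : ∀ z, |dd eT A z| ≤ C
  f : ∀ z, |Par.f A B z| ≤ C
  df : ∀ k z, |dd (eS k) (Par.f A B) z| ≤ C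
  tf : ∀ z, |dd eT (Par.f A B) z| ≤ C
  r : ∀ z, |ρ z| ≤ C
  v : ∀ k z, |u k z| ≤ C

variable {A B ρ : W d → ℝ} {u : Fin d → W d → ℝ} {C : ℝ} 

theorem mul_bd {a b c e : ℝ} (h : |a| ≤ c) (h' : |b| ≤ e) : |a * b| ≤ c * e := by
  rw [abs_mul]; exact mul_le_mul h h' (abs_nonneg _) ((abs_nonneg _).trans h)
theorem add_bd {a b c e : ℝ} (h : |a| ≤ c) (h' : |b| ≤ e) : |a + b| ≤ c + e := (abs_add_le _ _).trans (add_le_add h h')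
theorem abs_of_nn {a : ℝ} (h : 0 ≤ a) : |a| ≤ a := (abs_of_nonneg h).le

variable (hA : SP A) (hB : SP B)

def θp (A : W d → ℝ) (z : W d) : ℝ := q.c1 * (A z * (q.g z * q.X z) + q.η * (dd (eS q.j) A z * (q.g z * q.Z z)))
def θo (A B : W d → ℝ) (z : W d) : ℝ := (q.σ : ℝ)⁻¹ * (q.h z * dd (eS q.i) (Par.f A B) z)

include hA hB in
theorem θ_split (z : W d) : q.θ A B z = q.θp A z + q.θo A B z := q.θ_eq hA hB z
theorem θp_bd (hC : Cb A B ρ u C) (z) : |q.θp A z| ≤ Bb d * (q.c1 * (q.y z * (|A z| + q.η * C))) := by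
  unfold θp
  have := q.ηpos
  refine (mul_bd (abs_of_nn q.h1.le) (add_bd (mul_bd le_rfl (q.gX z)) (mul_bd (abs_of_nn this.le) (mul_bd (hC.dA _ _) (q.gZ z))))).trans (le_of_eq ?_)
  ring
theorem θo_bd (hC : Cb A B ρ u C) (z) : |q.θo A B z| ≤ 2 * C * (q.σ:ℝ)⁻¹ := by
  unfold θo
  have := q.spos
  refine (mul_bd (abs_of_nn (inv_pos.2 this).le) (mul_bd (q.h_bd z) (hC.df _ z))).trans (le_of_eq ?_)
  ring
include hB in
theorem w_bd (hC : Cb A B ρ u C) (k z) : |q.w B k z| ≤ Bb d * (q.c2 * (q.y z * (|B z| + q.η * C))) := by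
  have := q.ηpos
  have h2 := q.h2
  have hy := q.y0 z
  have hb := one_le_Bb d
  have hc := hC.one
  by_cases h1 : k = q.i
  · subst h1
    rw [q.w_i_eq hB]
    refine (mul_bd (abs_of_nn q.h2.le) (add_bd (mul_bd le_rfl (q.gX z)) (mul_bd (abs_of_nn this.le) (mul_bd (hC.dB _ _) (q.gZ z))))).trans (le_of_eq ?_)
    ring
  by_cases h2 : k = q.j
  · subst h2
    rw [q.w_j_eq hB, neg_mul, abs_neg]
    refine (mul_bd (abs_of_nn q.h2.le) ((mul_bd (abs_of_nn this.le) (mul_bd (hC.dB _ _) (q.gZ z))))).trans ?_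
    have : 0 ≤ |B z| * (Bb d * q.c2 * q.y z) := by positivity
    nlinarith
  · rw [q.w_k_eq k h1 h2]
    simp only [abs_zero]
    positivity
end Par
end

noncomputable section
namespace Par
variable {d : ℕ} (q : Par d)
variable {A B ρ : W d → ℝ} {u : Fin d → W d → ℝ} {C : ℝ} (hA : SP A) (hB : SP B) (hC : Cb A B ρ u C)
include hC

theorem θp_bd2 (z) : |q.θp A z| ≤ 2 * C * Bb d * (q.c1 * q.y z) := by
  refine (q.θp_bd hC z).trans ?_
  have h1 := hC.a z
  have h2 := q.η_le
  have h3 := hC.one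
  have : |A z| + q.η * C ≤ 2 * C := by nlinarith
  calc _ ≤ Bb d * (q.c1 * (q.y z * (2 * C))) := by
        have := q.h1; have := q.y0 z; have := one_le_Bb d
        gcongr
    _ = _ := by ring
include hB in
theorem w_bd2 (k z) : |q.w B k z| ≤ 2 * C * Bb d * (q.c2 * q.y z) := by
  refine (q.w_bd hB hC k z).trans ?_
  have h1 := hC.b z
  have h2 := q.η_le
  have h3 := hC.one
  have : |B z| + q.η * C ≤ 2 * C := by nlinarith
  calc _ ≤ Bb d * (q.c2 * (q.y z * (2 * C))) := by
        have := q.h2; have := q.y0 z; have := one_le_Bb d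
        gcongr
    _ = _ := by ring

omit hC in
theorem k1 (hC1 : 1 ≤ C) : C ≤ C^2 * Bb d ^2 ∧ C * Bb d ≤ C^2 * Bb d ^2 ∧ C^2 ≤ C^2 * Bb d ^2 ∧ C ^ 2 * Bb d ≤ C^2 * Bb d ^2 := by
  have hb := one_le_Bb d
  have h1 : Bb d ≤ Bb d ^ 2 := by nlinarith
  have h2 : C ≤ C ^ 2 := by nlinarith
  have h3 : 1 ≤ Bb d ^ 2 := hb.trans h1
  have h4 : 0 < C^2 := by positivity
  refine ⟨by nlinarith, ?_, by nlinarith, by nlinarith⟩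
  exact mul_le_mul h2 h1 (by positivity) (by positivity)

def Ys (z : W d) : ℝ := ∑ l ∈ Finset.univ.erase q.i, q.yl l z
omit hC in
theorem yl_le (k) (hk : k ≠ q.i) (z) : q.yl k z ≤ q.Ys z :=
  Finset.single_le_sum (f := fun l => q.yl l z) (fun l _ => q.yl0 l z) (by simp [hk])
omit hC in
theorem Ys0 (z) : 0 ≤ q.Ys z := Finset.sum_nonneg fun l _ => q.yl0 l z

include hA hB in
theorem rest_bd (k z) : |q.θp A z * q.w B k z + (q.fi A B k z + (q.T A B k z + q.V A B k z))| ≤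
    C^2 * Bb d ^2 * (3 * (q.c1 * q.c2 * q.η * q.y z) + 2 * (q.σ:ℝ)⁻¹ + 2 * (q.c1 * q.η * q.σ * q.κ * q.y z)
      + 2 * ((q.l:ℝ)⁻¹ * q.κ * q.Ys z)) := by
  have hη := q.ηpos
  have hη1 := q.η_le
  have hc1 := q.h1
  have hc2 := q.h2
  have hσ := q.spos
  have hl := q.lpos
  have hκ := q.kpos
  have hy := q.y0 z
  have hb := one_le_Bb d
  have hC1 := hC.one
  have hYs := q.Ys0 z
  obtain ⟨k1, k2, k3, k4⟩ := k1 (d := d) hC1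
  have hσ1 : (1:ℝ) ≤ q.σ := by exact_mod_cast q.hσ
  have n1 : 0 ≤ C^2 * Bb d ^2 * (q.c1 * q.c2 * q.η * q.y z) := by positivity
  have n2 : 0 ≤ C^2 * Bb d ^2 * (q.σ:ℝ)⁻¹ := by positivity
  have n3 : 0 ≤ C^2 * Bb d ^2 * (q.c1 * q.η * q.σ * q.κ * q.y z) := by positivity
  have n4 : 0 ≤ C^2 * Bb d ^2 * ((q.l:ℝ)⁻¹ * q.κ * q.Ys z) := by positivity
  have hV : ∀ k, k ≠ q.i → |q.V A B k z| ≤ C^2 * Bb d ^2 * (2 * ((q.l:ℝ)⁻¹ * q.κ * q.Ys z)) := by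
    intro k hk
    rw [q.V_k_eq hA hB k hk, abs_neg]
    refine (mul_bd (abs_of_nn (by positivity)) (mul_bd (hC.df _ z) (q.ggQ k z))).trans ?_
    have := q.yl_le k hk z
    have h0 := q.yl0 k z
    calc _ = (C * Bb d) * (2 * ((q.l:ℝ)⁻¹ * q.κ * q.yl k z)) := by ring
      _ ≤ _ := by gcongr
  by_cases hi : k = q.i
  · subst hi
    have e : q.θp A z * q.w B q.i z + (q.fi A B q.i z + (q.T A B q.i z + q.V A B q.i z)) =
      q.c1 * q.c2 * (q.η * (A z * dd (eS q.j) B z * ((q.g z * q.X z) * (q.g z * q.Z z)))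
         + q.η * (dd (eS q.j) A z * B z * ((q.g z * q.X z) * (q.g z * q.Z z)))
         + q.η * q.η * (dd (eS q.j) A z * dd (eS q.j) B z * ((q.g z * q.Z z) * (q.g z * q.Z z))))
      + (q.σ : ℝ)⁻¹ * (q.h z * dd eT (f A B) z)
      + ((q.l : ℝ)⁻¹ * q.κ) * ∑ l ∈ Finset.univ.erase q.i, dd (eS l) (f A B) z * (q.g z * q.g z * q.Q l z) := by
      rw [q.w_i_eq hB, q.T_i_eq hA hB, q.V_i_eq hA hB]
      have hf : q.fi A B q.i z = f A B z := by simp [fi]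
      rw [hf]
      have hf2 : f A B z = -(A z * B z) := rfl
      rw [hf2]
      unfold θp
      linear_combination (q.g z ^2 * A z * B z * q.X z ^2) * q.hc
    rw [e]
    have b3 : |∑ l ∈ Finset.univ.erase q.i, dd (eS l) (f A B) z * (q.g z * q.g z * q.Q l z)| ≤ C * (2 * Bb d) * q.Ys z := by
      refine (Finset.abs_sum_le_sum_abs _ _).trans ?_
      unfold Ys
      rw [Finset.mul_sum]
      refine Finset.sum_le_sum fun l _ => ?_
      refine (mul_bd (hC.df _ z) (q.ggQ l z)).trans (le_of_eq (by ring))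
    have gx := q.gX z
    have gz := q.gZ z
    have t1 := add_bd (add_bd (mul_bd (abs_of_nn hη.le) (mul_bd (mul_bd (hC.a z) (hC.dB q.j z)) (mul_bd gx gz)))
      (mul_bd (abs_of_nn hη.le) (mul_bd (mul_bd (hC.dA q.j z) (hC.b z)) (mul_bd gx gz))))
      (mul_bd (abs_of_nn (mul_pos hη hη).le) (mul_bd (mul_bd (hC.dA q.j z) (hC.dB q.j z)) (mul_bd gz gz)))
    have t2 := mul_bd (abs_of_nn (mul_pos hc1 hc2).le) t1
    have t3 := mul_bd (abs_of_nn (inv_pos.2 hσ).le) (mul_bd (q.h_bd z) (hC.tf z))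
    have t4 := mul_bd (abs_of_nn (mul_pos (inv_pos.2 hl) hκ).le) b3
    refine (add_bd (add_bd t2 t3) t4).trans ?_
    have s1 : q.c1 * q.c2 * (q.η * (C * C * (Bb d * q.y z * (Bb d * q.y z))) + q.η * (C * C * (Bb d * q.y z * (Bb d * q.y z)))
       + q.η * q.η * (C * C * (Bb d * q.y z * (Bb d * q.y z)))) ≤ 3 * (C^2 * Bb d ^2 * (q.c1 * q.c2 * q.η * q.y z)) := by
      have e : Bb d * q.y z * (Bb d * q.y z) = Bb d ^ 2 * q.y z := by
        rw [mul_mul_mul_comm, q.ysq]; ring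
      rw [e]
      have : q.η * q.η ≤ q.η * 1 := by gcongr
      calc _ ≤ q.c1 * q.c2 * (q.η * (C * C * (Bb d ^ 2 * q.y z)) + q.η * (C * C * (Bb d ^ 2 * q.y z))
       + q.η * 1 * (C * C * (Bb d ^ 2 * q.y z))) := by gcongr
        _ = _ := by ring
    have s2 : (q.σ:ℝ)⁻¹ * (2 * C) ≤ 2 * (C^2 * Bb d ^2 * (q.σ:ℝ)⁻¹) := by
      calc _ = 2 * (C * (q.σ:ℝ)⁻¹) := by ring
        _ ≤ _ := by gcongr
    have s3 : (q.l:ℝ)⁻¹ * q.κ * (C * (2 * Bb d) * q.Ys z) ≤ 2 * (C^2 * Bb d ^2 * ((q.l:ℝ)⁻¹ * q.κ * q.Ys z)) := by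
      calc _ = 2 * ((C * Bb d) * ((q.l:ℝ)⁻¹ * q.κ * q.Ys z)) := by ring
        _ ≤ _ := by gcongr
    linarith
  have hfi : q.fi A B k z = 0 := by simp [fi, hi]
  by_cases hj : k = q.j
  · subst hj
    rw [hfi, q.T_j_eq hA, q.w_j_eq hB]
    have t1 : |q.θp A z * (-q.c2 * (q.η * (dd (eS q.i) B z * (q.g z * q.Z z))))| ≤ 2 * (C^2 * Bb d ^2 * (q.c1 * q.c2 * q.η * q.y z)) := by
      rw [neg_mul, mul_neg, abs_neg]
      refine (mul_bd (q.θp_bd2 hC z) (mul_bd (abs_of_nn hc2.le) (mul_bd (abs_of_nn hη.le) (mul_bd (hC.dB _ z) (q.gZ z))))).trans (le_of_eq ?_)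
      have e := q.ysq z
      linear_combination (2 * C^2 * Bb d^2 * q.c1 * q.c2 * q.η) * e
    have t2 : |(q.c1 * q.η) * (q.σ * q.κ * (A z * (q.g2 z * q.Z z)) + dd eT A z * (q.g z * q.Z z))| ≤ 2 * (C^2 * Bb d ^2 * (q.c1 * q.η * q.σ * q.κ * q.y z)) := by
      refine (mul_bd (abs_of_nn (mul_pos hc1 hη).le) (add_bd (mul_bd (abs_of_nn (mul_pos hσ hκ).le) (mul_bd (hC.a z) (q.g2Z_bd z))) (mul_bd (hC.tA z) (q.gZ z)))).trans ?_
      have h1 : 1 ≤ q.σ * q.κ := by nlinarith [q.hκ]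
      calc _ ≤ q.c1 * q.η * (q.σ * q.κ * (C * (Bb d * q.y z)) + (q.σ * q.κ) * (C * (Bb d * q.y z))) := by
            have h2 : C * (Bb d * q.y z) ≤ (q.σ * q.κ) * (C * (Bb d * q.y z)) := le_mul_of_one_le_left (by positivity) h1
            exact mul_le_mul_of_nonneg_left (by linarith) (by positivity)
        _ = 2 * ((C * Bb d) * (q.c1 * q.η * q.σ * q.κ * q.y z)) := by ring
        _ ≤ _ := by gcongr
    refine (add_bd t1 (add_bd (a := 0) (c := 0) (by simp) (add_bd t2 (hV q.j hi)))).trans ?_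
    linarith
  · rw [hfi, q.T_k_eq k hi hj, q.w_k_eq k hi hj]
    simp only [mul_zero, zero_add]
    refine (hV k hi).trans ?_
    linarith

/-- envelope for `E` -/
def Eenv (z : W d) : ℝ := q.c1 * q.y z + q.c2 * q.y z + (q.σ:ℝ)⁻¹ + q.c1 * q.c2 * q.η * q.y z
  + q.c1 * q.η * q.σ * q.κ * q.y z + (q.l:ℝ)⁻¹ * q.κ * q.Ys z

include hA hB in
theorem E_bd (k z) : |q.E A B ρ u k z| ≤ 10 * (C^2 * Bb d ^2) * q.Eenv z := by
  have hη := q.ηpos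
  have hc1 := q.h1
  have hc2 := q.h2
  have hσ := q.spos
  have hl := q.lpos
  have hκ := q.kpos
  have hy := q.y0 z
  have hb := one_le_Bb d
  have hC1 := hC.one
  have hYs := q.Ys0 z
  obtain ⟨k1, k2, k3, k4⟩ := k1 (d := d) hC1
  have hσ1 : (q.σ:ℝ)⁻¹ ≤ 1 := q.σi_le
  have n0 : 0 ≤ C^2 * Bb d ^2 := by positivity
  have n1 : 0 ≤ C^2 * Bb d ^2 * (q.c1 * q.c2 * q.η * q.y z) := by positivity
  have n2 : 0 ≤ C^2 * Bb d ^2 * (q.σ:ℝ)⁻¹ := by positivity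
  have n3 : 0 ≤ C^2 * Bb d ^2 * (q.c1 * q.η * q.σ * q.κ * q.y z) := by positivity
  have n4 : 0 ≤ C^2 * Bb d ^2 * ((q.l:ℝ)⁻¹ * q.κ * q.Ys z) := by positivity
  have n5 : 0 ≤ C^2 * Bb d ^2 * (q.c1 * q.y z) := by positivity
  have n6 : 0 ≤ C^2 * Bb d ^2 * (q.c2 * q.y z) := by positivity
  have e : q.E A B ρ u k z = q.θp A z * u k z + q.θo A B z * u k z + ρ z * q.w B k z + q.θo A B z * q.w B k z
      + (q.θp A z * q.w B k z + (q.fi A B k z + (q.T A B k z + q.V A B k z))) := by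
    unfold E F
    rw [q.θ_split hA hB]; ring
  rw [e]
  have b1 := mul_bd (q.θp_bd2 hC z) (hC.v k z)
  have b2 := mul_bd (q.θo_bd hC z) (hC.v k z)
  have b3 := mul_bd (hC.r z) (q.w_bd2 hB hC k z)
  have b4 := mul_bd (q.θo_bd hC z) (q.w_bd2 hB hC k z)
  refine (add_bd (add_bd (add_bd (add_bd b1 b2) b3) b4) (q.rest_bd hA hB hC k z)).trans ?_
  have s1 : 2 * C * Bb d * (q.c1 * q.y z) * C ≤ 2 * (C^2 * Bb d ^2 * (q.c1 * q.y z)) := by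
    calc _ = 2 * (C^2 * Bb d * (q.c1 * q.y z)) := by ring
      _ ≤ _ := by gcongr
  have s2 : 2 * C * (q.σ:ℝ)⁻¹ * C ≤ 2 * (C^2 * Bb d ^2 * (q.σ:ℝ)⁻¹) := by
    calc _ = 2 * (C^2 * (q.σ:ℝ)⁻¹) := by ring
      _ ≤ _ := by gcongr
  have s3 : C * (2 * C * Bb d * (q.c2 * q.y z)) ≤ 2 * (C^2 * Bb d ^2 * (q.c2 * q.y z)) := by
    calc _ = 2 * (C^2 * Bb d * (q.c2 * q.y z)) := by ring
      _ ≤ _ := by gcongr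
  have s4 : 2 * C * (q.σ:ℝ)⁻¹ * (2 * C * Bb d * (q.c2 * q.y z)) ≤ 4 * (C^2 * Bb d ^2 * (q.c2 * q.y z)) := by
    calc _ ≤ 2 * C * 1 * (2 * C * Bb d * (q.c2 * q.y z)) := by gcongr
      _ = 4 * (C^2 * Bb d * (q.c2 * q.y z)) := by ring
      _ ≤ _ := by gcongr
  unfold Eenv
  linarith

include hB in
theorem dw_bd (k l z) : |dd (eS l) (q.w B k) z| ≤ 4 * C * Bb d * (q.c2 * (q.l * q.μ) * q.y z) := by
  have hη := q.ηpos
  have hη1 := q.η_le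
  have hc2 := q.h2
  have hl := q.lpos
  have hm := q.mpos
  have hy := q.y0 z
  have hb := one_le_Bb d
  have hC1 := hC.one
  have hlm : 1 ≤ q.l * q.μ := by
    have h1 : (1:ℝ) ≤ q.l := by exact_mod_cast q.hl
    nlinarith [q.hμ]
  have hZ : ∀ a : Fin d → ℕ, (∀ l, a l ≤ 1) → |q.g z * dd (eS l) (q.Zn a) z| ≤ (q.l * q.μ) * (Bb d * q.y z) := by
    intro a ha
    rw [dd_Zn]
    simp only
    split_ifs
    · simp; positivity
    · rw [mul_left_comm]
      refine mul_bd (abs_of_nn (by positivity)) (q.gZ_bd _ (fun m => ?_) z)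
      by_cases h : m = l
      · subst h; rw [Function.update_self]; have := ha m; omega
      · rw [Function.update_of_ne h]; have := ha m; omega
  have hZ1 := hZ q.a0 q.a0_le
  have hX1 := hZ (fun _ => 1) (fun _ => le_rfl)
  have key : ∀ m, |dd (eS l) (fun z => q.η * (q.g z * (dd (eS m) B z * q.Z z))) z| ≤ 2 * C * Bb d * ((q.l * q.μ) * q.y z) := by
    intro m
    rw [dd_cmul _ _ (q.g_sp.mul ((hB.dd _).mul q.Z_sp)), dd_mul _ q.g_sp ((hB.dd _).mul q.Z_sp),
      dd_mul _ (hB.dd _) q.Z_sp, dd_g, eS1]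
    have e : q.η * (0 * ((q.σ:ℝ) * (q.κ * q.g2 z)) * (dd (eS m) B z * q.Z z) +
        q.g z * (dd (eS l) (dd (eS m) B) z * q.Z z + dd (eS m) B z * dd (eS l) q.Z z)) =
        q.η * (dd (eS l) (dd (eS m) B) z * (q.g z * q.Z z) + dd (eS m) B z * (q.g z * dd (eS l) (q.Zn q.a0) z)) := by
      unfold Z; ring
    simp only
    rw [e]
    refine (mul_bd (c := 1) (by rw [abs_of_pos hη]; exact hη1) (add_bd (mul_bd (hC.ddB _ _ z) (q.gZ z)) (mul_bd (hC.dB m z) hZ1))).trans ?_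
    calc _ = C * (1 * (Bb d * q.y z)) + C * (q.l * q.μ * (Bb d * q.y z)) := by ring
      _ ≤ C * (q.l * q.μ * (Bb d * q.y z)) + C * (q.l * q.μ * (Bb d * q.y z)) := by gcongr
      _ = _ := by ring
  by_cases hi : k = q.i
  · subst hi
    have e : q.w B q.i = fun z => q.c2 * (q.g z * (B z * q.X z) + q.η * (q.g z * (dd (eS q.j) B z * q.Z z))) := by
      funext z; rw [q.w_i_eq hB]; ring
    have sp1 : SP (fun z => q.g z * (B z * q.X z)) := q.g_sp.mul (hB.mul q.X_sp)
    have sp2 : SP (fun z => q.η * (q.g z * (dd (eS q.j) B z * q.Z z))) := SP.cmul _ (q.g_sp.mul ((hB.dd _).mul q.Z_sp))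
    rw [e, dd_cmul _ _ (sp1.add sp2), dd_add _ sp1 sp2]
    have k2 : |dd (eS l) (fun z => q.g z * (B z * q.X z)) z| ≤ 2 * C * Bb d * ((q.l * q.μ) * q.y z) := by
      rw [dd_mul _ q.g_sp (hB.mul q.X_sp), dd_mul _ hB q.X_sp, dd_g, eS1]
      have e : 0 * ((q.σ:ℝ) * (q.κ * q.g2 z)) * (B z * q.X z) +
        q.g z * (dd (eS l) B z * q.X z + B z * dd (eS l) q.X z) =
        (dd (eS l) B z * (q.g z * q.X z) + B z * (q.g z * dd (eS l) (q.Zn (fun _ => 1)) z)) := by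
        unfold X; ring
      simp only
      rw [e]
      refine (add_bd (mul_bd (hC.dB _ z) (q.gX z)) (mul_bd (hC.b z) hX1)).trans ?_
      calc _ = C * (1 * (Bb d * q.y z)) + C * (q.l * q.μ * (Bb d * q.y z)) := by ring
        _ ≤ C * (q.l * q.μ * (Bb d * q.y z)) + C * (q.l * q.μ * (Bb d * q.y z)) := by gcongr
        _ = _ := by ring
    refine (mul_bd (abs_of_nn hc2.le) (add_bd k2 (key q.j))).trans (le_of_eq (by ring))
  by_cases hj : k = q.j
  · subst hj
    have e : q.w B q.j = fun z => -q.c2 * (q.η * (q.g z * (dd (eS q.i) B z * q.Z z))) := by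
      funext z; rw [q.w_j_eq hB]; ring
    have sp2 : SP (fun z => q.η * (q.g z * (dd (eS q.i) B z * q.Z z))) := SP.cmul _ (q.g_sp.mul ((hB.dd _).mul q.Z_sp))
    rw [e, dd_cmul _ _ sp2]
    simp only
    rw [neg_mul, abs_neg]
    refine (mul_bd (abs_of_nn hc2.le) (key q.i)).trans ?_
    have : 0 ≤ C * Bb d * (q.c2 * (q.l * q.μ) * q.y z) := by positivity
    linarith
  · have e : q.w B k = fun _ => 0 := by funext z; exact q.w_k_eq k hi hj z
    rw [e, dd_const]
    simp; positivity

theorem Pθ_bd (z) : |q.Pθ A z| ≤ C * Bb d * (q.c1 * q.η * q.y z) := by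
  unfold Pθ
  have hη := q.ηpos
  have hc1 := q.h1
  rw [mul_left_comm (q.g z)]
  exact (mul_bd (abs_of_nn (mul_pos hc1 hη).le) (mul_bd (hC.a z) (q.gZ z))).trans (le_of_eq (by ring))
theorem Po_bd (z) : |q.Po A B z| ≤ 2 * C * (q.σ:ℝ)⁻¹ := by
  unfold Po
  have hσ := q.spos
  exact (mul_bd (abs_of_nn (inv_pos.2 hσ).le) (mul_bd (q.h_bd z) (hC.f z))).trans (le_of_eq (by ring))

omit hC
include hA hB in
theorem exists_Cb (hρ : SP ρ) (hu : ∀ k, SP (u k)) : ∃ C, Cb A B ρ u C := by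
  have bA := hA.bdd
  have bB := hB.bdd
  have bdA := fun k => (hA.dd (eS k)).bdd
  have bdB := fun k => (hB.dd (eS k)).bdd
  have bddB := fun k l => ((hB.dd (eS l)).dd (eS k)).bdd
  have btA := (hA.dd eT).bdd
  have hf := f_sp hA hB
  have bf := hf.bdd
  have bdf := fun k => (hf.dd (eS k)).bdd
  have btf := (hf.dd eT).bdd
  have bρ := hρ.bdd
  have bu := fun k => (hu k).bdd
  obtain ⟨cA, pA, bA⟩ := bA
  obtain ⟨cB, pB, bB⟩ := bB
  choose cdA pdA bdA using bdA
  choose cdB pdB bdB using bdB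
  choose cddB pddB bddB using bddB
  obtain ⟨ctA, ptA, btA⟩ := btA
  obtain ⟨cf, pf, bf⟩ := bf
  choose cdf pdf bdf using bdf
  obtain ⟨ctf, ptf, btf⟩ := btf
  obtain ⟨cr, pr', br⟩ := bρ
  choose cu pu bu using bu
  have s1 : ∀ (c : Fin d → ℝ), (∀ k, 0 < c k) → ∀ k, c k ≤ ∑ k, c k := fun c hc k =>
    Finset.single_le_sum (fun l _ => (hc l).le) (Finset.mem_univ k)
  have s0 : ∀ (c : Fin d → ℝ), (∀ k, 0 < c k) → 0 ≤ ∑ k, c k := fun c hc => Finset.sum_nonneg fun l _ => (hc l).le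
  have p1 := s0 _ pdA
  have p2 := s0 _ pdB
  have p3 := s0 _ pdf
  have p4 := s0 _ pu
  have p5 : 0 ≤ ∑ k, ∑ l, cddB k l := Finset.sum_nonneg fun k _ => s0 _ (pddB k)
  refine ⟨1 + cA + cB + ctA + cf + ctf + cr + (∑ k, cdA k) + (∑ k, cdB k) + (∑ k, cdf k) + (∑ k, cu k) + ∑ k, ∑ l, cddB k l, ?_⟩
  constructor
  · linarith
  · intro z; linarith [bA z]
  · intro z; linarith [bB z]
  · intro k z; linarith [bdA k z, s1 _ pdA k]
  · intro k z; linarith [bdB k z, s1 _ pdB k]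
  · intro k l z
    have h1 := s1 _ (pddB k) l
    have h2 : ∑ l, cddB k l ≤ ∑ k, ∑ l, cddB k l := Finset.single_le_sum (f := fun k => ∑ l, cddB k l) (fun l _ => s0 _ (pddB l)) (Finset.mem_univ k)
    linarith [bddB k l z]
  · intro z; linarith [btA z]
  · intro z; linarith [bf z]
  · intro k z; linarith [bdf k z, s1 _ pdf k]
  · intro z; linarith [btf z]
  · intro z; linarith [br z]
  · intro k z; linarith [bu k z, s1 _ pu k]
end Par
end

theorem nn_eq {E : Type*} [NormedAddCommGroup E] (v : E) : ((‖v‖₊ : NNReal) : ℝ≥0∞) = ENNReal.ofReal ‖v‖ := by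
  rw [← coe_nnnorm, ENNReal.ofReal_coe_nnreal]

theorem eLpGen_mono {α : Type*} [MeasurableSpace α] (μ : Measure α) (p : ℝ≥0∞)
    {g g' : α → ℝ≥0∞} (h : ∀ a, g a ≤ g' a) : eLpGen μ p g ≤ eLpGen μ p g' := by
  unfold eLpGen
  split_ifs
  · exact essSup_mono_ae (ae_of_all _ h)
  · gcongr with a
    exact h a

theorem spLp_mono {d : ℕ} {E E' : Type*} [NormedAddCommGroup E] [NormedAddCommGroup E'] (p : ℝ≥0∞)
    {f : Vec d → E} {f' : Vec d → E'} (h : ∀ x, ‖f x‖ ≤ ‖f' x‖) : spLp p f ≤ spLp p f' := by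
  unfold spLp
  refine eLpGen_mono _ _ fun x => ?_
  exact_mod_cast h x

theorem LsLpT_mono {d : ℕ} {E E' : Type*} [NormedAddCommGroup E] [NormedAddCommGroup E'] (T : ℝ) (s p : ℝ≥0∞)
    {f : ℝ → Vec d → E} {f' : ℝ → Vec d → E'} (h : ∀ t x, ‖f t x‖ ≤ ‖f' t x‖) : LsLpT T s p f ≤ LsLpT T s p f' := by
  unfold LsLpT
  exact eLpGen_mono _ _ fun t => spLp_mono p (h t)

theorem spLp_add {d : ℕ} {E : Type*} [NormedAddCommGroup E] {p : ℝ≥0∞} (hp : 1 ≤ p)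
    {f g : Vec d → E} (hf : AEStronglyMeasurable f (volume.restrict (fundCube d)))
    (hg : AEStronglyMeasurable g (volume.restrict (fundCube d))) :
    spLp p (fun x => f x + g x) ≤ spLp p f + spLp p g := by
  have h0 : p ≠ 0 := (zero_lt_one.trans_le hp).ne'
  rw [spLp_eq h0, spLp_eq h0, spLp_eq h0]
  exact eLpNorm_add_le hf hg hp

theorem spLp_const {d : ℕ} {E : Type*} [NormedAddCommGroup E] {p : ℝ≥0∞} (hp : 1 ≤ p) (c : E) :
    spLp p (fun _ : Vec d => c) = ENNReal.ofReal ‖c‖ := by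
  have h0 : p ≠ 0 := (zero_lt_one.trans_le hp).ne'
  rw [spLp_eq h0, eLpNorm_const _ h0 (by exact NeZero.ne _)]
  simp

theorem gen_add {α : Type*} [MeasurableSpace α] (μ : Measure α) {p : ℝ≥0∞} (hp : 1 ≤ p)
    {g g' : α → ℝ≥0∞} (hg : Measurable g) (hg' : Measurable g') :
    eLpGen μ p (fun t => g t + g' t) ≤ eLpGen μ p g + eLpGen μ p g' := by
  have h0 : p ≠ 0 := (zero_lt_one.trans_le hp).ne'
  rw [eLpGen_eq _ h0, eLpGen_eq _ h0, eLpGen_eq _ h0]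
  exact eLpNorm_add_le hg.aestronglyMeasurable hg'.aestronglyMeasurable hp

theorem gen_const {α : Type*} [MeasurableSpace α] (μ : Measure α) [IsProbabilityMeasure μ] {p : ℝ≥0∞} (hp : 1 ≤ p) (c : ℝ≥0∞) :
    eLpGen μ p (fun _ => c) = c := by
  have h0 : p ≠ 0 := (zero_lt_one.trans_le hp).ne'
  unfold eLpGen
  split_ifs with h
  · rw [essSup_const]; exact NeZero.ne _
  · have : 0 < p.toReal := ENNReal.toReal_pos h0 h
    rw [lintegral_const]
    simp [← ENNReal.rpow_mul, mul_inv_cancel₀ this.ne']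

theorem gen_cmul {α : Type*} [MeasurableSpace α] (μ : Measure α) {p : ℝ≥0∞} (hp : 1 ≤ p) (c : ℝ≥0∞) (hc : c ≠ ∞) (g : α → ℝ≥0∞) :
    eLpGen μ p (fun t => c * g t) = c * eLpGen μ p g := by
  have h0 : p ≠ 0 := (zero_lt_one.trans_le hp).ne'
  unfold eLpGen
  split_ifs with h
  · exact ENNReal.essSup_const_mul
  · have hp : 0 < p.toReal := ENNReal.toReal_pos h0 h
    simp_rw [ENNReal.mul_rpow_of_nonneg _ _ hp.le]
    rw [lintegral_const_mul' _ _ (by simp [hc]), ENNReal.mul_rpow_of_nonneg _ _ (by positivity)]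
    rw [← ENNReal.rpow_mul]; simp [mul_inv_cancel₀ hp.ne']

theorem conc_abs {α : Type*} [MeasurableSpace α] (μ : Measure α) {r : ℝ} (hr : 1 ≤ r) {G b b2 : α → ℝ≥0∞} {S : α → ℝ}
    (hS : ∀ x, S x * S x = S x) {Nn : ℝ} (hN : 0 < Nn) {a : ℝ≥0∞} (ha : a ≠ ∞)
    (hint : ∫⁻ x, b x ^ r * ENNReal.ofReal (S x) ∂μ ≤ (∫⁻ x, b2 x ^ r ∂μ) * ENNReal.ofReal (Nn⁻¹))
    (hG : ∀ x, G x ≤ a * (ENNReal.ofReal (Nn ^ (1/r)) * (ENNReal.ofReal (S x) * b x))) :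
    eLpGen μ (ENNReal.ofReal r) G ≤ a * eLpGen μ (ENNReal.ofReal r) b2 := by
  unfold eLpGen
  have hr0 : 0 < r := by linarith
  rw [if_neg ofReal_ne_top, if_neg ofReal_ne_top, ENNReal.toReal_ofReal hr0.le]
  have h1 : ∫⁻ x, G x ^ r ∂μ ≤ a ^ r * ∫⁻ x, b2 x ^ r ∂μ := by
    calc _ ≤ ∫⁻ x, (a ^ r * ENNReal.ofReal Nn) * (b x ^ r * ENNReal.ofReal (S x)) ∂μ := by
          refine lintegral_mono fun x => ?_
          calc G x ^ r ≤ (a * (ENNReal.ofReal (Nn ^ (1/r)) * (ENNReal.ofReal (S x) * b x))) ^ r := by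
                gcongr; exact hG x
            _ = _ := by
              rw [ENNReal.mul_rpow_of_nonneg _ _ hr0.le, ENNReal.mul_rpow_of_nonneg _ _ hr0.le, ENNReal.mul_rpow_of_nonneg _ _ hr0.le]
              rw [ENNReal.ofReal_rpow_of_pos (Real.rpow_pos_of_pos hN _), ← Real.rpow_mul hN.le, one_div, inv_mul_cancel₀ hr0.ne', Real.rpow_one]
              have : ENNReal.ofReal (S x) ^ r = ENNReal.ofReal (S x) := by
                have h := hS x
                have : S x = 0 ∨ S x = 1 := by
                  rcases eq_or_ne (S x) 0 with h0 | h0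
                  · exact Or.inl h0
                  · exact Or.inr (mul_left_cancel₀ h0 (by rw [h, mul_one]))
                rcases this with h | h <;> simp [h, hr0]
              rw [this]; ring
      _ = (a ^ r * ENNReal.ofReal Nn) * ∫⁻ x, (b x ^ r * ENNReal.ofReal (S x)) ∂μ := by
          rw [lintegral_const_mul']
          exact ENNReal.mul_ne_top (by simp [ha, hr0.le]) ofReal_ne_top
      _ ≤ (a ^ r * ENNReal.ofReal Nn) * ((∫⁻ x, b2 x ^ r ∂μ) * ENNReal.ofReal (Nn⁻¹)) := by gcongr
      _ = a ^ r * (∫⁻ x, b2 x ^ r ∂μ) * (ENNReal.ofReal Nn * ENNReal.ofReal (Nn⁻¹)) := by ring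
      _ = _ := by
          rw [← ENNReal.ofReal_mul hN.le, mul_inv_cancel₀ hN.ne']; simp
  calc _ ≤ (a ^ r * ∫⁻ x, b2 x ^ r ∂μ) ^ (1/r) := by gcongr
    _ = _ := by
      rw [ENNReal.mul_rpow_of_nonneg _ _ (by positivity), ← ENNReal.rpow_mul]
      simp [mul_inv_cancel₀ hr0.ne']

theorem spLp_meas {d : ℕ} {E : Type*} [NormedAddCommGroup E] {r : ℝ} (hr : 1 ≤ r) {F : ℝ → Vec d → E}
    (hF : Continuous (Function.uncurry F)) : Measurable (fun t => spLp (ENNReal.ofReal r) (F t)) := by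
  unfold spLp eLpGen
  simp only [ofReal_ne_top, if_false]
  refine Measurable.pow_const ?_ _
  refine Measurable.lintegral_prod_right' (f := fun z : ℝ × Vec d => (‖F z.1 z.2‖₊ : ℝ≥0∞) ^ (ENNReal.ofReal r).toReal) ?_
  refine Measurable.pow_const ?_ _
  have : Continuous fun z : ℝ × Vec d => (‖F z.1 z.2‖₊ : ℝ≥0∞) := ENNReal.continuous_coe.comp hF.nnnorm
  exact this.measurable

theorem spLp_add_const {d : ℕ} {r : ℝ} (hr : 1 ≤ r) {f : Vec d → ℝ} (hf : Continuous f) {ε : ℝ} (hε : 0 ≤ ε) :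
    spLp (ENNReal.ofReal r) (fun x => |f x| + ε) ≤ spLp (ENNReal.ofReal r) f + ENNReal.ofReal ε := by
  have hr' : 1 ≤ ENNReal.ofReal r := by simpa using hr
  refine (spLp_add hr' (f := fun x => |f x|) (g := fun _ => ε) hf.abs.aestronglyMeasurable aestronglyMeasurable_const).trans ?_
  rw [spLp_const hr', Real.norm_of_nonneg hε]
  gcongr
  exact spLp_mono _ fun x => by simp

theorem conc_space {d : ℕ} (q : Par d) {r : ℝ} (hr : 1 ≤ r) {E : Type*} [NormedAddCommGroup E] {F : W d → ℝ} (hF : SP F) {ε : ℝ} (hε : 0 ≤ ε)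
    (hl : ∀ t x (z : Vec d), ‖z‖ ≤ 1 → |F (t, x + (q.l:ℝ)⁻¹ • z)| ≤ |F (t,x)| + ε) (t : ℝ) {G : Vec d → E} {a : ℝ} (ha : 0 ≤ a)
    (hG : ∀ x, ‖G x‖ ≤ a * ((q.μ ^ (d-1)) ^ (1/r) * (q.Sx (Finset.univ.erase q.i) (t,x) * (|F (t,x)| + ε)))) :
    spLp (ENNReal.ofReal r) G ≤ ENNReal.ofReal a * (spLp (ENNReal.ofReal r) (fun x => F (t,x)) + ENNReal.ofReal (2 * ε)) := by
  have hm := q.mpos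
  have hr0 : 0 < r := by linarith
  have hFc : Continuous fun x => F (t, x) := hF.cont.comp (by fun_prop)
  have hS := fun x : Vec d => q.Sxsq (Finset.univ.erase q.i) (t, x)
  have h := conc_abs (volume.restrict (fundCube d)) hr (G := fun x => (‖G x‖₊ : ℝ≥0∞)) (b := fun x => ENNReal.ofReal (|F (t,x)| + ε))
    (b2 := fun x => ENNReal.ofReal (|F (t,x)| + 2 * ε)) hS (Nn := q.μ ^ (d-1)) (by positivity) (a := ENNReal.ofReal a) ofReal_ne_top ?_ ?_
  · have e : eLpGen (volume.restrict (fundCube d)) (ENNReal.ofReal r) (fun x => ENNReal.ofReal (|F (t,x)| + 2 * ε)) =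
        spLp (ENNReal.ofReal r) (fun x => |F (t,x)| + 2 * ε) := by
      unfold spLp
      congr 1
      funext x
      rw [nn_eq, Real.norm_of_nonneg (by positivity)]
    rw [e] at h
    refine h.trans ?_
    gcongr
    exact spLp_add_const hr hFc (by positivity)
  · have hc := avg_space (Finset.univ.erase q.i) q.hμ q.hl (fun x => ENNReal.ofReal (|F (t,x)| + ε) ^ r)
      (fun x => ENNReal.ofReal (|F (t,x)| + 2 * ε) ^ r) ?_ ?_ ?_ ?_
    · rw [Finset.card_erase_of_mem (Finset.mem_univ _), Finset.card_univ, Fintype.card_fin, inv_pow] at hc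
      exact hc
    · exact (hFc.abs.add continuous_const).measurable.ennreal_ofReal.pow_const _
    · exact (hFc.abs.add continuous_const).measurable.ennreal_ofReal.pow_const _
    · intro x k; simp only; rw [hF.px]
    · intro x z hz
      gcongr ENNReal.ofReal ?_ ^ r
      linarith [hl t x z hz]
  · intro x
    have h1 := hG x
    have := q.Sx0 (Finset.univ.erase q.i) (t,x)
    rw [← ENNReal.ofReal_mul (by assumption), ← ENNReal.ofReal_mul (by positivity), ← ENNReal.ofReal_mul ha]
    rw [nn_eq]
    exact ENNReal.ofReal_le_ofReal h1

theorem conc {d : ℕ} (q : Par d) {r : ℝ} (hr : 1 ≤ r) {e : ℝ≥0∞} (he : 1 ≤ e) {E : Type*} [NormedAddCommGroup E] {F : W d → ℝ} (hF : SP F) {ε : ℝ} (hε : 0 ≤ ε)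
    (hl : ∀ t x (z : Vec d), ‖z‖ ≤ 1 → |F (t, x + (q.l:ℝ)⁻¹ • z)| ≤ |F (t,x)| + ε)
    (hσ : ∀ t x (z : ℝ), |z| ≤ 1 → |F (t + (q.σ:ℝ)⁻¹ * z, x)| ≤ |F (t,x)| + ε) {G : ℝ → Vec d → E} {a : ℝ} (ha : 0 ≤ a)
    (hG : ∀ t x, ‖G t x‖ ≤ a * ((q.κ ^ (e.toReal⁻¹)) * (q.μ ^ (d-1)) ^ (1/r) * (q.y (t,x) * (|F (t,x)| + ε)))) :
    LsLpT 1 e (ENNReal.ofReal r) G ≤ ENNReal.ofReal a * (LsLpT 1 e (ENNReal.ofReal r) (fun t x => F (t,x)) + ENNReal.ofReal (3 * ε)) := by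
  have hk := q.kpos
  have hr' : 1 ≤ ENNReal.ofReal r := by simpa using hr
  set N : ℝ → ℝ≥0∞ := fun t => spLp (ENNReal.ofReal r) (fun x => F (t,x)) with hN
  have hNm : Measurable N := spLp_meas hr hF.cont
  have h1 : ∀ t, spLp (ENNReal.ofReal r) (G t) ≤ ENNReal.ofReal a * (ENNReal.ofReal (q.κ ^ (e.toReal⁻¹)) * (ENNReal.ofReal (ind q.κ (q.σ * t)) *
      (N t + ENNReal.ofReal (2 * ε)))) := by
    intro t
    have hT := ind_nonneg q.κ (q.σ * t)
    have := conc_space q hr hF hε hl t (G := G t) (a := a * (q.κ ^ (e.toReal⁻¹) * ind q.κ (q.σ * t))) (by positivity) (fun x => by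
      refine (hG t x).trans (le_of_eq ?_)
      unfold Par.y Par.Tt
      ring)
    rw [ENNReal.ofReal_mul ha, ENNReal.ofReal_mul (by positivity)] at this
    refine this.trans (le_of_eq ?_)
    ring
  have h3 : eLpGen (volume.restrict (Set.Ioo 0 1)) e (fun t => N t + ENNReal.ofReal (3 * ε)) ≤ LsLpT 1 e (ENNReal.ofReal r) (fun t x => F (t,x)) + ENNReal.ofReal (3 * ε) := by
    refine (gen_add _ he hNm measurable_const).trans ?_
    rw [gen_const _ he]; rfl
  refine le_trans ?_ (mul_le_mul_right h3 _)
  by_cases h : e = ∞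
  · subst h
    rw [← gen_cmul _ he _ ofReal_ne_top]
    refine eLpGen_mono _ _ fun t => (h1 t).trans ?_
    simp only [ENNReal.toReal_top, _root_.inv_zero, Real.rpow_zero, ENNReal.ofReal_one, one_mul]
    gcongr
    calc _ ≤ 1 * (N t + ENNReal.ofReal (2 * ε)) := by
          refine mul_le_mul' ?_ le_rfl
          exact ENNReal.ofReal_le_one.2 (ind_le_one q.κ (q.σ * t))
      _ ≤ _ := by rw [one_mul]; gcongr; norm_num
  · have he0 : e ≠ 0 := (zero_lt_one.trans_le he).ne'
    have het : ENNReal.ofReal e.toReal = e := ENNReal.ofReal_toReal h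
    have he1 : 1 ≤ e.toReal := by
      rw [← ENNReal.toReal_one]; exact (ENNReal.toReal_le_toReal one_ne_top h).2 he
    have := conc_abs (volume.restrict (Set.Ioo (0:ℝ) 1)) he1 (G := fun t => spLp (ENNReal.ofReal r) (G t)) (b := fun t => N t + ENNReal.ofReal (2 * ε))
      (b2 := fun t => N t + ENNReal.ofReal (3 * ε)) (S := fun t => ind q.κ (q.σ * t)) (fun t => ind_sq _ _) (Nn := q.κ) hk (a := ENNReal.ofReal a) ofReal_ne_top ?_ ?_
    · rw [het] at this
      exact this
    · refine avg_time q.hκ q.hσ _ _ ?_ ?_ ?_ ?_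
      · exact (hNm.add_const _).pow_const _
      · exact (hNm.add_const _).pow_const _
      · intro t; simp only [hN, hF.pt]
      · intro t z hz
        gcongr ?_ ^ _
        have : N (t + (q.σ:ℝ)⁻¹ * z) ≤ N t + ENNReal.ofReal ε := by
          refine le_trans ?_ (spLp_add_const hr (hF.cont.comp (by fun_prop) : Continuous fun x => F (t, x)) hε)
          refine spLp_mono _ fun x => ?_
          rw [Real.norm_eq_abs, Real.norm_of_nonneg (by positivity)]
          exact hσ t x z hz
        calc _ ≤ N t + ENNReal.ofReal ε + ENNReal.ofReal (2 * ε) := by gcongr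
          _ = _ := by rw [add_assoc, ← ENNReal.ofReal_add (by positivity) (by positivity)]; congr 2; ring
    · intro t
      rw [one_div]; exact h1 t

noncomputable section
/-- space-time measure on one period -/
def pim (d : ℕ) : Measure (W d) := (volume.restrict (Set.Ioo (0:ℝ) 1)).prod (volume.restrict (fundCube d))
instance (d : ℕ) : IsProbabilityMeasure (pim d) := by unfold pim; infer_instance

structure LB {d : ℕ} (f : W d → ℝ) (b : ℝ) : Prop where
  me : Measurable f
  nn : ∀ z, 0 ≤ f z
  le : ∫⁻ z, ENNReal.ofReal (f z) ∂(pim d) ≤ ENNReal.ofReal b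
  b0 : 0 ≤ b

namespace LB
variable {d : ℕ} {f g : W d → ℝ} {a b c : ℝ}
theorem add (hf : LB f a) (hg : LB g b) : LB (fun z => f z + g z) (a + b) := by
  refine ⟨hf.me.add hg.me, fun z => add_nonneg (hf.nn z) (hg.nn z), ?_, add_nonneg hf.b0 hg.b0⟩
  simp_rw [fun z => ENNReal.ofReal_add (hf.nn z) (hg.nn z)]
  rw [lintegral_add_left hf.me.ennreal_ofReal, ENNReal.ofReal_add hf.b0 hg.b0]
  exact add_le_add hf.le hg.le
theorem cmul (hc : 0 ≤ c) (hf : LB f a) : LB (fun z => c * f z) (c * a) := by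
  refine ⟨hf.me.const_mul c, fun z => mul_nonneg hc (hf.nn z), ?_, mul_nonneg hc hf.b0⟩
  simp_rw [fun z => ENNReal.ofReal_mul (q := f z) hc]
  rw [lintegral_const_mul _ hf.me.ennreal_ofReal, ENNReal.ofReal_mul hc]
  exact mul_le_mul' le_rfl hf.le
theorem const (hc : 0 ≤ c) : LB (fun _ : W d => c) c :=
  ⟨measurable_const, fun _ => hc, by simp, hc⟩
theorem sum {ι : Type*} {s : Finset ι} {f : ι → W d → ℝ} (h : ∀ i ∈ s, LB (f i) b) : LB (fun z => ∑ i ∈ s, f i z) (s.card * b) := by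
  classical
  induction s using Finset.induction_on with
  | empty => simpa using LB.const (d := d) (c := 0) le_rfl
  | insert i s hi ih =>
    simp_rw [Finset.sum_insert hi, Finset.card_insert_of_notMem hi]
    have := (h i (by simp)).add (ih fun j hj => h j (by simp [hj]))
    convert this using 1
    push_cast; ring
end LB

theorem L1_prod {d : ℕ} {E : Type*} [NormedAddCommGroup E] {G : ℝ → Vec d → E} {f : W d → ℝ} {b : ℝ} (hf : LB f b)
    (h : ∀ t x, ‖G t x‖ ≤ f (t, x)) : LsLpT 1 1 1 G ≤ ENNReal.ofReal b := by
  refine le_trans ?_ hf.le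
  unfold LsLpT spLp eLpGen pim
  simp only [one_ne_top, if_false, ENNReal.toReal_one, ENNReal.rpow_one, div_one]
  rw [lintegral_prod _ hf.me.ennreal_ofReal.aemeasurable]
  gcongr with t x
  rw [nn_eq]
  exact ENNReal.ofReal_le_ofReal (h t x)

theorem fd_cont {d : ℕ} {G : ℝ → Vec d → Vec d} (hG : ContDiff ℝ (⊤ : ℕ∞) (Function.uncurry G)) :
    Continuous (Function.uncurry fun t x => fderiv ℝ (G t) x) := by
  have : ContDiff ℝ 0 (fun z : ℝ × Vec d => fderiv ℝ ((fun (z : ℝ × Vec d) (y : Vec d) => G z.1 y) z) z.2) := by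
    refine ContDiff.fderiv (m := (⊤ : ℕ∞)) ?_ contDiff_snd (by simp)
    exact hG.comp (f := fun w : (ℝ × Vec d) × Vec d => (w.1.1, w.2)) (by fun_prop)
  exact this.continuous

namespace Par
variable {d : ℕ} (q : Par d)

theorem TS_LB (A : Finset (Fin d)) : LB (fun z => q.Tt z * q.Sx A z) (q.κ⁻¹ * (q.μ⁻¹)^A.card) := by
  have hk := q.kpos
  have hm := q.mpos
  have m1 : Measurable (fun z : W d => q.Tt z) := by
    unfold Tt; exact (ind_meas _).comp (by fun_prop)
  have m2 : Measurable (fun z : W d => q.Sx A z) := by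
    unfold Sx; exact (SA_meas _ _).comp (by fun_prop)
  refine ⟨m1.mul m2, fun z => mul_nonneg (q.Tt0 z) (q.Sx0 A z), ?_, by positivity⟩
  have m3 : Measurable (fun z : W d => q.Tt z * q.Sx A z) := m1.mul m2
  unfold pim
  rw [lintegral_prod _ m3.ennreal_ofReal.aemeasurable]
  have hs : ∫⁻ x in fundCube d, ENNReal.ofReal (SA A q.μ ((q.l:ℝ) • x)) ≤ ENNReal.ofReal ((q.μ⁻¹)^A.card) := by
    have := avg_space A q.hμ q.hl (fun _ => 1) (fun _ => 1) measurable_const measurable_const (fun _ _ => rfl) (fun _ _ _ => le_rfl)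
    simpa [cube_vol] using this
  have ht : ∫⁻ t in Set.Ioo (0:ℝ) 1, ENNReal.ofReal (ind q.κ (q.σ * t)) ≤ ENNReal.ofReal (q.κ⁻¹) := by
    have := avg_time q.hκ q.hσ (fun _ => 1) (fun _ => 1) measurable_const measurable_const (fun _ => rfl) (fun _ _ _ => le_rfl)
    simpa using this
  calc _ ≤ ∫⁻ t in Set.Ioo (0:ℝ) 1, ENNReal.ofReal (ind q.κ (q.σ * t)) * ENNReal.ofReal ((q.μ⁻¹)^A.card) := by
        refine lintegral_mono fun t => ?_
        simp only [Tt, Sx]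
        simp_rw [fun x : Vec d => ENNReal.ofReal_mul (q := SA A q.μ ((q.l:ℝ) • x)) (ind_nonneg q.κ (q.σ * t))]
        rw [lintegral_const_mul' _ _ ofReal_ne_top]
        exact mul_le_mul' le_rfl hs
    _ ≤ _ := by
        rw [lintegral_mul_const' _ _ ofReal_ne_top, ENNReal.ofReal_mul (by positivity)]
        exact mul_le_mul' ht le_rfl

theorem y_LB : LB q.y (q.κ⁻¹ * (q.μ⁻¹)^(d-1)) := by
  have := q.TS_LB (Finset.univ.erase q.i)
  rw [Finset.card_erase_of_mem (Finset.mem_univ _), Finset.card_univ, Fintype.card_fin] at this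
  exact this
theorem yl_LB (l : Fin d) : LB (q.yl l) (q.κ⁻¹) := by
  have hm := q.mpos
  have := (q.TS_LB (q.Al l)).cmul (c := q.μ ^ (q.Al l).card) (by positivity)
  have e : q.μ ^ (q.Al l).card * (q.κ⁻¹ * q.μ⁻¹ ^ (q.Al l).card) = q.κ⁻¹ := by
    rw [inv_pow]; field_simp
  rw [e] at this
  convert this using 1
  funext z; unfold yl; ring

def Ebd : ℝ := (q.c1 + q.c2 + q.c1 * q.c2 * q.η + q.c1 * q.η * q.σ * q.κ) * (q.κ⁻¹ * (q.μ⁻¹)^(d-1)) + (q.σ:ℝ)⁻¹ + (q.l:ℝ)⁻¹ * d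

theorem Eenv_LB : LB q.Eenv q.Ebd := by
  have hk := q.kpos
  have hm := q.mpos
  have hη := q.ηpos
  have hc1 := q.h1
  have hc2 := q.h2
  have hσ := q.spos
  have hl := q.lpos
  have h1 := q.y_LB.cmul (c := q.c1 + q.c2 + q.c1 * q.c2 * q.η + q.c1 * q.η * q.σ * q.κ) (by positivity)
  have h2 := (h1.add (LB.const (d := d) (c := (q.σ:ℝ)⁻¹) (by positivity)))
  have h3 : LB (fun z => (q.l:ℝ)⁻¹ * q.κ * q.Ys z) ((q.l:ℝ)⁻¹ * d) := by
    have := (LB.sum (s := Finset.univ.erase q.i) (fun l _ => q.yl_LB l)).cmul (c := (q.l:ℝ)⁻¹ * q.κ) (by positivity)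
    refine ⟨this.me, this.nn, this.le.trans (ENNReal.ofReal_le_ofReal ?_), by positivity⟩
    rw [Finset.card_erase_of_mem (Finset.mem_univ _), Finset.card_univ, Fintype.card_fin]
    have hd : ((d - 1 : ℕ) : ℝ) ≤ d := by exact_mod_cast Nat.sub_le d 1
    calc _ = (q.l:ℝ)⁻¹ * ((d - 1 : ℕ) : ℝ) := by field_simp
      _ ≤ _ := by gcongr
  have := h2.add h3
  unfold Ebd
  convert this using 1
  funext z; unfold Eenv; ring

variable {A B ρ : W d → ℝ} {u : Fin d → W d → ℝ} {C : ℝ}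

theorem E_L1 (hA : SP A) (hB : SP B) (hC : Cb A B ρ u C) :
    LsLpT 1 1 1 (fun t x => (fun k => q.E A B ρ u k (t,x) : Vec d)) ≤ ENNReal.ofReal (10 * (C^2 * Bb d ^2) * q.Ebd) := by
  have hb := one_le_Bb d
  have h := q.Eenv_LB.cmul (c := 10 * (C^2 * Bb d ^2)) (by positivity)
  refine L1_prod h fun t x => ?_
  rw [pi_norm_le_iff_of_nonneg (h.nn _)]
  intro k
  exact q.E_bd hA hB hC k _

theorem fderiv_norm {G : Fin d → W d → ℝ} (hG : ∀ k, SP (G k)) (t : ℝ) (x : Vec d) {b : ℝ} (hb : 0 ≤ b)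
    (h : ∀ k l, |dd (eS l) (G k) (t,x)| ≤ b) : ‖fderiv ℝ (fun x => (fun k => G k (t,x) : Vec d)) x‖ ≤ d * b := by
  have hd : ∀ k, DifferentiableAt ℝ (fun x => G k (t,x)) x := fun k =>
    ((hG k).df (t,x)).comp x (by fun_prop)
  rw [fderiv_pi hd]
  refine ContinuousLinearMap.opNorm_le_bound _ (by positivity) fun v => ?_
  rw [pi_norm_le_iff_of_nonneg (by positivity)]
  intro k
  simp only [ContinuousLinearMap.coe_pi', ContinuousLinearMap.pi_apply]
  have e : v = ∑ l, v l • (Pi.single l (1:ℝ) : Vec d) := by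
    funext m; simp [Finset.sum_apply, Pi.single_apply]
  have e2 : ∀ l, fderiv ℝ (fun x => G k (t,x)) x (Pi.single l 1) = dd (eS l) (G k) (t,x) := by
    intro l
    have h1 : HasFDerivAt (fun x : Vec d => ((t, x) : W d)) (ContinuousLinearMap.inr ℝ ℝ (Vec d)) x := hasFDerivAt_prodMk_right t x
    have := ((hG k).df (t,x)).hasFDerivAt.comp x h1
    rw [show (fun x => G k (t,x)) = G k ∘ fun x => (t,x) from rfl, this.fderiv]
    simp [dd, eS]
  conv_lhs => rw [e]
  rw [map_sum]
  calc _ ≤ ∑ l, ‖fderiv ℝ (fun x => G k (t,x)) x (v l • (Pi.single l (1:ℝ) : Vec d))‖ := norm_sum_le _ _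
    _ ≤ ∑ l : Fin d, b * ‖v‖ := by
      refine Finset.sum_le_sum fun l _ => ?_
      rw [map_smul, e2, norm_smul, mul_comm]
      exact mul_le_mul (h k l) (norm_le_pi_norm v l) (norm_nonneg _) hb
    _ = _ := by simp; ring

theorem conc1 {r : ℝ} (hr : 1 ≤ r) {e : ℝ} (he : 1 ≤ e) {E : Type*} [NormedAddCommGroup E] {G : ℝ → Vec d → E} {a : ℝ} (ha : 0 ≤ a)
    (hG : ∀ t x, ‖G t x‖ ≤ a * q.y (t,x)) :
    LsLpT 1 (ENNReal.ofReal e) (ENNReal.ofReal r) G ≤ ENNReal.ofReal (a * ((q.κ ^ (1/e))⁻¹ * ((q.μ^(d-1)) ^ (1/r))⁻¹)) := by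
  have hk := q.kpos
  have hm := q.mpos
  have he' : 1 ≤ ENNReal.ofReal e := by simpa using he
  have hr' : 1 ≤ ENNReal.ofReal r := by simpa using hr
  have h := conc q hr he' (SP.const (d := d) 1) (ε := 0) le_rfl (by simp) (by simp) (G := G) (a := a * ((q.κ ^ (1/e))⁻¹ * ((q.μ^(d-1)) ^ (1/r))⁻¹)) (by positivity) (fun t x => by
    refine (hG t x).trans (le_of_eq ?_)
    rw [ENNReal.toReal_ofReal (by linarith), ← one_div]
    have h1 : 0 < q.κ ^ (1/e) := by positivity
    have h2 : 0 < (q.μ^(d-1)) ^ (1/r) := by positivity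
    simp only [abs_one, add_zero, mul_one]
    field_simp)
  refine h.trans (le_of_eq ?_)
  unfold LsLpT
  simp_rw [spLp_const hr']
  rw [gen_const _ he']
  simp

theorem w_W1q (hB : SP B) (hC : Cb A B ρ u C) {r : ℝ} (hr : 1 ≤ r) {e : ℝ} (he : 1 ≤ e) :
    LsW1qT 1 (ENNReal.ofReal e) (ENNReal.ofReal r) (fun t x => (fun k => q.w B k (t,x) : Vec d)) ≤
      ENNReal.ofReal ((4 * d + 2) * C * Bb d * (q.c2 * (q.l * q.μ)) * ((q.κ ^ (1/e))⁻¹ * ((q.μ^(d-1)) ^ (1/r))⁻¹)) := by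
  have hk := q.kpos
  have hm := q.mpos
  have hl := q.lpos
  have hc2 := q.h2
  have hb := one_le_Bb d
  have hc := hC.one
  have he' : 1 ≤ ENNReal.ofReal e := by simpa using he
  have hsp := fun k => q.w_sp hB k
  set G : ℝ → Vec d → Vec d := fun t x => (fun k => q.w B k (t,x) : Vec d) with hG
  have hGs : ContDiff ℝ (⊤ : ℕ∞) (Function.uncurry G) := contDiff_pi.2 fun k => (hsp k).sm
  have hcf := fd_cont hGs
  have h1 : LsLpT 1 (ENNReal.ofReal e) (ENNReal.ofReal r) G ≤ ENNReal.ofReal ((2 * C * Bb d * (q.c2 * (q.l * q.μ))) * ((q.κ ^ (1/e))⁻¹ * ((q.μ^(d-1)) ^ (1/r))⁻¹)) := by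
    refine q.conc1 hr he (by positivity) fun t x => ?_
    have y0 := q.y0 (t,x)
    rw [pi_norm_le_iff_of_nonneg (by positivity)]
    intro k
    refine (q.w_bd2 hB hC k (t,x)).trans ?_
    have h1 : 1 ≤ (q.l:ℝ) * q.μ := by
      have := q.hμ
      have h2 : (1:ℝ) ≤ q.l := by exact_mod_cast q.hl
      nlinarith
    have : q.c2 * q.y (t,x) ≤ q.c2 * (q.l * q.μ) * q.y (t,x) := by
      have : q.c2 * 1 * q.y (t,x) ≤ q.c2 * (q.l * q.μ) * q.y (t,x) := by gcongr
      simpa using this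
    calc _ ≤ 2 * C * Bb d * (q.c2 * (q.l * q.μ) * q.y (t,x)) := by gcongr
      _ = _ := by ring
  have h2 : LsLpT 1 (ENNReal.ofReal e) (ENNReal.ofReal r) (fun t x => fderiv ℝ (G t) x) ≤ ENNReal.ofReal ((d * (4 * C * Bb d) * (q.c2 * (q.l * q.μ))) * ((q.κ ^ (1/e))⁻¹ * ((q.μ^(d-1)) ^ (1/r))⁻¹)) := by
    refine q.conc1 hr he (by positivity) fun t x => ?_
    have y0 := q.y0 (t,x)
    refine (fderiv_norm hsp t x (b := 4 * C * Bb d * (q.c2 * (q.l * q.μ) * q.y (t,x))) (by positivity) fun k l => q.dw_bd hB hC k l _).trans (le_of_eq ?_)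
    ring
  have h3 : LsW1qT 1 (ENNReal.ofReal e) (ENNReal.ofReal r) G ≤ LsLpT 1 (ENNReal.ofReal e) (ENNReal.ofReal r) G + LsLpT 1 (ENNReal.ofReal e) (ENNReal.ofReal r) (fun t x => fderiv ℝ (G t) x) :=
    gen_add _ he' (spLp_meas hr hGs.continuous) (spLp_meas hr hcf)
  refine h3.trans ((add_le_add h1 h2).trans ?_)
  rw [← ENNReal.ofReal_add (by positivity) (by positivity)]
  exact ENNReal.ofReal_le_ofReal (le_of_eq (by ring))
end Par
end

theorem int_fd_zero {d : ℕ} {f : Vec d → ℝ} (hf : ContDiff ℝ (⊤ : ℕ∞) f) (hp : ZPer f) (v : Vec d) :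
    ∫ x in fundCube d, fderiv ℝ f x v = 0 := by
  have hfd : Continuous (fun x => fderiv ℝ f x v) := by
    have : Continuous (fderiv ℝ f) := hf.continuous_fderiv (by simp)
    fun_prop
  have hpd : ∀ x (k : Fin d → ℤ), fderiv ℝ f (x + fun i => (k i : ℝ)) = fderiv ℝ f x := by
    intro x k
    rw [← fderiv_comp_add_right]
    congr 1
    funext z; exact hp z k
  obtain ⟨C, hC, hb⟩ := per_bdd (F := fun z : W d => fderiv ℝ f z.2 v) (hfd.comp continuous_snd) (fun _ _ => rfl)
    (fun t x k => by simp only [hpd])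
  have key := hasDerivAt_integral_of_dominated_loc_of_deriv_le (μ := volume.restrict (fundCube d))
    (F := fun (s : ℝ) x => f (x + s • v)) (F' := fun s x => fderiv ℝ f (x + s • v) v) (x₀ := 0) (s := Set.univ)
    (bound := fun _ => C) Filter.univ_mem
    (Filter.Eventually.of_forall fun s => (hf.continuous.comp (by fun_prop : Continuous fun x : Vec d => x + s • v)).aestronglyMeasurable)
    ?_ ?_ ?_ (integrable_const C) ?_
  · have h2 := key.2
    simp only [zero_smul, add_zero] at h2
    have h3 : (fun s : ℝ => ∫ x in fundCube d, f (x + s • v)) = fun _ => ∫ x in fundCube d, f x := by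
      funext s; exact cube_inv hp _
    rw [h3] at h2
    exact h2.unique (hasDerivAt_const _ _)
  · simp only [zero_smul, add_zero]
    exact (hf.continuous.continuousOn).integrableOn_compact isCompact_Icc
  · simp only [zero_smul, add_zero]
    exact hfd.aestronglyMeasurable
  · exact ae_of_all _ fun x s _ => hb (0, x + s • v)
  · refine ae_of_all _ fun x s _ => ?_
    have h1 : HasDerivAt (fun s : ℝ => x + s • v) v s := by
      simpa using ((hasDerivAt_id s).smul_const v).const_add x
    exact ((hf.differentiable (by simp) (x + s • v)).hasFDerivAt).comp_hasDerivAt s h1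

theorem slice_fd {d : ℕ} {F : W d → ℝ} (hF : SP F) (t : ℝ) (x : Vec d) (k : Fin d) :
    fderiv ℝ (fun x => F (t,x)) x (Pi.single k 1) = dd (eS k) F (t,x) := by
  have h1 : HasFDerivAt (fun x : Vec d => ((t, x) : W d)) (ContinuousLinearMap.inr ℝ ℝ (Vec d)) x := hasFDerivAt_prodMk_right t x
  have := (hF.df (t,x)).hasFDerivAt.comp x h1
  rw [show (fun x => F (t,x)) = F ∘ fun x => (t,x) from rfl, this.fderiv]
  simp [dd, eS]

theorem slice_dt {d : ℕ} {F : W d → ℝ} (hF : SP F) (t : ℝ) (x : Vec d) :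
    deriv (fun t => F (t,x)) t = dd eT F (t,x) := by
  have h1 : HasDerivAt (fun t : ℝ => ((t, x) : W d)) (1, 0) t := by
    exact (hasDerivAt_id t).prodMk (hasDerivAt_const t x)
  exact ((hF.df (t,x)).hasFDerivAt.comp_hasDerivAt t h1).deriv

theorem slice_sm {d : ℕ} {F : W d → ℝ} (hF : SP F) (t : ℝ) : ContDiff ℝ (⊤ : ℕ∞) (fun x => F (t,x)) :=
  hF.sm.comp (by fun_prop)
theorem slice_c {d : ℕ} {F : W d → ℝ} (hF : SP F) (t : ℝ) : Continuous (fun x => F (t,x)) := (slice_sm hF t).continuous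
theorem slice_int {d : ℕ} {f : Vec d → ℝ} (hF : Continuous f) : IntegrableOn f (fundCube d) :=
  hF.continuousOn.integrableOn_compact isCompact_Icc

theorem slice_int2 {d : ℕ} {f g : Vec d → ℝ} (hF : Continuous f) (hG : Continuous g) : IntegrableOn (fun x => f x * g x) (fundCube d) :=
  slice_int (hF.mul hG)

theorem int_dd_mul {d : ℕ} {F : W d → ℝ} (hF : SP F) (t : ℝ) (k : Fin d) {φ : Vec d → ℝ} (hφ : ContDiff ℝ (⊤ : ℕ∞) φ) (hp : ZPer φ) :
    ∫ x in fundCube d, dd (eS k) F (t,x) * φ x = - ∫ x in fundCube d, F (t,x) * fderiv ℝ φ x (Pi.single k 1) := by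
  have hfd : Continuous (fun x => fderiv ℝ φ x (Pi.single k 1)) := by
    have : Continuous (fderiv ℝ φ) := hφ.continuous_fderiv (by simp)
    fun_prop
  have h := int_fd_zero (f := fun x => F (t,x) * φ x) ((slice_sm hF t).mul hφ) (fun x k => by simp only [hF.px, hp x k]) (Pi.single k 1)
  have e : ∀ x, fderiv ℝ (fun x => F (t,x) * φ x) x (Pi.single k 1) = F (t,x) * fderiv ℝ φ x (Pi.single k 1) + dd (eS k) F (t,x) * φ x := by
    intro x
    rw [fderiv_fun_mul ((slice_sm hF t).differentiable (by simp) x) (hφ.differentiable (by simp) x)]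
    simp only [_root_.add_apply, _root_.smul_apply, smul_eq_mul]
    rw [slice_fd hF]; ring
  simp_rw [e] at h
  rw [integral_add (slice_int2 (slice_c hF t) hfd) (slice_int2 (slice_c (hF.dd _) t) hφ.continuous)] at h
  linarith

theorem CkN_ge {d : ℕ} {φ : Vec d → ℝ} (hφ : ContDiff ℝ (⊤ : ℕ∞) φ) {x : Vec d} (hx : x ∈ fundCube d) (k : Fin d) :
    |fderiv ℝ φ x (Pi.single k 1)| ≤ CkN 1 φ := by
  have h1 : |fderiv ℝ φ x (Pi.single k 1)| ≤ ‖fderiv ℝ φ x‖ := by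
    refine ((fderiv ℝ φ x).le_opNorm _).trans ?_
    rw [Pi.norm_single]; simp
  have h2 : ‖fderiv ℝ φ x‖ = ‖iteratedFDeriv ℝ 1 φ x‖ := by
    rw [norm_iteratedFDeriv_one]
  rw [h2] at h1
  refine h1.trans ?_
  unfold CkN
  rw [Finset.sum_range_succ]
  have h3 : ‖iteratedFDeriv ℝ 1 φ x‖ ≤ sSup ((fun x => ‖iteratedFDeriv ℝ 1 φ x‖) '' fundCube d) := by
    refine le_csSup ?_ ⟨x, hx, rfl⟩
    have hc : Continuous (fun x => ‖iteratedFDeriv ℝ 1 φ x‖) := (hφ.continuous_iteratedFDeriv (m := 1) (by simp)).norm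
    exact (isCompact_Icc.image hc).bddAbove
  have h4 : 0 ≤ ∑ i ∈ Finset.range 1, sSup ((fun x => ‖iteratedFDeriv ℝ i φ x‖) '' fundCube d) := by
    refine Finset.sum_nonneg fun i _ => Real.sSup_nonneg ?_
    rintro _ ⟨y, _, rfl⟩; exact norm_nonneg _
  linarith

theorem CkN_nonneg {d : ℕ} (N : ℕ) (φ : Vec d → ℝ) : 0 ≤ CkN N φ := by
  unfold CkN
  refine Finset.sum_nonneg fun i _ => Real.sSup_nonneg ?_
  rintro _ ⟨y, _, rfl⟩; exact norm_nonneg _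

namespace Par
variable {d : ℕ} (q : Par d) {A B ρ : W d → ℝ} {u : Fin d → W d → ℝ} {C : ℝ}

theorem θ_mean (hA : SP A) (hB : SP B) (t : ℝ) : ∫ x in fundCube d, q.θ A B (t,x) = 0 := by
  have h1 := int_dd_mul (q.Pθ_sp hA) t q.j (φ := fun _ => 1) contDiff_const (fun _ _ => rfl)
  have h2 := int_dd_mul (q.Po_sp hA hB) t q.i (φ := fun _ => 1) contDiff_const (fun _ _ => rfl)
  simp at h1 h2
  unfold θ
  rw [integral_add (slice_int (slice_c ((q.Pθ_sp hA).dd _) t)) (slice_int (slice_c ((q.Po_sp hA hB).dd _) t)), h1, h2, add_zero]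

theorem Sx_int : ∀ t : ℝ, ∫ x in fundCube d, q.y (t,x) ≤ (q.μ⁻¹)^(d-1) := by
  intro t
  have hm := q.mpos
  have hs : ∫⁻ x in fundCube d, ENNReal.ofReal (SA (Finset.univ.erase q.i) q.μ ((q.l:ℝ) • x)) ≤ ENNReal.ofReal ((q.μ⁻¹)^(d-1)) := by
    have := avg_space (Finset.univ.erase q.i) q.hμ q.hl (fun _ => 1) (fun _ => 1) measurable_const measurable_const (fun _ _ => rfl) (fun _ _ _ => le_rfl)
    rw [Finset.card_erase_of_mem (Finset.mem_univ _), Finset.card_univ, Fintype.card_fin] at this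
    simpa [cube_vol] using this
  have hme : Measurable fun x : Vec d => q.y (t,x) := by
    exact q.y_LB.me.comp (by fun_prop)
  rw [integral_eq_lintegral_of_nonneg_ae (ae_of_all _ fun x => q.y0 _) hme.aestronglyMeasurable]
  refine ENNReal.toReal_le_of_le_ofReal (by positivity) (le_trans (lintegral_mono fun x => ?_) hs)
  refine ENNReal.ofReal_le_ofReal ?_
  have h1 := q.Tt1 (t,x)
  have h2 := q.Sx0 (Finset.univ.erase q.i) (t,x)
  calc q.y (t,x) ≤ 1 * q.Sx (Finset.univ.erase q.i) (t,x) := mul_le_mul_of_nonneg_right h1 h2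
    _ = _ := by rw [one_mul]; rfl

theorem θ_pair (hA : SP A) (hB : SP B) (hC : Cb A B ρ u C) (t : ℝ) {φ : Vec d → ℝ} (hφ : ContDiff ℝ (⊤ : ℕ∞) φ) (hp : ZPer φ) :
    |∫ x in fundCube d, q.θ A B (t,x) * φ x| ≤ (C * Bb d * (q.c1 * q.η * (q.μ⁻¹)^(d-1)) + 2 * C * (q.σ:ℝ)⁻¹) * CkN 1 φ := by
  have h1 := int_dd_mul (q.Pθ_sp hA) t q.j hφ hp
  have h2 := int_dd_mul (q.Po_sp hA hB) t q.i hφ hp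
  have hc := hC.one
  have hb := one_le_Bb d
  have hη := q.ηpos
  have hc1 := q.h1
  have hσ := q.spos
  have hN := CkN_nonneg 1 φ
  have hfd : ∀ k : Fin d, Continuous (fun x => fderiv ℝ φ x (Pi.single k 1)) := fun k => by
    have : Continuous (fderiv ℝ φ) := hφ.continuous_fderiv (by simp)
    fun_prop
  have hme : Measurable fun x : Vec d => q.y (t,x) := q.y_LB.me.comp (by fun_prop)
  have hyi : IntegrableOn (fun x : Vec d => q.y (t,x)) (fundCube d) := by
    refine Integrable.mono' (integrable_const (1:ℝ)) hme.aestronglyMeasurable (ae_of_all _ fun x => ?_)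
    rw [Real.norm_of_nonneg (q.y0 _)]; exact q.y1 _
  have e : ∫ x in fundCube d, q.θ A B (t,x) * φ x = - (∫ x in fundCube d, q.Pθ A (t,x) * fderiv ℝ φ x (Pi.single q.j 1))
      - ∫ x in fundCube d, q.Po A B (t,x) * fderiv ℝ φ x (Pi.single q.i 1) := by
    have : ∀ x, q.θ A B (t,x) * φ x = dd (eS q.j) (q.Pθ A) (t,x) * φ x + dd (eS q.i) (q.Po A B) (t,x) * φ x := fun x => by
      unfold θ; ring
    simp_rw [this]
    rw [integral_add (slice_int2 (slice_c ((q.Pθ_sp hA).dd _) t) hφ.continuous) (slice_int2 (slice_c ((q.Po_sp hA hB).dd _) t) hφ.continuous), h1, h2]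
    ring
  have b1 : |∫ x in fundCube d, q.Pθ A (t,x) * fderiv ℝ φ x (Pi.single q.j 1)| ≤ C * Bb d * (q.c1 * q.η * (q.μ⁻¹)^(d-1)) * CkN 1 φ := by
    calc _ ≤ ∫ x in fundCube d, (C * Bb d * (q.c1 * q.η) * CkN 1 φ) * q.y (t,x) := by
          rw [← Real.norm_eq_abs]
          refine norm_integral_le_of_norm_le (hyi.const_mul _) ((ae_restrict_iff' (cube_meas d)).2 (ae_of_all _ fun x hx => ?_))
          rw [norm_mul]
          have y0 := q.y0 (t,x)
          calc _ ≤ (C * Bb d * (q.c1 * q.η * q.y (t,x))) * CkN 1 φ :=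
                mul_le_mul (q.Pθ_bd hC (t,x)) (CkN_ge hφ hx _) (abs_nonneg _) (by positivity)
            _ = _ := by ring
      _ ≤ (C * Bb d * (q.c1 * q.η) * CkN 1 φ) * (q.μ⁻¹)^(d-1) := by
          rw [integral_const_mul]
          exact mul_le_mul_of_nonneg_left (q.Sx_int t) (by positivity)
      _ = _ := by ring
  have b2 : |∫ x in fundCube d, q.Po A B (t,x) * fderiv ℝ φ x (Pi.single q.i 1)| ≤ 2 * C * (q.σ:ℝ)⁻¹ * CkN 1 φ := by
    calc _ ≤ ∫ x in fundCube d, 2 * C * (q.σ:ℝ)⁻¹ * CkN 1 φ := by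
          rw [← Real.norm_eq_abs]
          refine norm_integral_le_of_norm_le (integrable_const _) ((ae_restrict_iff' (cube_meas d)).2 (ae_of_all _ fun x hx => ?_))
          rw [norm_mul]
          exact mul_le_mul (q.Po_bd hC (t,x)) (CkN_ge hφ hx _) (norm_nonneg _) (by positivity)
      _ = _ := by simp
  rw [e, abs_le]
  rw [abs_le] at b1 b2
  constructor <;> nlinarith

theorem θ_zero (hA : SP A) (hB : SP B) (t : ℝ) (h : ∀ x, A (t,x) = 0) (x : Vec d) : q.θ A B (t,x) = 0 := by
  unfold θ
  rw [← slice_fd (q.Pθ_sp hA), ← slice_fd (q.Po_sp hA hB)]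
  have e1 : (fun x => q.Pθ A (t,x)) = fun _ => 0 := by funext x; simp [Pθ, h]
  have e2 : (fun x => q.Po A B (t,x)) = fun _ => 0 := by funext x; simp [Po, f, h]
  rw [e1, e2]; simp
end Par

theorem LsLpT_add {d : ℕ} {E : Type*} [NormedAddCommGroup E] {e : ℝ≥0∞} (he : 1 ≤ e) {r : ℝ} (hr : 1 ≤ r)
    {f g : ℝ → Vec d → E} (hf : Continuous (Function.uncurry f)) (hg : Continuous (Function.uncurry g)) :
    LsLpT 1 e (ENNReal.ofReal r) (fun t x => f t x + g t x) ≤ LsLpT 1 e (ENNReal.ofReal r) f + LsLpT 1 e (ENNReal.ofReal r) g := by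
  have hr' : 1 ≤ ENNReal.ofReal r := by simpa using hr
  refine le_trans (eLpGen_mono _ _ fun t => ?_) (gen_add _ he (spLp_meas hr hf) (spLp_meas hr hg))
  have h1 : Continuous (f t) := hf.comp (by fun_prop : Continuous fun x : Vec d => (t,x))
  have h2 : Continuous (g t) := hg.comp (by fun_prop : Continuous fun x : Vec d => (t,x))
  exact spLp_add hr' h1.aestronglyMeasurable h2.aestronglyMeasurable

theorem LsLpT_const {d : ℕ} {E : Type*} [NormedAddCommGroup E] {e : ℝ≥0∞} (he : 1 ≤ e) {r : ℝ} (hr : 1 ≤ r) (c : E) :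
    LsLpT 1 e (ENNReal.ofReal r) (fun _ (_ : Vec d) => c) = ENNReal.ofReal ‖c‖ := by
  have hr' : 1 ≤ ENNReal.ofReal r := by simpa using hr
  unfold LsLpT
  simp_rw [spLp_const hr']
  rw [gen_const _ he]

theorem LsLpT_bd {d : ℕ} {E : Type*} [NormedAddCommGroup E] {e : ℝ≥0∞} (he : 1 ≤ e) {r : ℝ} (hr : 1 ≤ r) {f : ℝ → Vec d → E} {c : ℝ}
    (hc : 0 ≤ c) (h : ∀ t x, ‖f t x‖ ≤ c) : LsLpT 1 e (ENNReal.ofReal r) f ≤ ENNReal.ofReal c := by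
  refine (LsLpT_mono 1 e _ (f' := fun _ _ => c) fun t x => (h t x).trans (le_abs_self c)).trans (le_of_eq ?_)
  rw [LsLpT_const he hr, Real.norm_of_nonneg hc]

namespace Par
variable {d : ℕ} (q : Par d) {A B ρ : W d → ℝ} {u : Fin d → W d → ℝ} {C L ε : ℝ}

theorem lip_l {F : W d → ℝ} (h : ∀ z z', |F z' - F z| ≤ L * ‖z' - z‖) (hL : 0 < L) (hl : L * (q.l:ℝ)⁻¹ ≤ ε) (t : ℝ) (x z : Vec d) (hz : ‖z‖ ≤ 1) :
    |F (t, x + (q.l:ℝ)⁻¹ • z)| ≤ |F (t,x)| + ε := by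
  have h0 := q.lpos
  have h1 := h (t,x) (t, x + (q.l:ℝ)⁻¹ • z)
  have h2 : ‖((t, x + (q.l:ℝ)⁻¹ • z) : W d) - (t,x)‖ ≤ (q.l:ℝ)⁻¹ := by
    have : ((t, x + (q.l:ℝ)⁻¹ • z) : W d) - (t,x) = (0, (q.l:ℝ)⁻¹ • z) := by ext <;> simp
    rw [this, Prod.norm_mk, norm_zero, max_eq_right (norm_nonneg _), norm_smul, norm_inv, Real.norm_of_nonneg h0.le]
    have : (0:ℝ) < (q.l:ℝ)⁻¹ := by positivity
    nlinarith
  have h3 := abs_sub_abs_le_abs_sub (F (t, x + (q.l:ℝ)⁻¹ • z)) (F (t,x))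
  nlinarith
theorem lip_σ {F : W d → ℝ} (h : ∀ z z', |F z' - F z| ≤ L * ‖z' - z‖) (hL : 0 < L) (hl : L * (q.σ:ℝ)⁻¹ ≤ ε) (t : ℝ) (x : Vec d) (z : ℝ) (hz : |z| ≤ 1) :
    |F (t + (q.σ:ℝ)⁻¹ * z, x)| ≤ |F (t,x)| + ε := by
  have h0 := q.spos
  have h1 := h (t,x) (t + (q.σ:ℝ)⁻¹ * z, x)
  have h2 : ‖((t + (q.σ:ℝ)⁻¹ * z, x) : W d) - (t,x)‖ ≤ (q.σ:ℝ)⁻¹ := by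
    have : ((t + (q.σ:ℝ)⁻¹ * z, x) : W d) - (t,x) = ((q.σ:ℝ)⁻¹ * z, 0) := by ext <;> simp
    rw [this, Prod.norm_mk, norm_zero, max_eq_left (norm_nonneg _), norm_mul, norm_inv, Real.norm_of_nonneg h0.le]
    have : (0:ℝ) < (q.σ:ℝ)⁻¹ := by positivity
    rw [← Real.norm_eq_abs] at hz
    nlinarith
  have h3 := abs_sub_abs_le_abs_sub (F (t + (q.σ:ℝ)⁻¹ * z, x)) (F (t,x))
  nlinarith

theorem θp_sp (hA : SP A) : SP (q.θp A) := by
  exact SP.cmul _ ((hA.mul (q.g_sp.mul q.X_sp)).add (SP.cmul _ ((hA.dd _).mul (q.g_sp.mul q.Z_sp))))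

theorem θ_norm (hA : SP A) (hB : SP B) (hC : Cb A B ρ u C) {p : ℝ} (hp : 1 ≤ p) {e : ℝ≥0∞} (he : 1 ≤ e) (hε : 0 ≤ ε)
    (h : ∀ z z', |A z' - A z| ≤ L * ‖z' - z‖) (hL : 0 < L) (hl : L * (q.l:ℝ)⁻¹ ≤ ε) (hσ : L * (q.σ:ℝ)⁻¹ ≤ ε) (hη : q.η * C ≤ ε)
    (hc1 : q.c1 = q.κ ^ (e.toReal⁻¹) * (q.μ^(d-1)) ^ (1/p)) :
    LsLpT 1 e (ENNReal.ofReal p) (fun t x => q.θ A B (t,x)) ≤ ENNReal.ofReal (Bb d) * (LsLpT 1 e (ENNReal.ofReal p) (fun t x => A (t,x)) + ENNReal.ofReal (3 * ε))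
      + ENNReal.ofReal (2 * C * (q.σ:ℝ)⁻¹) := by
  have hb := one_le_Bb d
  have hc := hC.one
  have hc0 := q.h1
  have hs0 := q.spos
  have e1 : (fun t x => q.θ A B (t,x)) = fun t x => q.θp A (t,x) + q.θo A B (t,x) := by
    funext t x; exact q.θ_split hA hB _
  have s1 := q.θp_sp hA
  have s2 : SP (q.θo A B) := by
    have : q.θo A B = fun z => q.θ A B z - q.θp A z := by funext z; rw [q.θ_split hA hB]; ring
    rw [this]; exact (q.θ_sp hA hB).sub s1
  rw [e1]
  refine (LsLpT_add he hp (f := fun t x => q.θp A (t,x)) (g := fun t x => q.θo A B (t,x)) s1.cont s2.cont).trans (add_le_add ?_ ?_)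
  · refine conc q hp he hA hε (q.lip_l h hL hl) (q.lip_σ h hL hσ) (by positivity) fun t x => ?_
    refine (q.θp_bd hC (t,x)).trans ?_
    rw [← hc1]
    have := q.y0 (t,x)
    gcongr
  · exact LsLpT_bd he hp (by positivity) fun t x => q.θo_bd hC _

theorem w_norm (hB : SP B) (hC : Cb A B ρ u C) {p : ℝ} (hp : 1 ≤ p) {e : ℝ≥0∞} (he : 1 ≤ e) (hε : 0 ≤ ε)
    (h : ∀ z z', |B z' - B z| ≤ L * ‖z' - z‖) (hL : 0 < L) (hl : L * (q.l:ℝ)⁻¹ ≤ ε) (hσ : L * (q.σ:ℝ)⁻¹ ≤ ε) (hη : q.η * C ≤ ε)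
    (hc2 : q.c2 = q.κ ^ (e.toReal⁻¹) * (q.μ^(d-1)) ^ (1/p)) :
    LsLpT 1 e (ENNReal.ofReal p) (fun t x => (fun k => q.w B k (t,x) : Vec d)) ≤ ENNReal.ofReal (Bb d) * (LsLpT 1 e (ENNReal.ofReal p) (fun t x => B (t,x)) + ENNReal.ofReal (3 * ε)) := by
  have hb := one_le_Bb d
  have hc0 := q.h2
  refine conc q hp he hB hε (q.lip_l h hL hl) (q.lip_σ h hL hσ) (by positivity) fun t x => ?_
  have := q.y0 (t,x)
  rw [← hc2, pi_norm_le_iff_of_nonneg (by positivity)]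
  intro k
  refine (q.w_bd hB hC k (t,x)).trans ?_
  gcongr
end Par

theorem expo {D p qq β : ℝ} (hD : 0 < D) (hp : 1 < p) (hβ : β = (p - 1) * D / (4 * p * (p + 1)))
    (hpq : 1 / p + 1 / qq > 1 - (p - 1) / (4 * (p + 1) * p)) :
    ∃ m a : ℝ, 0 < m ∧ 0 < a ∧ a ≤ D * (1/p) ∧ a ≤ D * (1 - 1/p) ∧ a ≤ 1 ∧ a ≤ 1 + D * (1 - 1/p) - m ∧
      a ≤ m * ((1 + 2 * β) / (1 + 4 * β)) - 1 - D * (1 - 1/p - 1/qq) := by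
  have hp1 : 0 < p - 1 := by linarith
  have hp0 : 0 < p := by linarith
  have hβ0 : 0 < β := by rw [hβ]; positivity
  have e1 : D * (1 - 1/p) = 4 * (p + 1) * β := by rw [hβ]; field_simp
  have e2 : D * (1 - 1/p - 1/qq) < β := by
    have : β = D * ((p - 1) / (4 * (p + 1) * p)) := by rw [hβ]; field_simp
    rw [this]
    apply mul_lt_mul_of_pos_left _ hD; linarith
  set m := (1 + β) * (1 + 4 * β) / (1 + 2 * β) with hm
  have e3 : m * ((1 + 2 * β) / (1 + 4 * β)) = 1 + β := by rw [hm]; field_simp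
  have e4 : m < 1 + 8 * β := by
    rw [hm, div_lt_iff₀ (by positivity)]; nlinarith
  have e5 : 8 * β ≤ 4 * (p + 1) * β := by nlinarith
  have f1 : 0 < D * (1/p) := by positivity
  have f2 : 0 < D * (1 - 1/p) := by rw [e1]; positivity
  have f3 : 0 < 1 + D * (1 - 1/p) - m := by linarith
  have f4 : 0 < m * ((1 + 2 * β) / (1 + 4 * β)) - 1 - D * (1 - 1/p - 1/qq) := by rw [e3]; linarith
  refine ⟨m, min (min (min (D * (1/p)) (D * (1 - 1/p))) 1) (min (1 + D * (1 - 1/p) - m) (m * ((1 + 2 * β) / (1 + 4 * β)) - 1 - D * (1 - 1/p - 1/qq))),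
    by positivity, by simp only [lt_min_iff]; exact ⟨⟨⟨f1, f2⟩, one_pos⟩, f3, f4⟩, ?_, ?_, ?_, ?_, ?_⟩
  · exact (min_le_left _ _).trans ((min_le_left _ _).trans (min_le_left _ _))
  · exact (min_le_left _ _).trans ((min_le_left _ _).trans (min_le_right _ _))
  · exact (min_le_left _ _).trans (min_le_right _ _)
  · exact (min_le_right _ _).trans (min_le_left _ _)
  · exact (min_le_right _ _).trans (min_le_right _ _)

theorem par_exists {d : ℕ} (hd : 3 ≤ d) {p s qq st m a k0 : ℝ} (hp : 1 < p) (hs : 1 ≤ s) (hst : 1 - 1/s + k0/s ≤ 1/st)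
    (hm : 0 < m) (ha : 0 < a) (a1 : a ≤ ((d-1 : ℕ):ℝ) * (1/p)) (a2 : a ≤ ((d-1 : ℕ):ℝ) * (1 - 1/p)) (a3 : a ≤ 1) (a4 : a ≤ 1 + ((d-1 : ℕ):ℝ) * (1 - 1/p) - m)
    (a5 : a ≤ m * k0 - 1 - ((d-1 : ℕ):ℝ) * (1 - 1/p - 1/qq)) (i : Fin d) {μ : ℝ} (hμ : 1 ≤ μ) {l σ : ℕ} (hl : 1 ≤ l) (hσ : 1 ≤ σ) :
    ∃ q : Par d, q.i = i ∧ q.l = l ∧ q.σ = σ ∧ q.c1 = q.κ ^ (1/s) * (q.μ^(d-1)) ^ (1/p) ∧ q.c2 = q.κ ^ (1 - 1/s) * (q.μ^(d-1)) ^ (1 - 1/p) ∧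
      q.Ebd ≤ (3 + σ) * μ ^ (-a) + (σ:ℝ)⁻¹ + (l:ℝ)⁻¹ * d ∧ q.c1 * q.η * (q.μ⁻¹)^(d-1) ≤ μ ^ (-a) ∧
      (q.c2 * (q.l * q.μ)) * ((q.κ ^ (1/st))⁻¹ * ((q.μ^(d-1)) ^ (1/qq))⁻¹) ≤ l * μ ^ (-a) ∧ q.η ≤ μ ^ (-a) := by
  have hμ0 : 0 < μ := by linarith
  have hs0 : 0 < s := by linarith
  have hl0 : (1:ℝ) ≤ l := by exact_mod_cast hl
  have hl1 : (l:ℝ)⁻¹ ≤ 1 := inv_le_one_of_one_le₀ hl0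
  have hl2 : (0:ℝ) < (l:ℝ)⁻¹ := by positivity
  obtain ⟨j, hj⟩ : ∃ j : Fin d, j ≠ i := by
    have : Nontrivial (Fin d) := Fin.nontrivial_iff_two_le.2 (by omega)
    exact exists_ne i
  set D : ℝ := ((d-1 : ℕ):ℝ) with hD
  have hD0 : 0 ≤ D := Nat.cast_nonneg _
  have hPa : ∀ x y : ℝ, μ ^ x * μ ^ y = μ ^ (x + y) := fun x y => (Real.rpow_add hμ0 x y).symm
  have hPi : ∀ x : ℝ, (μ ^ x)⁻¹ = μ ^ (-x) := fun x => (Real.rpow_neg hμ0.le x).symm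
  have hPm : ∀ x y : ℝ, (μ ^ x) ^ y = μ ^ (x * y) := fun x y => (Real.rpow_mul hμ0.le x y).symm
  have hPn : μ ^ (d-1) = μ ^ D := (Real.rpow_natCast μ (d-1)).symm
  have hPl : ∀ {x y : ℝ}, x ≤ y → μ ^ x ≤ μ ^ y := fun h => Real.rpow_le_rpow_of_exponent_le hμ h
  have hPp : ∀ x : ℝ, 0 < μ ^ x := fun x => Real.rpow_pos_of_pos hμ0 x
  have es : s * (1/s) = 1 := by field_simp
  have e1 : (μ ^ (m * s)) ^ (1/s) * (μ^(d-1)) ^ (1/p) = μ ^ (m + D * (1/p)) := by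
    rw [hPn, hPm, hPm, hPa]; congr 1; rw [mul_assoc, es]; ring
  have e2 : (μ ^ (m * s)) ^ (1 - 1/s) * (μ^(d-1)) ^ (1 - 1/p) = μ ^ (m * (s - 1) + D * (1 - 1/p)) := by
    rw [hPn, hPm, hPm, hPa]; congr 2; rw [mul_assoc, mul_sub s, es]; ring
  have hms : 0 ≤ m * (s - 1) := mul_nonneg hm.le (by linarith)
  refine ⟨⟨i, j, hj, μ, hμ, μ ^ (m * s), Real.one_le_rpow hμ (by positivity), σ, hσ, l, hl, (μ ^ (m * s)) ^ (1/s) * (μ^(d-1)) ^ (1/p),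
    (μ ^ (m * s)) ^ (1 - 1/s) * (μ^(d-1)) ^ (1 - 1/p), by positivity, by positivity, ?_⟩, rfl, rfl, rfl, rfl, rfl, ?_, ?_, ?_, ?_⟩
  · rw [e1, e2, hPn, hPa, hPa]; congr 1; ring
  · simp only [Par.Ebd, Par.η, e1, e2]
    rw [inv_pow, hPn, hPi, hPi, hPa, hPa, mul_inv, show μ⁻¹ = μ ^ (-1:ℝ) from (Real.rpow_neg_one μ).symm]
    have t1 : μ ^ (m + D * (1/p)) * μ ^ (-(m * s) + -D) ≤ μ ^ (-a) := by rw [hPa]; apply hPl; nlinarith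
    have t2 : μ ^ (m * (s - 1) + D * (1 - 1/p)) * μ ^ (-(m * s) + -D) ≤ μ ^ (-a) := by rw [hPa]; apply hPl; nlinarith
    have t3 : μ ^ (m + D * (1 / p) + (m * (s - 1) + D * (1 - 1 / p))) * ((l:ℝ)⁻¹ * μ ^ (-1:ℝ)) * μ ^ (-(m * s) + -D) ≤ μ ^ (-a) := by
      calc _ = (l:ℝ)⁻¹ * μ ^ (-1:ℝ) := by
            rw [mul_assoc, mul_assoc, hPa, mul_left_comm, hPa]; congr 2; ring
        _ ≤ 1 * μ ^ (-a) := mul_le_mul hl1 (hPl (by linarith)) (hPp _).le zero_le_one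
        _ = _ := one_mul _
    have t4 : μ ^ (m + D * (1 / p)) * ((l:ℝ)⁻¹ * μ ^ (-1:ℝ)) * σ * μ ^ (m * s) * μ ^ (-(m * s) + -D) ≤ σ * μ ^ (-a) := by
      calc _ = ((l:ℝ)⁻¹ * σ) * μ ^ (m + D * (1/p) - 1 - D) := by
            have : μ ^ (m + D * (1/p) - 1 - D) = μ ^ (m + D * (1 / p)) * μ ^ (-1:ℝ) * μ ^ (m * s) * μ ^ (-(m * s) + -D) := by
              rw [hPa, hPa, hPa]; congr 1; ring
            rw [this]; ring
        _ ≤ (1 * σ) * μ ^ (-a) := by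
            have := hPl (x := m + D * (1/p) - 1 - D) (y := -a) (by nlinarith)
            gcongr
        _ = _ := by ring
    have hsum : (μ ^ (m + D * (1 / p)) + μ ^ (m * (s - 1) + D * (1 - 1 / p)) + μ ^ (m + D * (1 / p) + (m * (s - 1) + D * (1 - 1 / p))) * ((l:ℝ)⁻¹ * μ ^ (-1:ℝ)) +
        μ ^ (m + D * (1 / p)) * ((l:ℝ)⁻¹ * μ ^ (-1:ℝ)) * σ * μ ^ (m * s)) * μ ^ (-(m * s) + -D) ≤ (3 + σ) * μ ^ (-a) := by
      rw [add_mul, add_mul, add_mul]; linarith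
    linarith
  · simp only [Par.η, e1]
    rw [inv_pow, hPn, hPi, mul_inv, show μ⁻¹ = μ ^ (-1:ℝ) from (Real.rpow_neg_one μ).symm]
    calc _ = (l:ℝ)⁻¹ * μ ^ (m + D * (1/p) - 1 - D) := by
            have : μ ^ (m + D * (1/p) - 1 - D) = μ ^ (m + D * (1 / p)) * μ ^ (-1:ℝ) * μ ^ (-D) := by
              rw [hPa, hPa]; congr 1
            rw [this]; ring
      _ ≤ 1 * μ ^ (-a) := by
            have := hPl (x := m + D * (1/p) - 1 - D) (y := -a) (by nlinarith)
            gcongr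
      _ = _ := by ring
  · simp only [e2]
    rw [hPn, hPm, hPm, hPi, hPi, hPa]
    have hx : m * s * (1/st) ≥ m * (s - 1) + m * k0 := by
      have : m * s * (1 - 1/s + k0/s) ≤ m * s * (1/st) := by gcongr
      have e : m * s * (1 - 1/s + k0/s) = m * (s - 1) + m * k0 := by field_simp
      linarith
    calc _ = l * μ ^ (m * (s - 1) + D * (1 - 1 / p) + 1 + (-(m * s * (1 / st)) + -(D * (1 / qq)))) := by
          rw [Real.rpow_add hμ0 (m * (s - 1) + D * (1 - 1 / p) + 1), Real.rpow_add hμ0 (m * (s - 1) + D * (1 - 1 / p)) 1, Real.rpow_one]; ring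
      _ ≤ _ := by
          apply mul_le_mul_of_nonneg_left (hPl ?_) (by positivity)
          have : D * (1 - 1/p - 1/qq) = D * (1 - 1/p) - D * (1/qq) := by ring
          linarith
  · simp only [Par.η]
    rw [mul_inv, show μ⁻¹ = μ ^ (-1:ℝ) from (Real.rpow_neg_one μ).symm]
    calc _ ≤ 1 * μ ^ (-a) := mul_le_mul hl1 (hPl (by linarith)) (hPp _).le zero_le_one
      _ = _ := one_mul _

theorem ev1 (K : ℝ) {ε : ℝ} (hε : 0 < ε) : ∀ᶠ n : ℕ in Filter.atTop, K * (n:ℝ)⁻¹ ≤ ε := by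
  have h : Filter.Tendsto (fun n : ℕ => K * (n:ℝ)⁻¹) Filter.atTop (nhds (K * 0)) :=
    (tendsto_inv_atTop_nhds_zero_nat (𝕜 := ℝ)).const_mul K
  rw [mul_zero] at h
  exact (h.eventually (gt_mem_nhds hε)).mono fun _ h => h.le

theorem ev2 (K : ℝ) {ε a : ℝ} (ha : 0 < a) (hε : 0 < ε) : ∀ᶠ μ : ℝ in Filter.atTop, K * μ ^ (-a) ≤ ε := by
  have h : Filter.Tendsto (fun μ : ℝ => K * μ ^ (-a)) Filter.atTop (nhds (K * 0)) :=
    (tendsto_rpow_neg_atTop ha).const_mul K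
  rw [mul_zero] at h
  exact (h.eventually (gt_mem_nhds hε)).mono fun _ h => h.le

/-- exponent data -/
structure Ex (d : ℕ) (p qq s st : ℝ) (s' : ℝ≥0∞) : Prop where
  hd : 3 ≤ d
  hp : 1 < p
  hq : 1 ≤ qq
  hs : 1 ≤ s
  hst : 1 ≤ st
  hs' : 1 ≤ s'
  hs'r : s'.toReal⁻¹ = 1 - 1/s
  ex : ∃ k0 m a : ℝ, 1 - 1/s + k0/s ≤ 1/st ∧ 0 < m ∧ 0 < a ∧ a ≤ ((d-1 : ℕ):ℝ) * (1/p) ∧ a ≤ ((d-1 : ℕ):ℝ) * (1 - 1/p) ∧ a ≤ 1 ∧ a ≤ 1 + ((d-1 : ℕ):ℝ) * (1 - 1/p) - m ∧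
    a ≤ m * k0 - 1 - ((d-1 : ℕ):ℝ) * (1 - 1/p - 1/qq)

theorem core {d : ℕ} {p qq s st : ℝ} {s' : ℝ≥0∞} (X : Ex d p qq s st s') (i : Fin d) {ρ A B : W d → ℝ} {u : Fin d → W d → ℝ}
    (hρ : SP ρ) (hu : ∀ k, SP (u k)) (hA : SP A) (hB : SP B) {ε : ℝ} (hε : 0 < ε) :
    ∃ (θ : W d → ℝ) (w E : Fin d → W d → ℝ), SP θ ∧ (∀ k, SP (w k)) ∧ (∀ k, SP (E k)) ∧ (∀ z, ∑ k, dd (eS k) (w k) z = 0) ∧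
      (∀ z, dd eT θ z + ∑ k, dd (eS k) (fun z => θ z * u k z + ρ z * w k z + θ z * w k z) z - dd (eS i) (fun z => A z * B z) z
        = ∑ k, dd (eS k) (E k) z) ∧
      LsLpT 1 (ENNReal.ofReal s) (ENNReal.ofReal p) (fun t x => θ (t,x)) ≤
        ENNReal.ofReal (Bb d) * LsLpT 1 (ENNReal.ofReal s) (ENNReal.ofReal p) (fun t x => A (t,x)) + ENNReal.ofReal ε ∧
      LsLpT 1 s' (ENNReal.ofReal (p/(p-1))) (fun t x => (fun k => w k (t,x) : Vec d)) ≤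
        ENNReal.ofReal (Bb d) * LsLpT 1 s' (ENNReal.ofReal (p/(p-1))) (fun t x => B (t,x)) + ENNReal.ofReal ε ∧
      LsW1qT 1 (ENNReal.ofReal st) (ENNReal.ofReal qq) (fun t x => (fun k => w k (t,x) : Vec d)) ≤ ENNReal.ofReal ε ∧
      LsLpT 1 1 1 (fun t x => (fun k => E k (t,x) : Vec d)) ≤ ENNReal.ofReal ε ∧
      (∀ t, ∫ x in fundCube d, θ (t,x) = 0) ∧
      (∀ t φ, ContDiff ℝ (⊤ : ℕ∞) φ → ZPer φ → |∫ x in fundCube d, θ (t,x) * φ x| ≤ ε * CkN 1 φ) ∧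
      (∀ t, (∀ x, A (t,x) = 0) → ∀ x, θ (t,x) = 0) := by
  obtain ⟨k0, m, a, hst, hm, ha, a1, a2, a3, a4, a5⟩ := X.ex
  obtain ⟨C, hC⟩ := Par.exists_Cb hA hB hρ hu
  obtain ⟨L1, hL1, h1⟩ := hA.lip
  obtain ⟨L2, hL2, h2⟩ := hB.lip
  have hb := one_le_Bb d
  have hc := hC.one
  have hp := X.hp
  have he0 : 0 < ε / (6 * Bb d) := by positivity
  have he4 : 0 < ε / 4 := by positivity
  obtain ⟨σ, hσ, b1, b2, b3, b4⟩ := ((Filter.eventually_ge_atTop 1).and ((ev1 L1 he0).and ((ev1 L2 he0).and ((ev1 (2*C) he4).and (ev1 (10 * (C^2 * Bb d ^2)) he4))))).exists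
  obtain ⟨l, hl, c1, c2, c3⟩ := ((Filter.eventually_ge_atTop 1).and ((ev1 L1 he0).and ((ev1 L2 he0).and (ev1 (10 * (C^2 * Bb d ^2) * d) he4)))).exists
  obtain ⟨μ, hμ, d1, d2, d3, d4⟩ := ((Filter.eventually_ge_atTop (1:ℝ)).and ((ev2 C ha he0).and ((ev2 (10 * (C^2 * Bb d ^2) * (3 + σ)) ha he4).and
    ((ev2 (C * Bb d) ha he4).and (ev2 ((4*d+2)*C*Bb d * l) ha hε))))).exists
  obtain ⟨q, rfl, rfl, rfl, q1, q2, q3, q4, q5, q6⟩ := par_exists X.hd hp X.hs hst hm ha a1 a2 a3 a4 a5 i hμ hl hσ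
  have hη : q.η * C ≤ ε / (6 * Bb d) := by
    rw [mul_comm]; exact (mul_le_mul_of_nonneg_left q6 (by linarith)).trans d1
  have e0 : Bb d * (3 * (ε / (6 * Bb d))) = ε / 2 := by field_simp; norm_num
  have hs0 : 0 < s := by linarith [X.hs]
  have hpp : 1 ≤ p / (p - 1) := by rw [le_div_iff₀ (by linarith)]; linarith
  refine ⟨q.θ A B, q.w B, q.E A B ρ u, q.θ_sp hA hB, q.w_sp hB, q.E_sp hA hB hρ hu, q.div_w hB, q.div_E hA hB hρ hu, ?_, ?_, ?_, ?_,
    q.θ_mean hA hB, ?_, q.θ_zero hA hB⟩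
  · refine (q.θ_norm hA hB hC hp.le (e := ENNReal.ofReal s) (by simpa using X.hs) he0.le h1 hL1 c1 b1 hη ?_).trans ?_
    · rw [ENNReal.toReal_ofReal hs0.le, q1, one_div s]
    · rw [mul_add, ← ENNReal.ofReal_mul (by linarith), e0, add_assoc, ← ENNReal.ofReal_add (by positivity) (by positivity)]
      gcongr; linarith
  · refine (q.w_norm hB hC hpp (e := s') X.hs' he0.le h2 hL2 c2 b2 hη ?_).trans ?_
    · rw [X.hs'r, q2]; congr 2; field_simp
    · rw [mul_add, ← ENNReal.ofReal_mul (by linarith), e0]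
      gcongr; linarith
  · refine (q.w_W1q hB hC X.hq X.hst).trans (ENNReal.ofReal_le_ofReal ?_)
    calc _ ≤ (4*d+2)*C*Bb d * (q.l * μ ^ (-a)) := by
          rw [mul_assoc ((4*d+2)*C*Bb d)]; apply mul_le_mul_of_nonneg_left q5; positivity
      _ ≤ ε := by rw [← mul_assoc]; exact d4
  · refine (q.E_L1 hA hB hC).trans (ENNReal.ofReal_le_ofReal ?_)
    calc _ ≤ 10 * (C^2 * Bb d ^2) * ((3 + q.σ) * μ ^ (-a) + (q.σ:ℝ)⁻¹ + (q.l:ℝ)⁻¹ * d) := by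
          apply mul_le_mul_of_nonneg_left q3; positivity
      _ = 10 * (C^2 * Bb d ^2) * (3 + q.σ) * μ ^ (-a) + 10 * (C^2 * Bb d ^2) * (q.σ:ℝ)⁻¹ + 10 * (C^2 * Bb d ^2) * d * (q.l:ℝ)⁻¹ := by ring
      _ ≤ ε := by linarith
  · intro t φ hφ hφp
    refine (q.θ_pair hA hB hC t hφ hφp).trans (mul_le_mul_of_nonneg_right ?_ (CkN_nonneg _ _))
    have : C*Bb d*(q.c1*q.η*(q.μ⁻¹)^(d-1)) ≤ C * Bb d * μ ^ (-a) := mul_le_mul_of_nonneg_left q4 (by positivity)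
    linarith

theorem hconj_inv {p : ℝ} (hp : 1 ≤ p) {p' : ℝ≥0∞} (hp' : 1 / ENNReal.ofReal p + 1 / p' = 1) : p'⁻¹ = ENNReal.ofReal (1 - 1/p) := by
  have hp0 : 0 < p := by linarith
  have e1 : 1 / ENNReal.ofReal p = ENNReal.ofReal (1/p) := by
    rw [one_div, one_div, ENNReal.ofReal_inv_of_pos hp0]
  have e2 : ENNReal.ofReal (1/p) + ENNReal.ofReal (1 - 1/p) = 1 := by
    rw [← ENNReal.ofReal_add (by positivity) (by rw [sub_nonneg, div_le_one hp0]; exact hp)]; simp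
  rw [e1, one_div p'] at hp'
  exact (ENNReal.add_right_inj ENNReal.ofReal_ne_top).1 (hp'.trans e2.symm)

theorem p'_eq {p : ℝ} (hp : 1 < p) {p' : ℝ≥0∞} (hp' : 1 / ENNReal.ofReal p + 1 / p' = 1) : p' = ENNReal.ofReal (p/(p-1)) := by
  have hp0 : 0 < p := by linarith
  have hp1 : 0 < p - 1 := by linarith
  rw [← _root_.inv_inv p', hconj_inv hp.le hp', ← ENNReal.ofReal_inv_of_pos]
  · congr 1; field_simp
  · rw [sub_pos, div_lt_one hp0]; exact hp

theorem mkEx (d : ℕ) (hd : 3 ≤ d)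
    (p q s st : ℝ) (hp : 1 < p) (hq : 1 ≤ q) (hs : 1 ≤ s) (hst : 1 ≤ st)
    (s' : ℝ≥0∞)
    (hs' : 1 / ENNReal.ofReal s + 1 / s' = 1)
    (β : ℝ) (hβ : β = (p - 1) * (d - 1) / (4 * p * (p + 1)))
    (hpq : 1 / p + 1 / q > 1 - (p - 1) / (4 * (p + 1) * p))
    (hst2 : ENNReal.ofReal st ≤
      ENNReal.ofReal s /
        (ENNReal.ofReal s / s' + ENNReal.ofReal ((1 + 2 * β) / (1 + 4 * β)))) : Ex d p q s st s' := by
  have hs0 : 0 < s := by linarith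
  have hi := hconj_inv hs hs'
  have hD : ((d-1:ℕ):ℝ) = (d:ℝ) - 1 := by rw [Nat.cast_sub (by omega)]; simp
  have hD0 : (0:ℝ) < ((d-1:ℕ):ℝ) := by exact_mod_cast (by omega : 0 < d - 1)
  have h1s : 0 ≤ 1 - 1/s := by rw [sub_nonneg, div_le_one hs0]; exact hs
  rw [← hD] at hβ
  obtain ⟨m, a, h⟩ := expo hD0 hp hβ hpq
  have hβ0 : 0 < β := by rw [hβ]; have : 0 < p - 1 := by linarith
                         positivity
  refine ⟨hd, hp, hq, hs, hst, ?_, ?_, (1 + 2 * β) / (1 + 4 * β), m, a, ?_, h⟩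
  · rw [← ENNReal.inv_le_inv, hi, _root_.inv_one, ENNReal.ofReal_le_one]
    have : 0 < 1/s := by positivity
    linarith
  · rw [← ENNReal.toReal_inv, hi, ENNReal.toReal_ofReal h1s]
  · set k0 := (1 + 2 * β) / (1 + 4 * β) with hk
    have hk0 : 0 < k0 := by positivity
    have hm : ENNReal.ofReal s * ENNReal.ofReal (1 - 1/s) = ENNReal.ofReal (s - 1) := by
      rw [← ENNReal.ofReal_mul hs0.le]; congr 1; field_simp
    rw [ENNReal.div_eq_inv_mul (b := s'), hi, mul_comm, hm, ← ENNReal.ofReal_add (by linarith) hk0.le,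
      ← ENNReal.ofReal_div_of_pos (by linarith), ENNReal.ofReal_le_ofReal_iff (by apply div_nonneg <;> linarith), le_div_iff₀ (by linarith)] at hst2
    rw [le_div_iff₀ (by linarith)]
    have : (1 - 1/s + k0/s) * st = (st * (s - 1 + k0)) / s := by field_simp
    rw [this, div_le_one hs0]; exact hst2

theorem tint_der {d : ℕ} {F : W d → ℝ} (hF : SP F) (t : ℝ) :
    HasDerivAt (fun t => ∫ x in fundCube d, F (t,x)) (∫ x in fundCube d, dd eT F (t,x)) t := by
  obtain ⟨C, hC0, hC⟩ := (hF.dd eT).bdd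
  refine (hasDerivAt_integral_of_dominated_loc_of_deriv_le (F := fun t x => F (t,x)) (F' := fun t x => dd eT F (t,x)) (s := Set.univ) (bound := fun _ => C) Filter.univ_mem
    (Filter.Eventually.of_forall fun t => (slice_c hF t).aestronglyMeasurable) (slice_int (slice_c hF t)) (slice_c (hF.dd eT) t).aestronglyMeasurable
    (ae_of_all _ fun x t _ => hC (t,x)) (integrable_const _) (ae_of_all _ fun x t _ => ?_)).2
  have h1 : HasDerivAt (fun t : ℝ => ((t, x) : W d)) (1, 0) t := (hasDerivAt_id t).prodMk (hasDerivAt_const t x)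
  exact (hF.df (t,x)).hasFDerivAt.comp_hasDerivAt t h1

theorem tint_n {d : ℕ} (n : ℕ) : ∀ {F : W d → ℝ}, SP F → ContDiff ℝ n (fun t => ∫ x in fundCube d, F (t,x)) := by
  induction n with
  | zero =>
    intro F hF
    simp only [CharP.cast_eq_zero, contDiff_zero]
    exact continuous_iff_continuousAt.2 fun t => (tint_der hF t).continuousAt
  | succ n ih =>
    intro F hF
    push_cast
    rw [contDiff_succ_iff_deriv]
    refine ⟨fun t => (tint_der hF t).differentiableAt, by simp, ?_⟩
    rw [show deriv (fun t => ∫ x in fundCube d, F (t,x)) = fun t => ∫ x in fundCube d, dd eT F (t,x) from funext fun t => (tint_der hF t).deriv]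
    exact ih (hF.dd eT)

theorem tint_sp {d : ℕ} {F : W d → ℝ} (hF : SP F) : SP (fun z : W d => ∫ x in fundCube d, F (z.1,x)) := by
  refine SP_time (f := fun t => ∫ x in fundCube d, F (t,x)) (contDiff_infty.2 fun n => tint_n n hF) fun t => ?_
  simp only [hF.pt]

theorem SP.rpow {d : ℕ} {F : W d → ℝ} (hF : SP F) (h0 : ∀ z, 0 < F z) (a : ℝ) : SP (fun z => F z ^ a) :=
  ⟨hF.sm.rpow_const_of_ne fun z => (h0 z).ne', fun t x => by simp only [hF.pt], fun t x k => by simp only [hF.px]⟩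

theorem gen_root {α : Type*} [MeasurableSpace α] (μ : Measure α) [IsProbabilityMeasure μ] {e : ℝ≥0∞} (he : 1 ≤ e) {g : α → ℝ} (hg : ∀ x, 0 ≤ g x)
    (hi : Integrable g μ) {a : ℝ} (ha : 0 ≤ a) :
    eLpGen μ e (fun x => ENNReal.ofReal (a * g x ^ (e.toReal⁻¹))) ≤ ENNReal.ofReal (a * (∫ x, g x ∂μ) ^ (e.toReal⁻¹)) := by
  by_cases h : e = ∞
  · subst h
    simp only [ENNReal.toReal_top, _root_.inv_zero, Real.rpow_zero, gen_const μ he]; exact le_rfl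
  · have hr : 0 < e.toReal := ENNReal.toReal_pos (zero_lt_one.trans_le he).ne' h
    unfold eLpGen
    rw [if_neg h]
    have : ∀ x, ENNReal.ofReal (a * g x ^ (e.toReal⁻¹)) ^ e.toReal = ENNReal.ofReal (a ^ e.toReal) * ENNReal.ofReal (g x) := by
      intro x
      rw [ENNReal.ofReal_rpow_of_nonneg (mul_nonneg ha (Real.rpow_nonneg (hg x) _)) hr.le, Real.mul_rpow ha (Real.rpow_nonneg (hg x) _),
        ← Real.rpow_mul (hg x), inv_mul_cancel₀ hr.ne', Real.rpow_one, ENNReal.ofReal_mul (by positivity)]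
    simp_rw [this]
    rw [lintegral_const_mul' _ _ ofReal_ne_top, ← ofReal_integral_eq_lintegral_ofReal hi (ae_of_all _ hg), ← ENNReal.ofReal_mul (by positivity),
      ENNReal.ofReal_rpow_of_nonneg (mul_nonneg (by positivity) (integral_nonneg hg)) (by positivity), Real.mul_rpow (by positivity) (integral_nonneg hg),
      ← Real.rpow_mul ha, mul_one_div_cancel hr.ne', Real.rpow_one, one_div]

theorem LsLpT_root {d : ℕ} {E : Type*} [NormedAddCommGroup E] {g : W d → ℝ} (hg : SP g) (h0 : ∀ z, 0 < g z) {r : ℝ} (hr : 1 ≤ r) {e : ℝ≥0∞} (he : 1 ≤ e)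
    {c : ℝ} (hc : 0 ≤ c) {f : ℝ → Vec d → E}
    (hf : ∀ t x, ‖f t x‖ ≤ c * (∫ x in fundCube d, g (t,x)) ^ (e.toReal⁻¹ - r⁻¹) * g (t,x) ^ (r⁻¹)) :
    LsLpT 1 e (ENNReal.ofReal r) f ≤ ENNReal.ofReal (c * (∫ t in Set.Ioo (0:ℝ) 1, ∫ x in fundCube d, g (t,x)) ^ (e.toReal⁻¹)) := by
  have hm0 : ∀ t, 0 < ∫ x in fundCube d, g (t,x) := by
    intro t
    rw [integral_pos_iff_support_of_nonneg (fun x => (h0 _).le) (slice_int (slice_c hg t))]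
    have : Function.support (fun x => g (t,x)) = Set.univ := Set.eq_univ_of_forall fun x => (h0 _).ne'
    rw [this, measure_univ]; exact one_pos
  have hr0 : 0 < r := by linarith
  have hmc : Continuous fun t => ∫ x in fundCube d, g (t,x) := (tint_n 0 hg).continuous
  refine le_trans (eLpGen_mono _ _ fun t => ?_) (gen_root (volume.restrict (Set.Ioo (0:ℝ) 1)) he (fun t => (hm0 t).le)
    ((hmc.continuousOn.integrableOn_compact (isCompact_Icc (a := (0:ℝ)) (b := 1))).mono_set Set.Ioo_subset_Icc_self) hc)
  have hm := hm0 t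
  set m := ∫ x in fundCube d, g (t,x)
  have hr' : 1 ≤ ENNReal.ofReal r := by simpa using hr
  have hrr : (ENNReal.ofReal r).toReal = r := ENNReal.toReal_ofReal hr0.le
  have := gen_root (volume.restrict (fundCube d)) hr' (g := fun x => g (t,x)) (fun x => (h0 _).le) (slice_int (slice_c hg t)) (a := c * m ^ (e.toReal⁻¹ - r⁻¹)) (by positivity)
  rw [hrr] at this
  refine (eLpGen_mono _ _ fun x => ?_).trans (this.trans (le_of_eq ?_))
  · rw [nn_eq]; exact ENNReal.ofReal_le_ofReal (hf t x)
  · change ENNReal.ofReal (c * m ^ (e.toReal⁻¹ - r⁻¹) * m ^ r⁻¹) = _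
    rw [mul_assoc, ← Real.rpow_add hm]; congr 3; ring

/-- time cutoff -/
noncomputable def zt (K t : ℝ) : ℝ := Real.smoothTransition (K * Real.sin (Real.pi * t) ^ 2 - 1)
theorem zt_sp {d : ℕ} (K : ℝ) : SP (fun z : W d => zt K z.1) := by
  refine SP_time ?_ fun t => ?_
  · exact Real.smoothTransition.contDiff.comp (by fun_prop)
  · unfold zt; rw [mul_add, mul_one, Real.sin_add_pi, neg_sq]
theorem zt_nn (K t : ℝ) : 0 ≤ zt K t := Real.smoothTransition.nonneg _
theorem zt_le (K t : ℝ) : zt K t ≤ 1 := Real.smoothTransition.le_one _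
theorem zt_zero {K : ℝ} (hK : 0 < K) : ∃ r : ℝ, 0 < r ∧ ∀ t ∈ Set.Icc (0:ℝ) 1, t ∉ Set.Icc r (1 - r) → zt K t = 0 := by
  have hc : Filter.Tendsto (fun t : ℝ => K * Real.sin (Real.pi * t) ^ 2) (nhds 0) (nhds (K * Real.sin (Real.pi * 0) ^ 2)) :=
    Continuous.tendsto (by fun_prop) 0
  simp only [mul_zero, Real.sin_zero, ne_eq, OfNat.ofNat_ne_zero, not_false_eq_true, zero_pow] at hc
  obtain ⟨r, hr, h⟩ := Metric.eventually_nhds_iff.1 (hc.eventually (gt_mem_nhds one_pos))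
  refine ⟨r, hr, fun t ht hn => ?_⟩
  have key : K * Real.sin (Real.pi * t) ^ 2 < 1 := by
    by_cases h1 : r ≤ t
    · have h2 : 1 - r < t := by
        by_contra h3; exact hn ⟨h1, not_lt.1 h3⟩
      have := @h (1 - t) (by rw [Real.dist_eq, sub_zero, abs_of_nonneg (by linarith [ht.2])]; linarith)
      rwa [mul_sub, mul_one, Real.sin_pi_sub] at this
    · exact h (by rw [Real.dist_eq, sub_zero, abs_of_nonneg ht.1]; exact not_le.1 h1)
  exact Real.smoothTransition.zero_of_nonpos (by linarith)

theorem zt_int {C τ : ℝ} (hC : 0 < C) (hτ : 0 < τ) : ∃ K : ℝ, 0 < K ∧ ∫⁻ t in Set.Ioo (0:ℝ) 1, ENNReal.ofReal (C * (1 - zt K t ^ 2)) ≤ ENNReal.ofReal τ := by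
  have h : Filter.Tendsto (fun n : ℕ => ∫⁻ t in Set.Ioo (0:ℝ) 1, ENNReal.ofReal (C * (1 - zt n t ^ 2))) Filter.atTop (nhds (∫⁻ t in Set.Ioo (0:ℝ) 1, 0)) := by
    refine tendsto_lintegral_of_dominated_convergence (fun _ => ENNReal.ofReal C) (fun n => ?_) (fun n => ae_of_all _ fun t => ?_) ?_ ?_
    · have : Continuous fun t => zt n t := Real.smoothTransition.continuous.comp (by fun_prop)
      exact (ENNReal.continuous_ofReal.comp (by fun_prop)).measurable
    · apply ENNReal.ofReal_le_ofReal
      have := sq_nonneg (zt n t)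
      nlinarith
    · simp
    · refine (ae_restrict_iff' measurableSet_Ioo).2 (ae_of_all _ fun t ht => ?_)
      refine tendsto_const_nhds.congr' ?_
      have hs : 0 < Real.sin (Real.pi * t) := Real.sin_pos_of_pos_of_lt_pi (mul_pos Real.pi_pos ht.1) (by nlinarith [Real.pi_pos, ht.2])
      obtain ⟨n0, hn0⟩ := exists_nat_ge (2 / Real.sin (Real.pi * t) ^ 2)
      filter_upwards [Filter.eventually_ge_atTop n0] with n hn
      have : zt n t = 1 := by
        apply Real.smoothTransition.one_of_one_le
        have h1 : 2 / Real.sin (Real.pi * t) ^ 2 ≤ n := hn0.trans (by exact_mod_cast hn)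
        rw [div_le_iff₀ (by positivity)] at h1
        linarith
      rw [this]; simp
  rw [lintegral_zero] at h
  obtain ⟨n, h1, h2⟩ := ((Filter.eventually_ge_atTop 1).and (h.eventually (gt_mem_nhds (ENNReal.ofReal_pos.2 hτ)))).exists
  exact ⟨n, by exact_mod_cast h1, h2.le⟩

theorem LsLpT_11 {d : ℕ} {g : W d → ℝ} (hg : SP g) (h0 : ∀ z, 0 < g z) :
    LsLpT 1 1 1 (fun t x => g (t,x)) = ENNReal.ofReal (∫ t in Set.Ioo (0:ℝ) 1, ∫ x in fundCube d, g (t,x)) := by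
  have hmc : Continuous fun t => ∫ x in fundCube d, g (t,x) := (tint_n 0 hg).continuous
  rw [ofReal_integral_eq_lintegral_ofReal ((hmc.continuousOn.integrableOn_compact (isCompact_Icc (a := (0:ℝ)) (b := 1))).mono_set Set.Ioo_subset_Icc_self)
    (ae_of_all _ fun t => integral_nonneg fun x => (h0 _).le)]
  unfold LsLpT spLp eLpGen
  simp only [ENNReal.one_ne_top, if_false, ENNReal.toReal_one, ENNReal.rpow_one, div_one]
  refine lintegral_congr fun t => ?_
  rw [ofReal_integral_eq_lintegral_ofReal (slice_int (slice_c hg t)) (ae_of_all _ fun x => (h0 _).le)]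
  refine lintegral_congr fun x => ?_
  rw [nn_eq, Real.norm_of_nonneg (h0 _).le]

theorem L1_time {d : ℕ} {E : Type*} [NormedAddCommGroup E] {f : ℝ → Vec d → E} {c : ℝ → ℝ} (hc : ∀ t, 0 ≤ c t) (h : ∀ t x, ‖f t x‖ ≤ c t) :
    LsLpT 1 1 1 f ≤ ∫⁻ t in Set.Ioo (0:ℝ) 1, ENNReal.ofReal (c t) := by
  have h1 : ∀ t, spLp 1 (f t) ≤ ENNReal.ofReal (c t) := fun t => by
    refine (spLp_mono 1 (f' := fun _ => c t) fun x => (h t x).trans (le_abs_self _)).trans (le_of_eq ?_)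
    rw [spLp_const le_rfl, Real.norm_of_nonneg (hc t)]
  refine (eLpGen_mono _ _ h1).trans (le_of_eq ?_)
  unfold eLpGen
  simp

theorem ampl {d : ℕ} {p qq s st : ℝ} {s' : ℝ≥0∞} (X : Ex d p qq s st s') {R : ℝ → Vec d → Vec d} (hRc : Continuous (Function.uncurry R))
    {b : ℝ} (hb : 0 < b) (hR : LsLpT 1 1 1 R = ENNReal.ofReal b) {ν τ : ℝ} (hν : 0 < ν) (hτ : 0 < τ) (i : Fin d) (hr : SP (fun z => R z.1 z.2 i)) :
    ∃ A B : W d → ℝ, SP A ∧ SP B ∧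
      LsLpT 1 (ENNReal.ofReal s) (ENNReal.ofReal p) (fun t x => A (t,x)) ≤ ENNReal.ofReal (ν * 2 * b ^ (1/p)) ∧
      LsLpT 1 s' (ENNReal.ofReal (p/(p-1))) (fun t x => B (t,x)) ≤ ENNReal.ofReal (ν⁻¹ * 2 * b ^ (1-1/p)) ∧
      LsLpT 1 1 1 (fun t x => R t x i + A (t,x) * B (t,x)) ≤ ENNReal.ofReal τ ∧
      ∃ r : ℝ, 0 < r ∧ ∀ t ∈ Set.Icc (0:ℝ) 1, t ∉ Set.Icc r (1 - r) → ∀ x, A (t,x) = 0 := by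
  obtain ⟨C, hC0, hC⟩ := hr.bdd
  obtain ⟨K, hK, hKi⟩ := zt_int hC0 hτ
  obtain ⟨r0, hr0, hz⟩ := zt_zero hK
  set f : W d → ℝ := fun z => R z.1 z.2 i with hf
  set g : W d → ℝ := fun z => (f z * f z + b ^ 2) ^ ((1:ℝ)/2) with hgd
  have hg00 : ∀ z, 0 < f z * f z + b ^ 2 := fun z => add_pos_of_nonneg_of_pos (mul_self_nonneg _) (by positivity)
  have hg : SP g := ((hr.mul hr).add (SP.const (b^2))).rpow hg00 _
  have hg0 : ∀ z, 0 < g z := fun z => Real.rpow_pos_of_pos (hg00 z) _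
  have hg1 : ∀ z, |f z| ≤ g z := by
    intro z
    simp only [hgd]
    rw [← Real.sqrt_eq_rpow]
    apply Real.abs_le_sqrt; nlinarith
  have hg2 : ∀ z, g z ≤ ‖R z.1 z.2‖ + b := by
    intro z
    simp only [hgd]
    rw [← Real.sqrt_eq_rpow]
    have : |f z| ≤ ‖R z.1 z.2‖ := norm_le_pi_norm (R z.1 z.2) i
    apply Real.sqrt_le_iff.2 ⟨by positivity, ?_⟩
    have h2 := abs_nonneg (f z)
    have h3 : f z * f z = |f z| * |f z| := (abs_mul_abs_self _).symm
    rw [h3]; nlinarith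
  have hm0 : ∀ z : W d, 0 < ∫ x in fundCube d, g (z.1,x) := by
    intro z
    rw [integral_pos_iff_support_of_nonneg (fun x => (hg0 _).le) (slice_int (slice_c hg z.1))]
    have : Function.support (fun x => g (z.1,x)) = Set.univ := Set.eq_univ_of_forall fun x => (hg0 _).ne'
    rw [this, measure_univ]; exact one_pos
  have hp := X.hp
  have hs := X.hs
  have hp0 : 0 < p := by linarith
  have hs0 : 0 < s := by linarith
  have hpp : 1 ≤ p / (p - 1) := by rw [le_div_iff₀ (by linarith)]; linarith
  have hpi : (p / (p - 1))⁻¹ = 1 - 1/p := by field_simp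
  set I : ℝ := ∫ t in Set.Ioo (0:ℝ) 1, ∫ x in fundCube d, g (t,x) with hI
  have hI0 : 0 ≤ I := integral_nonneg fun t => integral_nonneg fun x => (hg0 _).le
  have hI2 : I ≤ 2 * b := by
    rw [← ENNReal.ofReal_le_ofReal_iff (by positivity), hI, ← LsLpT_11 hg hg0]
    refine (LsLpT_mono 1 1 1 (f' := fun t x => ‖R t x‖ + b) fun t x => ?_).trans ?_
    · rw [Real.norm_of_nonneg (hg0 _).le]; exact (hg2 (t,x)).trans (le_abs_self _)
    · have h1 := LsLpT_add (e := 1) le_rfl (r := 1) le_rfl (f := fun t x => ‖R t x‖) (g := fun _ (_ : Vec d) => b) hRc.norm continuous_const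
      have h2 := LsLpT_const (d := d) (e := 1) le_rfl (r := 1) le_rfl b
      simp only [ENNReal.ofReal_one] at h1 h2
      refine h1.trans ?_
      rw [h2, two_mul, ENNReal.ofReal_add hb.le hb.le, Real.norm_of_nonneg hb.le, ← hR]
      gcongr
      exact LsLpT_mono 1 1 1 fun t x => by simp
  set c : ℝ := ν * b ^ (1/p - 1/s) with hc
  have hc0 : 0 < c := by positivity
  have hpow : ∀ {y : ℝ}, 0 ≤ y → y ≤ 1 → I ^ y ≤ 2 * b ^ y := by
    intro y hy hy1
    calc I ^ y ≤ (2 * b) ^ y := Real.rpow_le_rpow hI0 hI2 hy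
      _ = 2 ^ y * b ^ y := Real.mul_rpow (by norm_num) hb.le
      _ ≤ 2 ^ (1:ℝ) * b ^ y := by gcongr; norm_num
      _ = _ := by rw [Real.rpow_one]
  have h1s : 0 < 1/s := by positivity
  have h1s' : 1/s ≤ 1 := by rw [div_le_one hs0]; exact hs
  refine ⟨fun z => c * ((∫ x in fundCube d, g (z.1,x)) ^ (1/s - 1/p) * (zt K z.1 * g z ^ (1/p))),
    fun z => -(c⁻¹ * ((∫ x in fundCube d, g (z.1,x)) ^ (1/p - 1/s) * (zt K z.1 * (f z * g z ^ (-(1/p)))))),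
    SP.cmul _ (((tint_sp hg).rpow hm0 _).mul ((zt_sp K).mul (hg.rpow hg0 _))),
    (SP.cmul _ (((tint_sp hg).rpow hm0 _).mul ((zt_sp K).mul (hr.mul (hg.rpow hg0 _))))).neg, ?_, ?_, ?_, r0, hr0, ?_⟩
  · refine (LsLpT_root hg hg0 hp.le (by simpa using hs) hc0.le fun t x => ?_).trans (ENNReal.ofReal_le_ofReal ?_)
    · rw [ENNReal.toReal_ofReal hs0.le, ← one_div s, ← one_div p]
      have h1 := hm0 (t,x)
      have h2 := hg0 (t,x)
      simp only at h1 ⊢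
      have h3 := zt_nn K t
      have h4 := zt_le K t
      have h5 : 0 < g (t,x) ^ (1/p) := Real.rpow_pos_of_pos h2 _
      have h6 := Real.rpow_pos_of_pos h1 (1/s - 1/p)
      rw [Real.norm_of_nonneg (by positivity), mul_assoc c]
      exact mul_le_mul_of_nonneg_left (mul_le_mul_of_nonneg_left (by nlinarith) h6.le) hc0.le
    · rw [ENNReal.toReal_ofReal hs0.le, ← one_div s]
      calc c * I ^ (1/s) ≤ c * (2 * b ^ (1/s)) := by gcongr; exact hpow h1s.le h1s'
        _ = ν * 2 * (b ^ (1/p - 1/s) * b ^ (1/s)) := by rw [hc]; ring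
        _ = _ := by rw [← Real.rpow_add hb]; congr 2; ring
  · refine (LsLpT_root hg hg0 hpp X.hs' (inv_pos.2 hc0).le fun t x => ?_).trans (ENNReal.ofReal_le_ofReal ?_)
    · rw [X.hs'r, hpi]
      have h1 := hm0 (t,x)
      have h2 := hg0 (t,x)
      simp only at h1 ⊢
      have h3 := zt_nn K t
      have h4 := zt_le K t
      have h5 : 0 < g (t,x) ^ (-(1/p)) := Real.rpow_pos_of_pos h2 _
      have h6 := Real.rpow_pos_of_pos h1 (1/p - 1/s)
      have h7 : g (t,x) ^ (1 - 1/p) = g (t,x) * g (t,x) ^ (-(1/p)) := by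
        rw [sub_eq_add_neg, Real.rpow_add h2, Real.rpow_one]
      rw [h7, norm_neg, norm_mul, norm_mul, norm_mul, norm_mul, Real.norm_of_nonneg (inv_pos.2 hc0).le, Real.norm_of_nonneg h6.le, Real.norm_of_nonneg h3,
        Real.norm_of_nonneg h5.le, show 1 - 1/s - (1 - 1/p) = 1/p - 1/s by ring, mul_assoc c⁻¹]
      have h8 : ‖f (t,x)‖ ≤ g (t,x) := hg1 (t,x)
      have h9 := norm_nonneg (f (t,x))
      refine mul_le_mul_of_nonneg_left (mul_le_mul_of_nonneg_left ?_ h6.le) (inv_pos.2 hc0).le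
      calc zt K t * (‖f (t,x)‖ * g (t,x) ^ (-(1/p))) ≤ 1 * (g (t,x) * g (t,x) ^ (-(1/p))) := by gcongr
        _ = _ := one_mul _
    · rw [X.hs'r]
      calc c⁻¹ * I ^ (1 - 1/s) ≤ c⁻¹ * (2 * b ^ (1 - 1/s)) := by gcongr; exact hpow (by linarith) (by linarith)
        _ = ν⁻¹ * 2 * (b ^ (-(1/p - 1/s)) * b ^ (1 - 1/s)) := by rw [hc, mul_inv, Real.rpow_neg hb.le]; ring
        _ = _ := by rw [← Real.rpow_add hb]; congr 2; ring
  · refine (L1_time (c := fun t => C * (1 - zt K t ^ 2)) (fun t => ?_) fun t x => ?_).trans hKi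
    · have h3 := zt_nn K t
      have h4 := zt_le K t
      apply mul_nonneg hC0.le; nlinarith
    · have h1 := hm0 (t,x)
      have h2 := hg0 (t,x)
      simp only at h1 ⊢
      have h3 := zt_nn K t
      have h4 := zt_le K t
      have e1 : (∫ x in fundCube d, g (t,x)) ^ (1/s - 1/p) * (∫ x in fundCube d, g (t,x)) ^ (1/p - 1/s) = 1 := by
        rw [← Real.rpow_add h1]; simp
      have e2 : g (t,x) ^ (1/p) * g (t,x) ^ (-(1/p)) = 1 := by
        rw [← Real.rpow_add h2]; simp
      have e3 : c * c⁻¹ = 1 := mul_inv_cancel₀ hc0.ne'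
      have : R t x i + c * ((∫ x in fundCube d, g (t,x)) ^ (1/s - 1/p) * (zt K t * g (t,x) ^ (1/p))) * -(c⁻¹ * ((∫ x in fundCube d, g (t,x)) ^ (1/p - 1/s) * (zt K t * (f (t,x) * g (t,x) ^ (-(1/p))))))
          = f (t,x) * (1 - zt K t ^ 2) := by
        calc _ = f (t,x) - (c * c⁻¹) * ((∫ x in fundCube d, g (t,x)) ^ (1/s - 1/p) * (∫ x in fundCube d, g (t,x)) ^ (1/p - 1/s)) * (g (t,x) ^ (1/p) * g (t,x) ^ (-(1/p))) * (f (t,x) * zt K t ^ 2) := by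
              simp only [hf]; ring
          _ = _ := by rw [e1, e2, e3]; ring
      rw [this, norm_mul, Real.norm_of_nonneg (r := 1 - zt K t ^ 2) (by nlinarith)]
      have h8 : ‖f (t,x)‖ ≤ C := hC (t,x)
      have h10 : 0 ≤ 1 - zt K t ^ 2 := by nlinarith
      gcongr
  · intro t ht hn x
    simp only [hz t ht hn]; ring

theorem L1_add {d : ℕ} {E : Type*} [NormedAddCommGroup E] {f g : ℝ → Vec d → E} (hf : Continuous (Function.uncurry f)) (hg : Continuous (Function.uncurry g)) :
    LsLpT 1 1 1 (fun t x => f t x + g t x) ≤ LsLpT 1 1 1 f + LsLpT 1 1 1 g := by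
  have := LsLpT_add (e := 1) le_rfl (r := 1) le_rfl hf hg
  simpa only [ENNReal.ofReal_one] using this

theorem L1_zero {d : ℕ} {E : Type*} [NormedAddCommGroup E] : LsLpT 1 1 1 (fun _ (_ : Vec d) => (0:E)) = 0 := by
  have := LsLpT_const (d := d) (E := E) (e := 1) le_rfl (r := 1) le_rfl 0
  simpa only [ENNReal.ofReal_one, norm_zero, ENNReal.ofReal_zero] using this

theorem W1q_add {d : ℕ} {e : ℝ≥0∞} (he : 1 ≤ e) {r : ℝ} (hr : 1 ≤ r) {f g : ℝ → Vec d → Vec d}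
    (hf : ContDiff ℝ (⊤ : ℕ∞) (Function.uncurry f)) (hg : ContDiff ℝ (⊤ : ℕ∞) (Function.uncurry g)) :
    LsW1qT 1 e (ENNReal.ofReal r) (fun t x => f t x + g t x) ≤ LsW1qT 1 e (ENNReal.ofReal r) f + LsW1qT 1 e (ENNReal.ofReal r) g := by
  have hr' : 1 ≤ ENNReal.ofReal r := by simpa using hr
  have m1 := spLp_meas hr hf.continuous
  have m2 := spLp_meas hr hg.continuous
  have m3 := spLp_meas hr (fd_cont hf)
  have m4 := spLp_meas hr (fd_cont hg)
  refine le_trans (eLpGen_mono _ _ fun t => ?_) (gen_add _ he (m1.add m3) (m2.add m4))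
  have f1 : ContDiff ℝ (⊤ : ℕ∞) (f t) := hf.comp (by fun_prop : ContDiff ℝ (⊤ : ℕ∞) fun x : Vec d => (t,x))
  have g1 : ContDiff ℝ (⊤ : ℕ∞) (g t) := hg.comp (by fun_prop : ContDiff ℝ (⊤ : ℕ∞) fun x : Vec d => (t,x))
  have e1 : fderiv ℝ (fun x => f t x + g t x) = fun x => fderiv ℝ (f t) x + fderiv ℝ (g t) x := by
    funext x
    exact fderiv_fun_add (f1.differentiable (by simp) x) (g1.differentiable (by simp) x)
  unfold W1qNorm
  rw [e1]
  have h1 := spLp_add hr' f1.continuous.aestronglyMeasurable g1.continuous.aestronglyMeasurable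
  have h2 := spLp_add hr' (f1.continuous_fderiv (by simp)).aestronglyMeasurable (g1.continuous_fderiv (by simp)).aestronglyMeasurable
  refine (add_le_add h1 h2).trans (le_of_eq ?_)
  exact add_add_add_comm _ _ _ _

theorem W1q_zero {d : ℕ} {e : ℝ≥0∞} (he : 1 ≤ e) {r : ℝ} (hr : 1 ≤ r) :
    LsW1qT 1 e (ENNReal.ofReal r) (fun _ (_ : Vec d) => (0 : Vec d)) = 0 := by
  have hr' : 1 ≤ ENNReal.ofReal r := by simpa using hr
  unfold LsW1qT W1qNorm
  have : fderiv ℝ (fun _ : Vec d => (0 : Vec d)) = fun _ => 0 := by funext x; simp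
  beta_reduce
  simp only [this, spLp_const hr', norm_zero, ENNReal.ofReal_zero, add_zero]
  exact gen_const _ he 0

theorem L1_vec {d : ℕ} {f : Fin d → W d → ℝ} (hf : ∀ k, Continuous (f k)) :
    LsLpT 1 1 1 (fun t x => (fun k => f k (t,x) : Vec d)) ≤ ∑ k, LsLpT 1 1 1 (fun t x => f k (t,x)) := by
  have h : ∀ S : Finset (Fin d), LsLpT 1 1 1 (fun t x => ∑ k ∈ S, |f k (t,x)|) ≤ ∑ k ∈ S, LsLpT 1 1 1 (fun t x => f k (t,x)) := by
    intro S
    induction S using Finset.induction_on with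
    | empty => simp only [Finset.sum_empty]; rw [L1_zero]
    | insert i S hi ih =>
      simp only [Finset.sum_insert hi]
      refine (L1_add (f := fun t x => |f i (t,x)|) (g := fun t x => ∑ k ∈ S, |f k (t,x)|) (hf i).abs ?_).trans (add_le_add ?_ ih)
      · exact continuous_finsetSum _ fun k _ => (hf k).abs
      · exact LsLpT_mono 1 1 1 fun t x => by simp
  refine (LsLpT_mono 1 1 1 fun t x => ?_).trans (h Finset.univ)
  have h0 : 0 ≤ ∑ k, |f k (t,x)| := Finset.sum_nonneg fun k _ => abs_nonneg _
  rw [Real.norm_of_nonneg h0, pi_norm_le_iff_of_nonneg h0]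
  intro k
  exact Finset.single_le_sum (f := fun k => |f k (t,x)|) (fun k _ => abs_nonneg _) (Finset.mem_univ k)

theorem vec_sm {d : ℕ} {w : Fin d → W d → ℝ} (hw : ∀ k, SP (w k)) : ContDiff ℝ (⊤ : ℕ∞) (Function.uncurry fun t x => (fun k => w k (t,x) : Vec d)) :=
  contDiff_pi.2 fun k => (hw k).sm

theorem iter {d : ℕ} {p qq s st : ℝ} {s' : ℝ≥0∞} (X : Ex d p qq s st s') {ρ : W d → ℝ} {u : Fin d → W d → ℝ} {A B : Fin d → W d → ℝ}
    (hρ : SP ρ) (hu : ∀ k, SP (u k)) (hA : ∀ k, SP (A k)) (hB : ∀ k, SP (B k)) {a b : ℝ≥0∞}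
    (ha : ∀ i, LsLpT 1 (ENNReal.ofReal s) (ENNReal.ofReal p) (fun t x => A i (t,x)) ≤ a)
    (hb : ∀ i, LsLpT 1 s' (ENNReal.ofReal (p/(p-1))) (fun t x => B i (t,x)) ≤ b) (S : Finset (Fin d)) : ∀ {ε : ℝ}, 0 < ε →
    ∃ (θ : W d → ℝ) (w E : Fin d → W d → ℝ), SP θ ∧ (∀ k, SP (w k)) ∧ (∀ k, SP (E k)) ∧ (∀ z, ∑ k, dd (eS k) (w k) z = 0) ∧
      (∀ z, dd eT θ z + ∑ k, dd (eS k) (fun z => θ z * u k z + ρ z * w k z + θ z * w k z) z - ∑ i ∈ S, dd (eS i) (fun z => A i z * B i z) z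
        = ∑ k, dd (eS k) (E k) z) ∧
      LsLpT 1 (ENNReal.ofReal s) (ENNReal.ofReal p) (fun t x => θ (t,x)) ≤ S.card * (ENNReal.ofReal (Bb d) * a) + ENNReal.ofReal ε ∧
      LsLpT 1 s' (ENNReal.ofReal (p/(p-1))) (fun t x => (fun k => w k (t,x) : Vec d)) ≤ S.card * (ENNReal.ofReal (Bb d) * b) + ENNReal.ofReal ε ∧
      LsW1qT 1 (ENNReal.ofReal st) (ENNReal.ofReal qq) (fun t x => (fun k => w k (t,x) : Vec d)) ≤ ENNReal.ofReal ε ∧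
      LsLpT 1 1 1 (fun t x => (fun k => E k (t,x) : Vec d)) ≤ ENNReal.ofReal ε ∧
      (∀ t, ∫ x in fundCube d, θ (t,x) = 0) ∧
      (∀ t φ, ContDiff ℝ (⊤ : ℕ∞) φ → ZPer φ → |∫ x in fundCube d, θ (t,x) * φ x| ≤ ε * CkN 1 φ) ∧
      (∀ t, (∀ i x, A i (t,x) = 0) → ∀ x, θ (t,x) = 0) := by
  have hp := X.hp
  have hpp : 1 ≤ p / (p - 1) := by rw [le_div_iff₀ (by linarith)]; linarith
  have hs : 1 ≤ ENNReal.ofReal s := by simpa using X.hs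
  have hst : 1 ≤ ENNReal.ofReal st := by simpa using X.hst
  induction S using Finset.induction_on with
  | empty =>
    intro ε hε
    refine ⟨fun _ => 0, fun _ _ => 0, fun _ _ => 0, SP.const 0, fun _ => SP.const 0, fun _ => SP.const 0, ?_, ?_, ?_, ?_, ?_, ?_, ?_, ?_, ?_⟩
    · intro z; simp [dd_const]
    · intro z; simp [dd_const]
    · rw [LsLpT_const hs hp.le]; simp
    · have := LsLpT_const (d := d) X.hs' hpp (0 : Vec d)
      rw [norm_zero, ENNReal.ofReal_zero] at this
      exact (le_of_eq this).trans zero_le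
    · exact (le_of_eq (W1q_zero hst X.hq)).trans zero_le
    · exact (le_of_eq (L1_zero (E := Vec d))).trans zero_le
    · simp
    · intro t φ _ _
      simp only [zero_mul, integral_zero, abs_zero]
      exact mul_nonneg hε.le (CkN_nonneg _ _)
    · simp
  | insert i S hi ih =>
    intro ε hε
    have hε2 : 0 < ε / 2 := by positivity
    have he2 : ENNReal.ofReal ε = ENNReal.ofReal (ε/2) + ENNReal.ofReal (ε/2) := by
      rw [← ENNReal.ofReal_add hε2.le hε2.le]; congr 1; ring
    obtain ⟨Θ, ω, Ω, h1, h2, h3, h4, h5, h6, h7, h8, h9, h10, h11, h12⟩ := ih hε2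
    obtain ⟨θ, w, E, k1, k2, k3, k4, k5, k6, k7, k8, k9, k10, k11, k12⟩ := core X i (hρ.add h1) (fun k => (hu k).add (h2 k)) (hA i) (hB i) hε2
    refine ⟨fun z => Θ z + θ z, fun k z => ω k z + w k z, fun k z => Ω k z + E k z, h1.add k1, fun k => (h2 k).add (k2 k), fun k => (h3 k).add (k3 k),
      ?_, ?_, ?_, ?_, ?_, ?_, ?_, ?_, ?_⟩
    · intro z
      simp only [fun k => dd_add (eS k) (h2 k) (k2 k), Finset.sum_add_distrib, h4, k4, add_zero]
    · intro z
      have e1 : ∀ k, (fun z => (Θ z + θ z) * u k z + ρ z * (ω k z + w k z) + (Θ z + θ z) * (ω k z + w k z)) =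
          fun z => (Θ z * u k z + ρ z * ω k z + Θ z * ω k z) + (θ z * (u k z + ω k z) + (ρ z + Θ z) * w k z + θ z * w k z) := by
        intro k; funext z; ring
      have p1 : ∀ k, SP (fun z => Θ z * u k z + ρ z * ω k z + Θ z * ω k z) := fun k =>
        ((h1.mul (hu k)).add (hρ.mul (h2 k))).add (h1.mul (h2 k))
      have p2 : ∀ k, SP (fun z => θ z * (u k z + ω k z) + (ρ z + Θ z) * w k z + θ z * w k z) := fun k =>
        ((k1.mul ((hu k).add (h2 k))).add ((hρ.add h1).mul (k2 k))).add (k1.mul (k2 k))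
      simp only [e1, fun k => dd_add (eS k) (p1 k) (p2 k), fun k => dd_add (eS k) (h3 k) (k3 k), dd_add eT h1 k1, Finset.sum_add_distrib, Finset.sum_insert hi]
      rw [← h5 z, ← k5 z]; ring
    · refine (LsLpT_add hs hp.le (f := fun t x => Θ (t,x)) (g := fun t x => θ (t,x)) h1.cont k1.cont).trans ((add_le_add h6 k6).trans ?_)
      rw [he2, Finset.card_insert_of_notMem hi]
      push_cast
      have := ha i
      calc _ ≤ (S.card * (ENNReal.ofReal (Bb d) * a) + ENNReal.ofReal (ε/2)) + (ENNReal.ofReal (Bb d) * a + ENNReal.ofReal (ε/2)) := by gcongr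
        _ = _ := by ring
    · refine (LsLpT_add X.hs' hpp (vec_sm h2).continuous (vec_sm k2).continuous).trans ((add_le_add h7 k7).trans ?_)
      rw [he2, Finset.card_insert_of_notMem hi]
      push_cast
      have := hb i
      calc _ ≤ (S.card * (ENNReal.ofReal (Bb d) * b) + ENNReal.ofReal (ε/2)) + (ENNReal.ofReal (Bb d) * b + ENNReal.ofReal (ε/2)) := by gcongr
        _ = _ := by ring
    · rw [he2]
      exact (W1q_add hst X.hq (vec_sm h2) (vec_sm k2)).trans (add_le_add h8 k8)
    · rw [he2]
      exact (L1_add (vec_sm h3).continuous (vec_sm k3).continuous).trans (add_le_add h9 k9)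
    · intro t
      rw [integral_add (slice_int (slice_c h1 t)) (slice_int (slice_c k1 t)), h10, k10, add_zero]
    · intro t φ hφ hφp
      have e1 : ∫ x in fundCube d, (Θ (t,x) + θ (t,x)) * φ x = (∫ x in fundCube d, Θ (t,x) * φ x) + ∫ x in fundCube d, θ (t,x) * φ x := by
        rw [← integral_add (slice_int2 (slice_c h1 t) hφ.continuous) (slice_int2 (slice_c k1 t) hφ.continuous)]
        simp only [add_mul]
      rw [e1]
      refine (abs_add_le _ _).trans ((add_le_add (h11 t φ hφ hφp) (k11 t φ hφ hφp)).trans (le_of_eq ?_))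
      ring
    · intro t ht x
      simp only [h12 t ht x, k12 t (ht i) x, add_zero]

/-- **Main iteration proposition** (Proposition 3.1): there exist a universal
constant `M > 0` and an integer `N` such that any smooth time-1-periodic solution
`(ρ,u,R)` of the continuity-defect equation on `[0,1] × 𝕋^d` can be perturbed,
for any `δ,ν > 0`, to a new smooth time-periodic solution `(ρ¹,u¹,R¹)`
satisfying `‖ρ¹−ρ‖_{L^s L^p} ≤ νM‖R‖_{L^1}^{1/p}`,
`‖u¹−u‖_{L^{s'} L^{p'}} ≤ ν⁻¹M‖R‖_{L^1}^{1/p'}`, `‖u¹−u‖_{L^{s̃} W^{1,q}} ≤ δ`,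
`‖R¹‖_{L^1} ≤ δ`, with `ρ¹−ρ` of zero spatial mean, small against `C^N` test
functions, and supported in time in some `[r,1−r]`. -/
theorem continuity_defect_iteration
    (d : ℕ) (hd : 3 ≤ d)
    (p q s st : ℝ) (hp : 1 < p) (hq : 1 ≤ q) (hs : 1 ≤ s) (hst : 1 ≤ st)
    (p' s' : ℝ≥0∞)
    (hp' : 1 / ENNReal.ofReal p + 1 / p' = 1)
    (hs' : 1 / ENNReal.ofReal s + 1 / s' = 1)
    (β : ℝ) (hβ : β = (p - 1) * (d - 1) / (4 * p * (p + 1)))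
    (hpq : 1 / p + 1 / q > 1 - (p - 1) / (4 * (p + 1) * p))
    (hst2 : ENNReal.ofReal st ≤
      ENNReal.ofReal s /
        (ENNReal.ofReal s / s' + ENNReal.ofReal ((1 + 2 * β) / (1 + 4 * β)))) :
    ∃ M : ℝ, 0 < M ∧ ∃ N : ℕ,
      ∀ (ρ : ℝ → Vec d → ℝ) (u R : ℝ → Vec d → Vec d),
        ContDiff ℝ (⊤ : ℕ∞) (Function.uncurry ρ) →
        ContDiff ℝ (⊤ : ℕ∞) (Function.uncurry u) →
        ContDiff ℝ (⊤ : ℕ∞) (Function.uncurry R) →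
        (∀ t, ZPer (ρ t)) → (∀ t, ZPer (u t)) → (∀ t, ZPer (R t)) →
        (∀ t x, ρ (t + 1) x = ρ t x) → (∀ t x, u (t + 1) x = u t x) →
        (∀ t x, R (t + 1) x = R t x) →
        (∀ t x, deriv (fun τ => ρ τ x) t + divV (fun y => ρ t y • u t y) x
          = divV (R t) x) →
        (∀ t x, divV (u t) x = 0) →
        ∀ δ ν : ℝ, 0 < δ → 0 < ν →
        ∃ (ρ₁ : ℝ → Vec d → ℝ) (u₁ R₁ : ℝ → Vec d → Vec d),
          ContDiff ℝ (⊤ : ℕ∞) (Function.uncurry ρ₁) ∧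
          ContDiff ℝ (⊤ : ℕ∞) (Function.uncurry u₁) ∧
          ContDiff ℝ (⊤ : ℕ∞) (Function.uncurry R₁) ∧
          (∀ t, ZPer (ρ₁ t)) ∧ (∀ t, ZPer (u₁ t)) ∧ (∀ t, ZPer (R₁ t)) ∧
          (∀ t x, ρ₁ (t + 1) x = ρ₁ t x) ∧ (∀ t x, u₁ (t + 1) x = u₁ t x) ∧
          (∀ t x, R₁ (t + 1) x = R₁ t x) ∧
          (∀ t x, deriv (fun τ => ρ₁ τ x) t + divV (fun y => ρ₁ t y • u₁ t y) x
            = divV (R₁ t) x) ∧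
          (∀ t x, divV (u₁ t) x = 0) ∧
          LsLpT 1 (ENNReal.ofReal s) (ENNReal.ofReal p)
              (fun t x => ρ₁ t x - ρ t x)
            ≤ ENNReal.ofReal (ν * M) * (LsLpT 1 1 1 R) ^ (1 / p) ∧
          LsLpT 1 s' p' (fun t x => u₁ t x - u t x)
            ≤ ENNReal.ofReal (ν⁻¹ * M) * (LsLpT 1 1 1 R) ^ (1 - 1 / p) ∧
          LsW1qT 1 (ENNReal.ofReal st) (ENNReal.ofReal q)
              (fun t x => u₁ t x - u t x) ≤ ENNReal.ofReal δ ∧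
          LsLpT 1 1 1 R₁ ≤ ENNReal.ofReal δ ∧
          (∀ t, (∫ x in fundCube d, (ρ₁ t x - ρ t x)) = 0) ∧
          (∀ t ∈ Set.Icc (0:ℝ) 1, ∀ φ : Vec d → ℝ,
            ContDiff ℝ (⊤ : ℕ∞) φ → ZPer φ →
            |∫ x in fundCube d, (ρ₁ t x - ρ t x) * φ x| ≤ δ * CkN N φ) ∧
          ∃ r : ℝ, 0 < r ∧ ∀ t ∈ Set.Icc (0:ℝ) 1,
            t ∉ Set.Icc r (1 - r) → ∀ x, ρ₁ t x = ρ t x := by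
  have X : Ex d p q s st s' := mkEx d hd p q s st hp hq hs hst s' hs' β hβ hpq hst2
  have hpe := p'_eq hp hp'
  subst hpe
  have hb1 := one_le_Bb d
  refine ⟨d * (Bb d * 2) + 1, by positivity, 1, ?_⟩
  intro ρ u R sρ su sR pρ pu pR tρ tu tR hcd hdiv δ ν hδ hν
  have Hρ : SP (fun z : W d => ρ z.1 z.2) := ⟨sρ, fun t x => tρ t x, fun t x k => pρ t x k⟩
  have Hu : ∀ k, SP (fun z : W d => u z.1 z.2 k) := fun k =>
    ⟨contDiff_pi.1 su k, fun t x => by simp only [tu], fun t x m => by simp only [pu t x m]⟩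
  have HR : ∀ k, SP (fun z : W d => R z.1 z.2 k) := fun k =>
    ⟨contDiff_pi.1 sR k, fun t x => by simp only [tR], fun t x m => by simp only [pR t x m]⟩
  have hfin : LsLpT 1 1 1 R ≠ ∞ := by
    obtain ⟨C, hC0, hC⟩ := per_bdd (F := fun z : W d => R z.1 z.2) sR.continuous tR pR
    have := LsLpT_bd (e := 1) le_rfl (r := 1) le_rfl hC0.le (f := R) fun t x => hC (t,x)
    rw [ENNReal.ofReal_one] at this
    exact (this.trans_lt ENNReal.ofReal_lt_top).ne
  by_cases h0 : LsLpT 1 1 1 R = 0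
  · refine ⟨ρ, u, R, sρ, su, sR, pρ, pu, pR, tρ, tu, tR, hcd, hdiv, ?_, ?_, ?_, ?_, ?_, ?_, 1, one_pos, fun _ _ _ _ => rfl⟩
    · simp only [sub_self]
      rw [LsLpT_const (by simpa using hs) hp.le]; simp
    · simp only [sub_self]
      have := LsLpT_const (d := d) X.hs' (r := p/(p-1)) (by rw [le_div_iff₀ (by linarith)]; linarith) (0 : Vec d)
      rw [norm_zero, ENNReal.ofReal_zero] at this
      exact (le_of_eq this).trans zero_le
    · simp only [sub_self]
      exact (le_of_eq (W1q_zero (by simpa using hst) hq)).trans zero_le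
    · rw [h0]; exact zero_le
    · simp
    · intro t _ φ _ _
      simp only [sub_self, zero_mul, integral_zero, abs_zero]
      exact mul_nonneg hδ.le (CkN_nonneg _ _)
  obtain ⟨b, hb, hRb⟩ : ∃ b : ℝ, 0 < b ∧ LsLpT 1 1 1 R = ENNReal.ofReal b :=
    ⟨(LsLpT 1 1 1 R).toReal, ENNReal.toReal_pos h0 hfin, (ENNReal.ofReal_toReal hfin).symm⟩
  have hd0 : (0:ℝ) < d := by exact_mod_cast (by omega : 0 < d)
  have hτ : 0 < δ / (2 * d) := by positivity
  choose A B hA hB a1 a2 a3 r0 a4 a5 using fun i => ampl X sR.continuous hb hRb hν hτ i (HR i)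
  set ε : ℝ := min (δ/2) (min (ν * b ^ (1/p)) (ν⁻¹ * b ^ (1 - 1/p))) with hε
  have hε0 : 0 < ε := by rw [hε]; simp only [lt_min_iff]; exact ⟨by positivity, by positivity, by positivity⟩
  have hε1 : ε ≤ δ / 2 := min_le_left _ _
  have hε2 : ε ≤ ν * b ^ (1/p) := (min_le_right _ _).trans (min_le_left _ _)
  have hε3 : ε ≤ ν⁻¹ * b ^ (1 - 1/p) := (min_le_right _ _).trans (min_le_right _ _)
  obtain ⟨θ, w, E, k1, k2, k3, k4, k5, k6, k7, k8, k9, k10, k11, k12⟩ := iter X Hρ Hu hA hB a1 a2 Finset.univ hε0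
  have PR : ∀ k, SP (fun z : W d => (R z.1 z.2 k + A k z * B k z) + E k z) := fun k => ((HR k).add ((hA k).mul (hB k))).add (k3 k)
  have Pρ : SP (fun z : W d => ρ z.1 z.2 + θ z) := Hρ.add k1
  have Pu : ∀ k, SP (fun z : W d => u z.1 z.2 k + w k z) := fun k => (Hu k).add (k2 k)
  refine ⟨fun t x => ρ t x + θ (t,x), fun t x => u t x + (fun k => w k (t,x)), fun t x k => (R t x k + A k (t,x) * B k (t,x)) + E k (t,x),
    Pρ.sm, contDiff_pi.2 fun k => (Pu k).sm, contDiff_pi.2 fun k => (PR k).sm, fun t x k => Pρ.px t x k, fun t x m => funext fun k => (Pu k).px t x m,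
    fun t x m => funext fun k => (PR k).px t x m, fun t x => Pρ.pt t x, fun t x => funext fun k => (Pu k).pt t x, fun t x => funext fun k => (PR k).pt t x, ?_⟩
  simp only [add_sub_cancel_left]
  have hden : ∀ t x, deriv (fun τ => ρ τ x) t + ∑ k, fderiv ℝ (fun y => ρ t y * u t y k) x (Pi.single k 1) = ∑ k, fderiv ℝ (fun y => R t y k) x (Pi.single k 1) :=
    fun t x => hcd t x
  refine ⟨fun t x => ?_, fun t x => ?_, ?_, ?_, ?_, ?_, k10, ?_, ?_⟩
  · change deriv (fun τ => ρ τ x + θ (τ,x)) t + ∑ k, fderiv ℝ (fun y => (ρ t y + θ (t,y)) * (u t y k + w k (t,y))) x (Pi.single k 1)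
      = ∑ k, fderiv ℝ (fun y => (R t y k + A k (t,y) * B k (t,y)) + E k (t,y)) x (Pi.single k 1)
    have q0 := hden t x
    have q1 := slice_dt Pρ t x
    have q2 := fun k => slice_fd (Pρ.mul (Pu k)) t x k
    have q3 := fun k => slice_fd (PR k) t x k
    have q4 := slice_dt Hρ t x
    have q5 := fun k => slice_fd (Hρ.mul (Hu k)) t x k
    have q6 := fun k => slice_fd (HR k) t x k
    simp only at q1 q2 q3 q4 q5 q6
    simp only [q4, q5, q6] at q0
    simp only [q1, q2, q3]
    have e1 : ∀ k, (fun z : W d => (ρ z.1 z.2 + θ z) * (u z.1 z.2 k + w k z)) =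
        fun z => ρ z.1 z.2 * u z.1 z.2 k + (θ z * u z.1 z.2 k + ρ z.1 z.2 * w k z + θ z * w k z) := by
      intro k; funext z; ring
    have p1 : ∀ k, SP (fun z : W d => θ z * u z.1 z.2 k + ρ z.1 z.2 * w k z + θ z * w k z) := fun k =>
      ((k1.mul (Hu k)).add (Hρ.mul (k2 k))).add (k1.mul (k2 k))
    have q7 := k5 (t,x)
    simp only [e1, fun k => dd_add (eS k) (Hρ.mul (Hu k)) (p1 k), fun k => dd_add (eS k) ((HR k).add ((hA k).mul (hB k))) (k3 k),
      fun k => dd_add (eS k) (HR k) ((hA k).mul (hB k)), dd_add eT Hρ k1, Finset.sum_add_distrib]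
    rw [← q7, ← q0]; ring
  · change ∑ k, fderiv ℝ (fun y => u t y k + w k (t,y)) x (Pi.single k 1) = 0
    have q0 : ∑ k, fderiv ℝ (fun y => u t y k) x (Pi.single k 1) = 0 := hdiv t x
    have q2 := fun k => slice_fd (Pu k) t x k
    have q5 := fun k => slice_fd (Hu k) t x k
    simp only at q2 q5
    simp only [q5] at q0
    simp only [q2, fun k => dd_add (eS k) (Hu k) (k2 k), Finset.sum_add_distrib, q0, k4, add_zero]
  · refine k6.trans ?_
    rw [hRb, ENNReal.ofReal_rpow_of_pos hb, Finset.card_univ, Fintype.card_fin, ← ENNReal.ofReal_natCast, ← ENNReal.ofReal_mul (by positivity),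
      ← ENNReal.ofReal_mul (by positivity), ← ENNReal.ofReal_mul (by positivity), ← ENNReal.ofReal_add (by positivity) hε0.le]
    apply ENNReal.ofReal_le_ofReal
    calc _ ≤ d * (Bb d * (ν * 2 * b ^ (1/p))) + ν * b ^ (1/p) := by linarith
      _ = _ := by ring
  · refine k7.trans ?_
    rw [hRb, ENNReal.ofReal_rpow_of_pos hb, Finset.card_univ, Fintype.card_fin, ← ENNReal.ofReal_natCast, ← ENNReal.ofReal_mul (by positivity),
      ← ENNReal.ofReal_mul (by positivity), ← ENNReal.ofReal_mul (by positivity), ← ENNReal.ofReal_add (by positivity) hε0.le]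
    apply ENNReal.ofReal_le_ofReal
    calc _ ≤ d * (Bb d * (ν⁻¹ * 2 * b ^ (1 - 1/p))) + ν⁻¹ * b ^ (1 - 1/p) := by linarith
      _ = _ := by ring
  · exact k8.trans (ENNReal.ofReal_le_ofReal (by linarith))
  · have q1 := L1_add (f := fun t x => (fun k => R t x k + A k (t,x) * B k (t,x) : Vec d)) (g := fun t x => (fun k => E k (t,x) : Vec d))
      (vec_sm fun k => (HR k).add ((hA k).mul (hB k))).continuous (vec_sm k3).continuous
    refine q1.trans ?_
    have q2 := L1_vec (f := fun k (z : W d) => R z.1 z.2 k + A k z * B k z) fun k => ((HR k).add ((hA k).mul (hB k))).cont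
    have q3 : ∑ k : Fin d, ENNReal.ofReal (δ / (2 * d)) = ENNReal.ofReal (δ/2) := by
      rw [Finset.sum_const, Finset.card_univ, Fintype.card_fin, nsmul_eq_mul, ← ENNReal.ofReal_natCast, ← ENNReal.ofReal_mul (by positivity)]
      congr 1; field_simp
    calc _ ≤ ENNReal.ofReal (δ/2) + ENNReal.ofReal (δ/2) :=
          add_le_add (q2.trans ((Finset.sum_le_sum fun k _ => a3 k).trans (le_of_eq q3))) (k9.trans (ENNReal.ofReal_le_ofReal hε1))
      _ = _ := by rw [← ENNReal.ofReal_add (by positivity) (by positivity)]; congr 1; ring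
  · intro t _ φ hφ hφp
    exact (k11 t φ hφ hφp).trans (mul_le_mul_of_nonneg_right (by linarith) (CkN_nonneg _ _))
  · have hne : (Finset.univ : Finset (Fin d)).Nonempty := ⟨⟨0, by omega⟩, Finset.mem_univ _⟩
    refine ⟨Finset.univ.inf' hne r0, (Finset.lt_inf'_iff hne).2 fun i _ => a4 i, fun t ht hn x => ?_⟩
    rw [k12 t (fun i x => a5 i t ht (fun h => hn ?_) x) x, add_zero]
    have := Finset.inf'_le r0 (Finset.mem_univ i)
    exact ⟨this.trans h.1, h.2.trans (by linarith)⟩
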